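/- arXiv:1801.06865 — 2 statements merged into one kernel-verified Lean document; each statement's English description precedes it below -/
import Mathlib

section
/- Let n ≥ 1, let j, k ∈ ℕ with 1 ≤ j < k, let θ ∈ [j/k, 1], q ∈ [1,∞], r ∈ [1,∞], and let p ∈ (1,∞] satisfy 1/p = j/n + θ(1/r − k/n) + (1−θ)/q. Assume moreover that n/r ∉ {1, 2, ..., k−j} (equivalently, the iterated Sobolev conjugates r^{(i)}, defined by 1/r^{(i)} = 1/r − i/n, satisfy r^{(i)} ≠ n for all 0 ≤ i ≤ k−j−1). Then there exists a constant C > 0, independent of u, such that for every smooth function u : ℝ^n → ℝ for which the right-hand side is finite, ‖∇^j u‖_{L^p(ℝ^n)} ≤ C · ‖∇^k u‖_{L^r(ℝ^n)}^θ · ‖u‖_{L^q(ℝ^n)}^{1−θ}, where ‖∇^m u‖_{L^s} denotes the L^s norm of x ↦ |∇^m u(x)|, the norm of the m-th total derivative of u at x. -/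
/-!
Write `1 / p = α + β θ` for the relation between the exponents. Both sides of the inequality are
log-convex along this line, so it is enough to know the estimate at `θ = j / k` and at one further
value of `θ` lying beyond the given one; Hölder's inequality (`eLpNorm_interpolate`,
`interpolate_estimates`) fills in the values between them.

*The endpoint* `θ = j / k` (`endpoint_inequality`). On an interval of length `l`, the derivative
`f^(j)` is bounded by an `L¹` average of `f^(k)` and of `f`, scaled by the appropriate powers of `l`
(`abs_iteratedDeriv_le_local`). The line is covered greedily by intervals whose lengths are
chosen so that the two terms are equal; their sum is then their geometric mean, the powers of `l`
cancel, and the products add up by discrete Hölder (`covering_step`, `covering_bound`). Hölder's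
inequality over a family of parallel lines turns this into an estimate on `ℝⁿ` for one directional
derivative (`directional_endpoint`), and since a symmetric form is controlled by finitely many of
its values on the diagonal (`exists_finset_norm_le`), for the whole derivative.

*The second value of `θ` when* `n / r > k - j` is `θ = 1`, where the claim is the Sobolev embedding
iterated `k - j` times. Mathlib's Gagliardo–Nirenberg–Sobolev inequality concerns compactly supported
functions; a cutoff extends it to functions in `L^s`. The derivatives in question are merely in some
`L^t` with `t < ∞`, thanks to the endpoint; their translates tend to zero along a suitable sequence
of vectors, so the inequality for `g - g (· + y)`, which does lie in `L^s`, passes to `g` by Fatou's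
lemma (`sobolev_of_decay`).

*The second value of `θ` when* `n / r < k - j` is the one at which `1 / p = 0`. It bounds every
admissible `θ` from above, because `1 / p ≥ 0`. Here `n / r` avoids the positive integers up to
`k - j`, so iterated Sobolev embedding brings some derivative into an `L^s` with `s > n`, Morrey's
estimate (`morrey`) bounds the next lower derivative in the supremum norm, and the same estimate
descends to order `j`. The radius in Morrey's estimate is the length scale determined by the two norms
on the right-hand side, which makes each step produce the correct product of powers (`sup_bound`).
-/

open MeasureTheory ENNReal

/-! ### Derivatives on intervals -/

/-- At some point of every interval the `j`-th derivative is controlled by the mean of `|f|` alone: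
by the mean value theorem applied between good points for order `j - 1` in the two outer thirds. -/
lemma exists_iteratedDeriv_small (j : ℕ) : ∃ C : ℝ, 0 < C ∧ ∀ f : ℝ → ℝ, ContDiff ℝ (⊤ : ℕ∞) f →
    ∀ a b : ℝ, a < b → ∃ x ∈ Set.Icc a b,
      |iteratedDeriv j f x| * (b - a) ^ (j + 1) ≤ C * ∫ t in a..b, |f t| := by
  induction j with
  | zero =>
    refine ⟨1, one_pos, fun f hf a b hab => ?_⟩
    have hc : Continuous fun t => |f t| := hf.continuous.abs
    obtain ⟨x, hx, hmin⟩ := isCompact_Icc.exists_isMinOn (Set.nonempty_Icc.2 hab.le)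
      hc.continuousOn
    refine ⟨x, hx, ?_⟩
    have := intervalIntegral.integral_mono_on (μ := volume) hab.le
      (intervalIntegrable_const (c := |f x|)) (hc.intervalIntegrable a b)
      (fun t ht => hmin ht)
    simp only [intervalIntegral.integral_const, smul_eq_mul] at this
    simpa [mul_comm] using this
  | succ j ih =>
    obtain ⟨C, hC, ih⟩ := ih
    refine ⟨2 * 3 ^ (j + 2) * C, by positivity, fun f hf a b hab => ?_⟩
    have hc : Continuous fun t => |f t| := hf.continuous.abs
    set l := (b - a) / 3 with hl
    have hl0 : 0 < l := by rw [hl]; linarith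
    obtain ⟨x, hx, hxb⟩ := ih f hf a (a + l) (by linarith)
    obtain ⟨y, hy, hyb⟩ := ih f hf (b - l) b (by linarith)
    have hsub : ∀ c d, a ≤ c → c ≤ d → d ≤ b → ∫ t in c..d, |f t| ≤ ∫ t in a..b, |f t| :=
      fun c d h1 h2 h3 => intervalIntegral.integral_mono_interval h1 h2 h3
        (Filter.Eventually.of_forall fun t => abs_nonneg _) (hc.intervalIntegrable _ _)
    have hd : Differentiable ℝ (iteratedDeriv j f) :=
      hf.differentiable_iteratedDeriv j (by exact_mod_cast ENat.natCast_lt_top j)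
    have hxy : x + l ≤ y := by
      have := hx.2; have := hy.1; linarith
    obtain ⟨z, hz, hzd⟩ := exists_deriv_eq_slope (iteratedDeriv j f) (by linarith : x < y)
      hd.continuous.continuousOn hd.differentiableOn
    refine ⟨z, ⟨hx.1.trans hz.1.le, hz.2.le.trans hy.2⟩, ?_⟩
    rw [iteratedDeriv_succ, hzd, abs_div, abs_of_pos (by linarith : 0 < y - x)]
    have h1 := hxb.trans (mul_le_mul_of_nonneg_left
      (hsub a (a + l) le_rfl (by linarith) (by linarith)) hC.le)
    have h2 := hyb.trans (mul_le_mul_of_nonneg_left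
      (hsub (b - l) b (by linarith) (by linarith) le_rfl) hC.le)
    rw [show a + l - a = l by ring] at h1
    rw [show b - (b - l) = l by ring] at h2
    have h3 : |iteratedDeriv j f y - iteratedDeriv j f x| * l ^ (j + 1) ≤
        2 * (C * ∫ t in a..b, |f t|) := by
      have := abs_sub (iteratedDeriv j f y) (iteratedDeriv j f x)
      nlinarith [pow_pos hl0 (j + 1)]
    have h4 : |iteratedDeriv j f y - iteratedDeriv j f x| / (y - x) * l ≤
        |iteratedDeriv j f y - iteratedDeriv j f x| := by
      rw [div_mul_eq_mul_div, div_le_iff₀ (by linarith)]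
      exact mul_le_mul_of_nonneg_left (by linarith) (abs_nonneg _)
    have h5 : b - a = 3 * l := by rw [hl]; ring
    calc |iteratedDeriv j f y - iteratedDeriv j f x| / (y - x) * (b - a) ^ (j + 1 + 1)
        = (|iteratedDeriv j f y - iteratedDeriv j f x| / (y - x) * l) * l ^ (j + 1)
          * 3 ^ (j + 2) := by rw [h5, mul_pow]; ring
      _ ≤ |iteratedDeriv j f y - iteratedDeriv j f x| * l ^ (j + 1) * 3 ^ (j + 2) := by gcongr
      _ ≤ 2 * (C * ∫ t in a..b, |f t|) * 3 ^ (j + 2) := by gcongr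
      _ = _ := by ring

/-- Local interpolation: throughout an interval, `f^(j)` is bounded by scaled `L¹` norms of `f` and
of a derivative of higher order. -/
lemma abs_iteratedDeriv_le_local (d j : ℕ) : ∃ C : ℝ, 0 < C ∧
    ∀ f : ℝ → ℝ, ContDiff ℝ (⊤ : ℕ∞) f → ∀ a b : ℝ, a < b → ∀ x ∈ Set.Icc a b,
      |iteratedDeriv j f x| * (b - a) ^ (j + 1) ≤
        C * ((b - a) ^ (j + 1 + d) * (∫ t in a..b, |iteratedDeriv (j + 1 + d) f t|)
          + ∫ t in a..b, |f t|) := by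
  have base : ∀ j : ℕ, ∃ C : ℝ, 1 ≤ C ∧
    ∀ f : ℝ → ℝ, ContDiff ℝ (⊤ : ℕ∞) f → ∀ a b : ℝ, a < b → ∀ x ∈ Set.Icc a b,
      |iteratedDeriv j f x| * (b - a) ^ (j + 1) ≤
        C * ((b - a) ^ (j + 1) * (∫ t in a..b, |iteratedDeriv (j + 1) f t|)
          + ∫ t in a..b, |f t|) := by
    intro j
    obtain ⟨C, hC, h⟩ := exists_iteratedDeriv_small j
    refine ⟨C + 1, by linarith, fun f hf a b hab x hx => ?_⟩
    obtain ⟨y, hy, hyb⟩ := h f hf a b hab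
    have hd : Differentiable ℝ (iteratedDeriv j f) :=
      hf.differentiable_iteratedDeriv j (by exact_mod_cast ENat.natCast_lt_top j)
    have hc : Continuous (iteratedDeriv (j + 1) f) :=
      hf.continuous_iteratedDeriv (j + 1) (by exact_mod_cast le_top)
    have e : ∫ t in y..x, iteratedDeriv (j + 1) f t = iteratedDeriv j f x - iteratedDeriv j f y := by
      rw [iteratedDeriv_succ] at hc ⊢
      exact intervalIntegral.integral_deriv_eq_sub (fun t _ => hd t) (hc.intervalIntegrable _ _)
    have h1 : |∫ t in y..x, iteratedDeriv (j + 1) f t| ≤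
        ∫ t in a..b, |iteratedDeriv (j + 1) f t| := by
      rw [← Real.norm_eq_abs]
      refine intervalIntegral.norm_integral_le_integral_norm_uIoc.trans ?_
      rw [intervalIntegral.integral_of_le hab.le]
      refine setIntegral_mono_set (hc.abs.integrableOn_Ioc)
        (Filter.Eventually.of_forall fun t => abs_nonneg _) ?_
      refine (Set.Ioc_subset_Ioc ?_ ?_ : Set.uIoc y x ⊆ Set.Ioc a b).eventuallyLE
      · exact le_min hy.1 hx.1
      · exact max_le hy.2 hx.2
    have hI : 0 ≤ ∫ t in a..b, |f t| := intervalIntegral.integral_nonneg hab.le fun t _ => abs_nonneg _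
    have hI2 : 0 ≤ ∫ t in a..b, |iteratedDeriv (j + 1) f t| :=
      intervalIntegral.integral_nonneg hab.le fun t _ => abs_nonneg _
    have h2 : |iteratedDeriv j f x| ≤ |iteratedDeriv j f y| +
        ∫ t in a..b, |iteratedDeriv (j + 1) f t| := by
      rw [e] at h1
      have := abs_sub_abs_le_abs_sub (iteratedDeriv j f x) (iteratedDeriv j f y)
      linarith
    have hp : 0 < (b - a) ^ (j + 1) := pow_pos (by linarith) _
    nlinarith [mul_le_mul_of_nonneg_right h2 hp.le, mul_nonneg hp.le hI2]
  induction d generalizing j with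
  | zero =>
    obtain ⟨C, hC, h⟩ := base j
    exact ⟨C, by linarith, h⟩
  | succ d ih =>
    obtain ⟨C, hC, h⟩ := base j
    obtain ⟨D, hD, h'⟩ := ih (j + 1)
    refine ⟨C * (D + 1), by positivity, fun f hf a b hab x hx => ?_⟩
    have h1 := h f hf a b hab x hx
    have hba : 0 < b - a := by linarith
    have hc : Continuous (iteratedDeriv (j + 1) f) :=
      hf.continuous_iteratedDeriv (j + 1) (by exact_mod_cast le_top)
    set R := (b - a) ^ (j + 1 + (d + 1)) * (∫ t in a..b, |iteratedDeriv (j + 1 + (d + 1)) f t|)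
          + ∫ t in a..b, |f t| with hR
    have hI : 0 ≤ ∫ t in a..b, |f t| := intervalIntegral.integral_nonneg hab.le fun t _ => abs_nonneg _
    have hI2 : 0 ≤ ∫ t in a..b, |iteratedDeriv (j + 1 + (d + 1)) f t| :=
      intervalIntegral.integral_nonneg hab.le fun t _ => abs_nonneg _
    have h2 : ∀ t ∈ Set.Icc a b, |iteratedDeriv (j + 1) f t| * (b - a) ^ (j + 1 + 1) ≤ D * R := by
      intro t ht
      have := h' f hf a b hab t ht
      rwa [show j + 1 + 1 + d = j + 1 + (d + 1) by ring] at this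
    have hi : IntervalIntegrable (fun t => |iteratedDeriv (j + 1) f t| * (b - a) ^ (j + 1 + 1))
        volume a b := (hc.abs.mul continuous_const).intervalIntegrable a b
    have h3 := intervalIntegral.integral_mono_on (μ := volume) hab.le hi
      (intervalIntegrable_const (c := D * R)) h2
    simp only [intervalIntegral.integral_const, smul_eq_mul, intervalIntegral.integral_mul_const]
      at h3
    have h4 : (b - a) ^ (j + 1) * (∫ t in a..b, |iteratedDeriv (j + 1) f t|) ≤ D * R := by
      rw [pow_succ (b - a) (j + 1)] at h3
      nlinarith
    have h5 : ∫ t in a..b, |f t| ≤ R := by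
      rw [hR]; nlinarith [mul_nonneg (pow_pos hba (j + 1 + (d + 1))).le hI2]
    calc _ ≤ _ := h1
      _ ≤ C * (D * R + R) := by gcongr
      _ = _ := by ring

/-! ### A covering argument on the line -/

/-- Hölder's inequality for two-term sums, which lets the bounds on adjacent intervals be added. -/
lemma rpow_mul_rpow_superadd {x₁ x₂ y₁ y₂ s t : ℝ} (hx₁ : 0 ≤ x₁) (hx₂ : 0 ≤ x₂) (hy₁ : 0 ≤ y₁)
    (hy₂ : 0 ≤ y₂) (hs : 0 ≤ s) (ht : 0 ≤ t) (hst : s + t = 1) :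
    x₁ ^ s * y₁ ^ t + x₂ ^ s * y₂ ^ t ≤ (x₁ + x₂) ^ s * (y₁ + y₂) ^ t := by
  rcases (add_nonneg hx₁ hx₂).eq_or_lt with hX | hX
  · have h1 : x₁ = 0 := by linarith
    have h2 : x₂ = 0 := by linarith
    subst h1 h2
    rcases hs.eq_or_lt with hs | hs
    · subst hs
      have : t = 1 := by linarith
      simp [this]
    · simp [Real.zero_rpow hs.ne']
  rcases (add_nonneg hy₁ hy₂).eq_or_lt with hY | hY
  · have h1 : y₁ = 0 := by linarith
    have h2 : y₂ = 0 := by linarith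
    subst h1 h2
    rcases ht.eq_or_lt with ht | ht
    · subst ht
      have : s = 1 := by linarith
      simp [this]
    · simp [Real.zero_rpow ht.ne']
  set X := x₁ + x₂
  set Y := y₁ + y₂
  have key : ∀ x y : ℝ, 0 ≤ x → 0 ≤ y →
      x ^ s * y ^ t ≤ X ^ s * Y ^ t * (s * (x / X) + t * (y / Y)) := by
    intro x y hx hy
    have h := Real.geom_mean_le_arith_mean2_weighted hs ht (div_nonneg hx hX.le)
      (div_nonneg hy hY.le) hst
    have h2 : x ^ s * y ^ t = X ^ s * Y ^ t * ((x / X) ^ s * (y / Y) ^ t) := by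
      rw [Real.div_rpow hx hX.le, Real.div_rpow hy hY.le]
      have := (Real.rpow_pos_of_pos hX s).ne'
      have := (Real.rpow_pos_of_pos hY t).ne'
      field_simp
    rw [h2]
    gcongr
  calc _ ≤ _ := add_le_add (key x₁ y₁ hx₁ hy₁) (key x₂ y₂ hx₂ hy₂)
    _ = X ^ s * Y ^ t * (s * ((x₁ + x₂) / X) + t * ((y₁ + y₂) / Y)) := by ring
    _ = X ^ s * Y ^ t := by
      rw [div_self hX.ne', div_self hY.ne', mul_one, mul_one, hst, mul_one]

/-- One step of the covering. In `hsup` the first term comes from the derivative of top order and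
the second from the function. Starting at `y`, the length `l ≥ δ` is the one at which the two terms
agree, which gives the product estimate; if the first term already dominates at length `δ`, then
`g` is so small that only the error term is needed. If the second term dominates at every length,
`g` vanishes. -/
lemma covering_step {g ξ η : ℝ → ℝ} (hg : Continuous g) (hξ : Continuous ξ) (hη : Continuous η)
    (hξ0 : ∀ t, 0 ≤ ξ t) (hη0 : ∀ t, 0 ≤ η t) {j k ρ σ p θ A B C Y K δ : ℝ}
    (hj : 1 ≤ j) (hk : j + 1 ≤ k) (hρ0 : 0 ≤ ρ) (hσ0 : 0 ≤ σ)
    (hθ : θ * k = j) (hp : 0 < p)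
    (hbal : 1 / p = θ * ρ + (1 - θ) * σ) (hA : 0 ≤ A) (hB : 0 ≤ B) (hC : 0 < C)
    (hsup : ∀ a l, 0 < l → ∀ x ∈ Set.Icc a (a + l), |g x| ≤ C * l ^ (-j) *
      (A * l ^ (k - ρ) * (∫ t in a..(a + l), ξ t) ^ ρ + B * l ^ (-σ) * (∫ t in a..(a + l), η t) ^ σ))
    (hY : ∀ a b, a ≤ b → ∫ t in a..b, η t ≤ Y) (hK : 0 ≤ K) (hδ : 0 < δ) (hδ1 : δ ≤ 1)
    {y : ℝ} (hyK : ∀ t ∈ Set.Icc y (y + δ), ξ t ≤ K) :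
    ∃ l, δ ≤ l ∧ ∫ t in y..(y + l), |g t| ^ p ≤
      ((2 * C) ^ p * A ^ (θ * p) * B ^ ((1 - θ) * p)) *
        ((∫ t in y..(y + l), ξ t) ^ (θ * ρ * p) * (∫ t in y..(y + l), η t) ^ ((1 - θ) * σ * p))
        + δ * (2 * C * A * K ^ ρ * δ) ^ p := by
  have hgc : ∀ l, 0 ≤ l → ∀ D, 0 ≤ D → (∀ x ∈ Set.Icc y (y + l), |g x| ≤ D) →
      ∫ t in y..(y + l), |g t| ^ p ≤ l * D ^ p := by
    intro l hl D hD h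
    have hi : IntervalIntegrable (fun t => |g t| ^ p) volume y (y + l) :=
      (hg.abs.rpow_const fun _ => Or.inr hp.le).intervalIntegrable _ _
    have := intervalIntegral.integral_mono_on (μ := volume) (by linarith : y ≤ y + l) hi
      (intervalIntegrable_const (c := D ^ p))
      (fun t ht => Real.rpow_le_rpow (abs_nonneg _) (h t ht) hp.le)
    simpa using this
  set X : ℝ → ℝ := fun l => ∫ t in y..(y + l), ξ t with hXdef
  set Z : ℝ → ℝ := fun l => ∫ t in y..(y + l), η t with hZdef
  have hX0 : ∀ l, 0 ≤ l → 0 ≤ X l := fun l hl =>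
    intervalIntegral.integral_nonneg (by linarith) fun t _ => hξ0 t
  have hZ0 : ∀ l, 0 ≤ l → 0 ≤ Z l := fun l hl =>
    intervalIntegral.integral_nonneg (by linarith) fun t _ => hη0 t
  have hXc : Continuous X :=
    (intervalIntegral.continuous_primitive (fun a b => hξ.intervalIntegrable a b) y).comp
      (continuous_const.add continuous_id)
  have hZc : Continuous Z :=
    (intervalIntegral.continuous_primitive (fun a b => hη.intervalIntegrable a b) y).comp
      (continuous_const.add continuous_id)
  have hk0 : 0 < k := by linarith
  have hθ0 : 0 ≤ θ := by
    by_contra h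
    have : θ * k < 0 := mul_neg_of_neg_of_pos (by linarith) hk0
    linarith
  have hθ1 : θ ≤ 1 := by
    by_contra h
    have : 1 * k < θ * k := mul_lt_mul_of_pos_right (by linarith) hk0
    linarith
  have hR : 0 ≤ δ * (2 * C * A * K ^ ρ * δ) ^ p := by positivity
  have hL : ∀ l, 0 ≤ l → 0 ≤ ((2 * C) ^ p * A ^ (θ * p) * B ^ ((1 - θ) * p)) *
      (X l ^ (θ * ρ * p) * Z l ^ ((1 - θ) * σ * p)) := by
    intro l hl
    have := hX0 l hl
    have := hZ0 l hl
    positivity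
  set α : ℝ → ℝ := fun l => A * l ^ (k - ρ) * X l ^ ρ with hα
  set β : ℝ → ℝ := fun l => B * l ^ (-σ) * Z l ^ σ with hβ
  have hαc : ContinuousOn α (Set.Ici δ) := by
    refine (continuousOn_const.mul ?_).mul ?_
    · exact continuousOn_id.rpow_const fun x hx => Or.inl (hδ.trans_le hx).ne'
    · exact (hXc.rpow_const fun _ => Or.inr hρ0).continuousOn
  have hβc : ContinuousOn β (Set.Ici δ) := by
    refine (continuousOn_const.mul ?_).mul ?_
    · exact continuousOn_id.rpow_const fun x hx => Or.inl (hδ.trans_le hx).ne'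
    · exact (hZc.rpow_const fun _ => Or.inr hσ0).continuousOn
  have hsup' : ∀ l, 0 < l → ∀ x ∈ Set.Icc y (y + l), |g x| ≤ C * l ^ (-j) * (α l + β l) :=
    fun l hl x hx => hsup y l hl x hx
  rcases le_or_gt (β δ) (α δ) with h1 | h1
  · -- the high-order term dominates already at the minimal length
    refine ⟨δ, le_rfl, ?_⟩
    refine (hgc δ hδ.le (2 * C * A * K ^ ρ * δ) (by positivity) ?_).trans
      (le_add_of_nonneg_left (hL δ hδ.le))
    intro x hx
    refine (hsup' δ hδ x hx).trans ?_
    have hXK : X δ ≤ K * δ := by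
      have := intervalIntegral.integral_mono_on (μ := volume) (by linarith : y ≤ y + δ)
        (hξ.intervalIntegrable _ _) (intervalIntegrable_const (c := K)) hyK
      simpa [mul_comm] using this
    calc C * δ ^ (-j) * (α δ + β δ) ≤ C * δ ^ (-j) * (α δ + α δ) := by gcongr
      _ = 2 * C * A * (δ ^ (-j) * δ ^ (k - ρ) * X δ ^ ρ) := by simp only [hα]; ring
      _ ≤ 2 * C * A * (δ ^ (-j) * δ ^ (k - ρ) * (K * δ) ^ ρ) := by
        gcongr
        exact hX0 δ hδ.le
      _ = 2 * C * A * K ^ ρ * (δ ^ (-j) * δ ^ (k - ρ) * δ ^ ρ) := by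
        rw [Real.mul_rpow hK hδ.le]; ring
      _ = 2 * C * A * K ^ ρ * δ ^ (k - j) := by
        rw [← Real.rpow_add hδ, ← Real.rpow_add hδ]; ring_nf
      _ ≤ 2 * C * A * K ^ ρ * δ := by
        gcongr
        calc δ ^ (k - j) ≤ δ ^ (1 : ℝ) := Real.rpow_le_rpow_of_exponent_ge hδ hδ1 (by linarith)
          _ = δ := Real.rpow_one δ
  by_cases h2 : ∃ l, δ ≤ l ∧ β l ≤ α l
  · obtain ⟨l₁, hl₁, h2⟩ := h2
    have hsub : Set.Icc δ l₁ ⊆ Set.Ici δ := fun x hx => hx.1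
    obtain ⟨l, hl, hle⟩ := intermediate_value_Icc hl₁ ((hαc.sub hβc).mono hsub)
      (show (0 : ℝ) ∈ Set.Icc (α δ - β δ) (α l₁ - β l₁) from ⟨by linarith, by linarith⟩)
    have hl0 : 0 < l := hδ.trans_le hl.1
    have hab : α l = β l := by simp only [Pi.sub_apply] at hle; linarith
    refine ⟨l, hl.1, ?_⟩
    have hα0 : 0 ≤ α l := by
      have := hX0 l hl0.le
      simp only [hα]; positivity
    refine ((hgc l hl0.le (2 * C * l ^ (-j) * (α l ^ θ * β l ^ (1 - θ))) ?_ ?_).trans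
      (le_of_eq ?_)).trans (le_add_of_nonneg_right hR)
    · rw [← hab]; positivity
    · intro x hx
      refine (hsup' l hl0 x hx).trans (le_of_eq ?_)
      rw [← hab, ← Real.rpow_add_of_nonneg hα0 hθ0 (by linarith)]
      simp; ring
    · have hx := hX0 l hl0.le
      have hz := hZ0 l hl0.le
      have e1 : α l ^ θ = A ^ θ * l ^ ((k - ρ) * θ) * X l ^ (ρ * θ) := by
        simp only [hα]
        rw [Real.mul_rpow (by positivity) (by positivity), Real.mul_rpow (by positivity)
          (by positivity), ← Real.rpow_mul hl0.le, ← Real.rpow_mul hx]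
      have e2 : β l ^ (1 - θ) = B ^ (1 - θ) * l ^ (-σ * (1 - θ)) * Z l ^ (σ * (1 - θ)) := by
        simp only [hβ]
        rw [Real.mul_rpow (by positivity) (by positivity), Real.mul_rpow (by positivity)
          (by positivity), ← Real.rpow_mul hl0.le, ← Real.rpow_mul hz]
      have e3 : 2 * C * l ^ (-j) * (α l ^ θ * β l ^ (1 - θ)) = 2 * C * A ^ θ * B ^ (1 - θ) *
          l ^ (-(1 / p)) * (X l ^ (ρ * θ) * Z l ^ (σ * (1 - θ))) := by
        rw [e1, e2]
        have : l ^ (-(1 / p)) = l ^ (-j) * l ^ ((k - ρ) * θ) * l ^ (-σ * (1 - θ)) := by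
          rw [← Real.rpow_add hl0, ← Real.rpow_add hl0, hbal, ← hθ]
          ring_nf
        rw [this]; ring
      rw [e3]
      have e4 : (2 * C * A ^ θ * B ^ (1 - θ) * l ^ (-(1 / p)) *
          (X l ^ (ρ * θ) * Z l ^ (σ * (1 - θ)))) ^ p = (2 * C) ^ p * A ^ (θ * p) *
          B ^ ((1 - θ) * p) * l ^ (-(1 / p) * p) *
          (X l ^ (ρ * θ * p) * Z l ^ (σ * (1 - θ) * p)) := by
        rw [Real.rpow_mul hA, Real.rpow_mul hB, Real.rpow_mul hl0.le, Real.rpow_mul hx (ρ * θ),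
          Real.rpow_mul hz (σ * (1 - θ)), ← Real.mul_rpow (by positivity) (by positivity),
          ← Real.mul_rpow (by positivity) (by positivity),
          ← Real.mul_rpow (by positivity) (by positivity),
          ← Real.mul_rpow (by positivity) (by positivity),
          ← Real.mul_rpow (by positivity) (by positivity)]
      rw [e4]
      have : l ^ (-(1 / p) * p) = l⁻¹ := by
        rw [neg_mul, one_div, inv_mul_cancel₀ hp.ne', Real.rpow_neg_one]
      rw [this, show ρ * θ * p = θ * ρ * p by ring, show σ * (1 - θ) * p = (1 - θ) * σ * p by ring]
      simp only [hXdef, hZdef]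
      field_simp
  · -- the low-order term dominates at every length: `g` vanishes on `[y, ∞)`
    push Not at h2
    refine ⟨δ, le_rfl, ?_⟩
    have hz : ∀ x ∈ Set.Icc y (y + δ), |g x| ≤ 0 := by
      intro x hx
      have hY0 : 0 ≤ Y := by simpa using hY 0 0 le_rfl
      have hb : ∀ l : ℝ, 1 ≤ l → |g x| ≤ (2 * C * B * Y ^ σ) * l⁻¹ := by
        intro l hl
        have hl0 : 0 < l := by linarith
        refine (hsup' l hl0 x ⟨hx.1, hx.2.trans (by linarith)⟩).trans ?_
        calc C * l ^ (-j) * (α l + β l) ≤ C * l ^ (-j) * (β l + β l) := by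
              gcongr; exact (h2 l (by linarith)).le
          _ = 2 * C * B * (Z l ^ σ) * (l ^ (-j) * l ^ (-σ)) := by simp only [hβ]; ring
          _ ≤ 2 * C * B * (Y ^ σ) * l⁻¹ := by
            have := hZ0 l hl0.le
            gcongr
            · exact hY _ _ (by linarith)
            · rw [← Real.rpow_add hl0, ← Real.rpow_neg_one]
              exact Real.rpow_le_rpow_of_exponent_le hl (by linarith)
      have ht : Filter.Tendsto (fun l : ℝ => (2 * C * B * Y ^ σ) * l⁻¹) Filter.atTop (nhds 0) := by
        simpa using tendsto_inv_atTop_zero.const_mul (2 * C * B * Y ^ σ)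
      exact ge_of_tendsto ht ((Filter.eventually_ge_atTop 1).mono hb)
    refine (hgc δ hδ.le 0 le_rfl hz).trans ?_
    rw [Real.zero_rpow hp.ne', mul_zero]
    exact add_nonneg (hL δ hδ.le) hR

/-- The bound on `[-M, M]`, from at most `2 M / δ + 1` covering steps; the total error tends to
zero with `δ` since each step contributes `O(δ ^ (1 + p))`. -/
lemma covering_bound {g ξ η : ℝ → ℝ} (hg : Continuous g) (hξ : Continuous ξ) (hη : Continuous η)
    (hξ0 : ∀ t, 0 ≤ ξ t) (hη0 : ∀ t, 0 ≤ η t) {j k ρ σ p θ A B C X Y M : ℝ}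
    (hj : 1 ≤ j) (hk : j + 1 ≤ k) (hρ0 : 0 ≤ ρ) (hσ0 : 0 ≤ σ)
    (hθ : θ * k = j) (hp : 0 < p)
    (hbal : 1 / p = θ * ρ + (1 - θ) * σ) (hA : 0 ≤ A) (hB : 0 ≤ B) (hC : 0 < C)
    (hsup : ∀ a l, 0 < l → ∀ x ∈ Set.Icc a (a + l), |g x| ≤ C * l ^ (-j) *
      (A * l ^ (k - ρ) * (∫ t in a..(a + l), ξ t) ^ ρ + B * l ^ (-σ) * (∫ t in a..(a + l), η t) ^ σ))
    (hX : ∀ a b, a ≤ b → ∫ t in a..b, ξ t ≤ X)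
    (hY : ∀ a b, a ≤ b → ∫ t in a..b, η t ≤ Y) (hM : 0 < M) :
    ∫ t in (-M)..M, |g t| ^ p ≤
      ((2 * C) ^ p * A ^ (θ * p) * B ^ ((1 - θ) * p)) *
        (X ^ (θ * ρ * p) * Y ^ ((1 - θ) * σ * p)) := by
  have hk0 : 0 < k := by linarith
  have hθ0 : 0 ≤ θ := by
    by_contra h
    have : θ * k < 0 := mul_neg_of_neg_of_pos (by linarith) hk0
    linarith
  have hθ1 : θ ≤ 1 := by
    by_contra h
    have : 1 * k < θ * k := mul_lt_mul_of_pos_right (by linarith) hk0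
    linarith
  set s := θ * ρ * p with hs
  set r := (1 - θ) * σ * p with hr
  have hs0 : 0 ≤ s := by positivity
  have hr0 : 0 ≤ r := mul_nonneg (mul_nonneg (by linarith) hσ0) hp.le
  have hsr : s + r = 1 := by
    have : s + r = (1 / p) * p := by rw [hbal, hs, hr]; ring
    rw [this, one_div, inv_mul_cancel₀ hp.ne']
  set D := (2 * C) ^ p * A ^ (θ * p) * B ^ ((1 - θ) * p) with hD
  have hD0 : 0 ≤ D := by positivity
  obtain ⟨K, hK⟩ : ∃ K, ∀ t ∈ Set.Icc (-M) (M + 1), ξ t ≤ K := by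
    obtain ⟨K, hK⟩ := (isCompact_Icc.image hξ).bddAbove
    exact ⟨K, fun t ht => hK ⟨t, ht, rfl⟩⟩
  have hK0 : 0 ≤ K := (hξ0 0).trans (hK 0 ⟨by linarith, by linarith⟩)
  have hgp : Continuous fun t => |g t| ^ p := hg.abs.rpow_const fun _ => Or.inr hp.le
  have hXa : ∀ a b, a ≤ b → 0 ≤ ∫ t in a..b, ξ t := fun a b h =>
    intervalIntegral.integral_nonneg h fun t _ => hξ0 t
  have hYa : ∀ a b, a ≤ b → 0 ≤ ∫ t in a..b, η t := fun a b h =>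
    intervalIntegral.integral_nonneg h fun t _ => hη0 t
  have main : ∀ δ : ℝ, 0 < δ → δ ≤ 1 → ∫ t in (-M)..M, |g t| ^ p ≤ D * (X ^ s * Y ^ r) +
      (2 * M + 1) * (2 * C * A * K ^ ρ * δ) ^ p := by
    intro δ hδ hδ1
    set ε := (2 * C * A * K ^ ρ * δ) ^ p with hε
    have hε0 : 0 ≤ ε := by positivity
    -- the point reached after `m` covering steps, or earlier if it is already past `M`
    have ind : ∀ m : ℕ, ∃ y, -M ≤ y ∧ min M (-M + m * δ) ≤ y ∧ ∫ t in (-M)..y, |g t| ^ p ≤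
        D * ((∫ t in (-M)..y, ξ t) ^ s * (∫ t in (-M)..y, η t) ^ r) + m * (δ * ε) := by
      intro m
      induction m with
      | zero =>
        refine ⟨-M, le_rfl, by simp, ?_⟩
        simp only [intervalIntegral.integral_same]
        positivity
      | succ m ih =>
        obtain ⟨y, hy, hmin, hint⟩ := ih
        rcases le_or_gt M y with hMy | hMy
        · refine ⟨y, hy, (min_le_left _ _).trans hMy, hint.trans ?_⟩
          have : (m : ℝ) * (δ * ε) ≤ ((m + 1 : ℕ) : ℝ) * (δ * ε) := by
            gcongr; simp
          linarith
        · obtain ⟨l, hl, hstep⟩ := covering_step hg hξ hη hξ0 hη0 hj hk hρ0 hσ0 hθ hp hbal hA hB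
            hC hsup hY hK0 hδ hδ1 (y := y) (fun t ht => hK t ⟨hy.trans ht.1, ht.2.trans (by linarith)⟩)
          have hly : y ≤ y + l := by linarith
          refine ⟨y + l, by linarith, ?_, ?_⟩
          · have h1 : -M + m * δ ≤ y := by
              rcases min_le_iff.1 hmin with h | h
              · linarith
              · exact h
            refine (min_le_right _ _).trans ?_
            push_cast
            linarith
          · rw [← intervalIntegral.integral_add_adjacent_intervals (hgp.intervalIntegrable (-M) y)
              (hgp.intervalIntegrable y (y + l)),
              ← intervalIntegral.integral_add_adjacent_intervals (hξ.intervalIntegrable (-M) y)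
              (hξ.intervalIntegrable y (y + l)),
              ← intervalIntegral.integral_add_adjacent_intervals (hη.intervalIntegrable (-M) y)
              (hη.intervalIntegrable y (y + l))]
            have hsa := mul_le_mul_of_nonneg_left (rpow_mul_rpow_superadd (hXa _ _ hy) (hXa _ _ hly)
              (hYa _ _ hy) (hYa _ _ hly) hs0 hr0 hsr) hD0
            push_cast
            linarith
    obtain ⟨y, hy, hmin, hint⟩ := ind ⌈2 * M / δ⌉₊
    have hN : 2 * M ≤ (⌈2 * M / δ⌉₊ : ℝ) * δ := by
      rw [← div_le_iff₀ hδ]; exact Nat.le_ceil _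
    have hN2 : (⌈2 * M / δ⌉₊ : ℝ) * δ ≤ 2 * M + 1 := by
      have := (Nat.ceil_lt_add_one (by positivity : 0 ≤ 2 * M / δ)).le
      calc (⌈2 * M / δ⌉₊ : ℝ) * δ ≤ (2 * M / δ + 1) * δ := by gcongr
        _ = 2 * M + δ := by field_simp
        _ ≤ _ := by linarith
    have hMy : M ≤ y := by
      rwa [min_eq_left (by linarith)] at hmin
    calc ∫ t in (-M)..M, |g t| ^ p ≤ ∫ t in (-M)..y, |g t| ^ p :=
          intervalIntegral.integral_mono_interval le_rfl (by linarith) hMy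
            (Filter.Eventually.of_forall fun t => by positivity) (hgp.intervalIntegrable _ _)
      _ ≤ _ := hint
      _ ≤ _ := by
        rw [← mul_assoc (_ : ℝ) δ ε]
        have h0 : 0 ≤ X := by simpa using hX 0 0 le_rfl
        have h1 := hXa _ _ hy
        have h2 := hYa _ _ hy
        have h3 := hX _ _ hy
        have h4 := hY _ _ hy
        gcongr
  have ht : Filter.Tendsto (fun δ : ℝ => D * (X ^ s * Y ^ r) +
      (2 * M + 1) * (2 * C * A * K ^ ρ * δ) ^ p) (nhdsWithin 0 (Set.Ioi 0))
      (nhds (D * (X ^ s * Y ^ r))) := by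
    have hc : Continuous (fun δ : ℝ => D * (X ^ s * Y ^ r) +
      (2 * M + 1) * (2 * C * A * K ^ ρ * δ) ^ p) := by
      refine continuous_const.add (continuous_const.mul ?_)
      exact (continuous_const.mul continuous_id).rpow_const fun _ => Or.inr hp.le
    have := (hc.tendsto 0).mono_left (nhdsWithin_le_nhds (s := Set.Ioi 0))
    simpa [Real.zero_rpow hp.ne'] using this
  refine ge_of_tendsto ht ?_
  filter_upwards [Ioc_mem_nhdsGT (zero_lt_one' ℝ)] with δ hδ
  exact main δ hδ.1 hδ.2

/-- The one-dimensional endpoint. The functions `ξ`, `η` and the constants `A`, `B` encode the two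
Lebesgue norms uniformly in the exponent: for `1 ≤ s < ∞` one takes `ξ = |f^(k)| ^ s` and `A = 1`,
while for `s = ∞` one takes `ξ = 0`, `ρ = 0` and `A` the supremum. -/
lemma line_inequality (j k : ℕ) (hj : 1 ≤ j) (hjk : j < k) {ρ σ p θ : ℝ} (hρ0 : 0 ≤ ρ)
    (hσ0 : 0 ≤ σ) (hθ : θ * k = j) (hp : 0 < p) (hbal : 1 / p = θ * ρ + (1 - θ) * σ) :
    ∃ D : ℝ, 0 < D ∧ ∀ f : ℝ → ℝ, ContDiff ℝ (⊤ : ℕ∞) f → ∀ ξ η : ℝ → ℝ, Continuous ξ →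
      Continuous η → (∀ t, 0 ≤ ξ t) → (∀ t, 0 ≤ η t) → ∀ A B : ℝ, 0 ≤ A → 0 ≤ B →
      (∀ a b, a < b → ∫ t in a..b, |iteratedDeriv k f t| ≤
        A * (b - a) ^ (1 - ρ) * (∫ t in a..b, ξ t) ^ ρ) →
      (∀ a b, a < b → ∫ t in a..b, |f t| ≤ B * (b - a) ^ (1 - σ) * (∫ t in a..b, η t) ^ σ) →
      ∀ X Y : ℝ, (∀ a b, a ≤ b → ∫ t in a..b, ξ t ≤ X) → (∀ a b, a ≤ b → ∫ t in a..b, η t ≤ Y) →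
      ∀ M, 0 < M → ∫ t in (-M)..M, |iteratedDeriv j f t| ^ p ≤
        (D * A ^ (θ * p) * B ^ ((1 - θ) * p)) * (X ^ (θ * ρ * p) * Y ^ ((1 - θ) * σ * p)) := by
  obtain ⟨C, hC, hloc⟩ := abs_iteratedDeriv_le_local (k - j - 1) j
  refine ⟨(2 * C) ^ p, by positivity, ?_⟩
  intro f hf ξ η hξ hη hξ0 hη0 A B hA hB hfk hf0 X Y hX hY M hM
  have hkd : j + 1 + (k - j - 1) = k := by omega
  rw [hkd] at hloc
  refine covering_bound (j := j) (k := k)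
    (hf.continuous_iteratedDeriv j (by exact_mod_cast le_top)) hξ hη hξ0 hη0
    (by exact_mod_cast hj) (by exact_mod_cast hjk) hρ0 hσ0 hθ hp hbal hA hB hC ?_ hX hY hM
  intro a l hl x hx
  have h := hloc f hf a (a + l) (by linarith) x hx
  have h1 := hfk a (a + l) (by linarith)
  have h2 := hf0 a (a + l) (by linarith)
  rw [show a + l - a = l by ring] at h h1 h2
  set I := ∫ t in a..(a + l), ξ t
  set J := ∫ t in a..(a + l), η t
  have h3 : |iteratedDeriv j f x| * l ^ (j + 1) ≤
      C * (l ^ k * (A * l ^ (1 - ρ) * I ^ ρ) + B * l ^ (1 - σ) * J ^ σ) := by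
    refine h.trans ?_
    gcongr
  have e0 : (l : ℝ) ^ (j + 1) = l ^ (j : ℝ) * l := by
    rw [pow_succ, Real.rpow_natCast]
  have e1 : l ^ k * l ^ (1 - ρ) = l ^ ((k : ℝ) - ρ) * l := by
    rw [← Real.rpow_natCast, ← Real.rpow_add hl, ← Real.rpow_add_one hl.ne']; ring_nf
  have e2 : l ^ (1 - σ) = l ^ (-σ) * l := by
    rw [← Real.rpow_add_one hl.ne']; ring_nf
  have e3 : l ^ (-(j : ℝ)) * l ^ (j : ℝ) = 1 := by
    rw [← Real.rpow_add hl]; simp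
  have hlj : 0 < l ^ (j : ℝ) := Real.rpow_pos_of_pos hl _
  refine le_of_mul_le_mul_right ?_ (mul_pos hlj hl)
  rw [← e0]
  refine h3.trans (le_of_eq ?_)
  rw [e0]
  calc C * (l ^ k * (A * l ^ (1 - ρ) * I ^ ρ) + B * l ^ (1 - σ) * J ^ σ)
      = C * (A * (l ^ k * l ^ (1 - ρ)) * I ^ ρ + B * l ^ (1 - σ) * J ^ σ) := by ring
    _ = C * (A * l ^ ((k : ℝ) - ρ) * I ^ ρ + B * l ^ (-σ) * J ^ σ) * l := by
      rw [e1, e2]; ring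
    _ = C * (A * l ^ ((k : ℝ) - ρ) * I ^ ρ + B * l ^ (-σ) * J ^ σ) * l *
        (l ^ (-(j : ℝ)) * l ^ (j : ℝ)) := by rw [e3, mul_one]
    _ = _ := by ring

/-! ### Restriction to lines -/

/-- Integration over `ℝⁿ` by slices along the direction `v`, parametrized by a complement of the
line `ℝ v`. -/
lemma exists_slicing {n : ℕ} {v : EuclideanSpace ℝ (Fin n)} (hv : v ≠ 0) :
    ∃ (W : Submodule ℝ (EuclideanSpace ℝ (Fin n))) (c : ℝ≥0∞), c ≠ ⊤ ∧ c ≠ 0 ∧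
      ∀ F : EuclideanSpace ℝ (Fin n) → ℝ≥0∞, Measurable F →
        ∫⁻ x, F x = c * ∫⁻ w : W, ∫⁻ t : ℝ, F (w + t • v) ∂volume ∂Measure.addHaar := by
  obtain ⟨W, hW⟩ := Submodule.exists_isCompl (ℝ ∙ v)
  let e₁ : (W × ℝ) ≃ₗ[ℝ] W × (ℝ ∙ v) :=
    LinearEquiv.prodCongr (LinearEquiv.refl ℝ W) (LinearEquiv.toSpanNonzeroSingleton ℝ _ v hv)
  let L : (W × ℝ) ≃L[ℝ] EuclideanSpace ℝ (Fin n) :=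
    (e₁.trans (Submodule.prodEquivOfIsCompl W (ℝ ∙ v) hW.symm)).toContinuousLinearEquiv
  have hL : ∀ w t, L (w, t) = w + t • v := by
    intro w t
    simp [L, e₁]
  let μ : Measure (W × ℝ) := (Measure.addHaar : Measure W).prod volume
  have hm : (μ.map L).IsAddHaarMeasure := L.isAddHaarMeasure_map μ
  have hc := Measure.isAddLeftInvariant_eq_smul
    (volume : Measure (EuclideanSpace ℝ (Fin n))) (μ.map L)
  set c := Measure.addHaarScalarFactor (volume : Measure (EuclideanSpace ℝ (Fin n))) (μ.map L)
  have hc0 : c ≠ 0 := (Measure.addHaarScalarFactor_pos_of_isAddHaarMeasure _ _).ne'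
  refine ⟨W, c, ENNReal.coe_ne_top, by exact_mod_cast hc0, fun F hF => ?_⟩
  rw [hc, lintegral_smul_measure, ENNReal.smul_def, lintegral_map hF L.continuous.measurable, lintegral_prod]
  · simp only [hL, smul_eq_mul]
  · exact (hF.comp L.continuous.measurable).aemeasurable

lemma iteratedDeriv_line {n : ℕ} {u : EuclideanSpace ℝ (Fin n) → ℝ} (hu : ContDiff ℝ (⊤ : ℕ∞) u)
    (x v : EuclideanSpace ℝ (Fin n)) (j : ℕ) (t : ℝ) :
    iteratedDeriv j (fun t : ℝ => u (x + t • v)) t = iteratedFDeriv ℝ j u (x + t • v) (fun _ => v) := by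
  induction j generalizing t with
  | zero => simp
  | succ j ih =>
    rw [iteratedDeriv_succ, funext ih, iteratedFDeriv_succ_apply_left]
    have h1 : HasFDerivAt (iteratedFDeriv ℝ j u) (fderiv ℝ (iteratedFDeriv ℝ j u) (x + t • v)) (x + t • v) :=
      ((hu.differentiable_iteratedFDeriv (by exact_mod_cast ENat.natCast_lt_top j)) _).hasFDerivAt
    have h2 : HasDerivAt (fun t : ℝ => x + t • v) v t := by
      simpa using ((hasDerivAt_id t).smul_const v).const_add x
    have h3 := h1.comp_hasDerivAt t h2
    have h4 := ((ContinuousMultilinearMap.apply ℝ (fun _ : Fin j => EuclideanSpace ℝ (Fin n)) ℝ (fun _ => v)).hasFDerivAt).comp_hasDerivAt t h3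
    exact h4.deriv

/-- Hölder's inequality on an interval, against the constant function. -/
lemma interval_holder {g : ℝ → ℝ} (hg : Continuous g) (hg0 : ∀ t, 0 ≤ g t) {s : ℝ} (hs : 1 ≤ s)
    {a b : ℝ} (hab : a < b) :
    ∫ t in a..b, g t ≤ (b - a) ^ (1 - s⁻¹) * (∫ t in a..b, g t ^ s) ^ s⁻¹ := by
  have hs0 : 0 < s := by linarith
  have hs1 : s⁻¹ ≤ 1 := inv_le_one_of_one_le₀ hs
  have hgs : Continuous fun t => g t ^ s := hg.rpow_const (fun t => Or.inr hs0.le)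
  have h := ENNReal.lintegral_mul_norm_pow_le (μ := volume.restrict (Set.Ioc a b))
    (f := fun _ => (1 : ℝ≥0∞)) (g := fun t => ENNReal.ofReal (g t ^ s)) aemeasurable_const
    hgs.measurable.ennreal_ofReal.aemeasurable (sub_nonneg.2 hs1) (inv_nonneg.2 hs0.le) (by ring)
  have hI : ∀ G : ℝ → ℝ, Continuous G → (∀ t, 0 ≤ G t) →
      ∫⁻ t in Set.Ioc a b, ENNReal.ofReal (G t) = ENNReal.ofReal (∫ t in a..b, G t) := by
    intro G hG hG0
    rw [intervalIntegral.integral_of_le hab.le, ofReal_integral_eq_lintegral_ofReal]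
    · exact (hG.integrableOn_Icc (a := a) (b := b)).mono_set Set.Ioc_subset_Icc_self
    · exact Filter.Eventually.of_forall hG0
  have hgs0 : ∀ t, 0 ≤ g t ^ s := fun t => Real.rpow_nonneg (hg0 t) s
  have e1 : ∀ t, ((1 : ℝ≥0∞)) ^ (1 - s⁻¹) * ENNReal.ofReal (g t ^ s) ^ s⁻¹ = ENNReal.ofReal (g t) := by
    intro t
    rw [ENNReal.one_rpow, one_mul, ENNReal.ofReal_rpow_of_nonneg (hgs0 t) (by positivity),
      Real.rpow_rpow_inv (hg0 t) hs0.ne']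
  have hnn : 0 ≤ ∫ t in a..b, g t ^ s := intervalIntegral.integral_nonneg hab.le (fun t _ => hgs0 t)
  simp only [e1] at h
  rw [hI g hg hg0, hI _ hgs hgs0] at h
  simp only [lintegral_const, Measure.restrict_apply MeasurableSet.univ, Set.univ_inter,
    Real.volume_Ioc, one_mul] at h
  rw [ENNReal.ofReal_rpow_of_nonneg (by linarith) (by linarith),
    ENNReal.ofReal_rpow_of_nonneg hnn (by positivity), ← ENNReal.ofReal_mul (by
      exact Real.rpow_nonneg (by linarith) _)] at h
  refine (ENNReal.ofReal_le_ofReal_iff ?_).1 h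
  exact mul_nonneg (Real.rpow_nonneg (by linarith) _) (Real.rpow_nonneg hnn _)

lemma enorm_le_eLpNorm_top {E F : Type*} [NormedAddCommGroup E] [MeasurableSpace E] [BorelSpace E]
    [NormedAddCommGroup F] {μ : Measure E} [μ.IsOpenPosMeasure] {h : E → F} (hh : Continuous h)
    (x : E) : ‖h x‖ₑ ≤ eLpNorm h ⊤ μ := by
  rw [eLpNorm_exponent_top]
  by_contra! hlt
  have ho : IsOpen {y | eLpNormEssSup h μ < ‖h y‖ₑ} :=
    isOpen_lt continuous_const hh.enorm
  have h0 : μ {y | eLpNormEssSup h μ < ‖h y‖ₑ} = 0 := by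
    have := ae_le_eLpNormEssSup (f := h) (μ := μ)
    rw [ae_iff] at this
    simpa using this
  exact (ho.measure_pos μ ⟨x, hlt⟩).ne' h0

/-- A finite `L^s` norm written as `A (∫ ξ) ^ (1 / s)`, with `L¹` norms on all segments controlled
by `A` and `ξ`. The case `s = ∞` has `ξ = 0`; then `1 / s = 0`, and `0 ^ 0 = 1` makes the formulas
correct. -/
lemma exists_line_control {n : ℕ} {F : Type*} [NormedAddCommGroup F]
    {h : EuclideanSpace ℝ (Fin n) → F} (hh : Continuous h) {s : ℝ≥0∞} (hs : 1 ≤ s)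
    (hfin : eLpNorm h s volume < ⊤) :
    ∃ (ξ : EuclideanSpace ℝ (Fin n) → ℝ) (A : ℝ), Continuous ξ ∧ (∀ x, 0 ≤ ξ x) ∧ 0 ≤ A ∧
      ∫⁻ x, ENNReal.ofReal (ξ x) < ⊤ ∧
      eLpNorm h s volume = ENNReal.ofReal A * (∫⁻ x, ENNReal.ofReal (ξ x)) ^ s⁻¹.toReal ∧
      ∀ x v : EuclideanSpace ℝ (Fin n), ∀ a b, a < b → ∫ t in a..b, ‖h (x + t • v)‖ ≤
        A * (b - a) ^ (1 - s⁻¹.toReal) * (∫ t in a..b, ξ (x + t • v)) ^ s⁻¹.toReal := by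
  have hline : ∀ x v : EuclideanSpace ℝ (Fin n), Continuous fun t : ℝ => x + t • v := by
    intro x v; fun_prop
  rcases eq_or_ne s ⊤ with rfl | hst
  · refine ⟨fun _ => 0, (eLpNorm h ⊤ volume).toReal, continuous_const, fun _ => le_rfl,
      ENNReal.toReal_nonneg, by simp, by rw [ENNReal.ofReal_toReal hfin.ne]; simp, ?_⟩
    intro x v a b hab
    have : ∫ t in a..b, ‖h (x + t • v)‖ ≤ ∫ t in a..b, (eLpNorm h ⊤ volume).toReal := by
      refine intervalIntegral.integral_mono_on hab.le
        ((hh.comp (hline x v)).norm.intervalIntegrable _ _) (by simp) (fun t _ => ?_)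
      have := ENNReal.toReal_mono hfin.ne (enorm_le_eLpNorm_top (μ := volume) hh (x + t • v))
      simpa using this
    simp only [intervalIntegral.integral_const, smul_eq_mul] at this
    rw [eLpNorm_exponent_top] at this ⊢
    simp
    linarith
  · have hs0 : s ≠ 0 := (zero_lt_one.trans_le hs).ne'
    have hsr : 1 ≤ s.toReal := by simpa using ENNReal.toReal_mono hst hs
    have hsr0 : 0 ≤ s.toReal := by linarith
    have e0 : ∀ x, ENNReal.ofReal (‖h x‖ ^ s.toReal) = ‖h x‖ₑ ^ s.toReal := by
      intro x
      rw [← ofReal_norm, ENNReal.ofReal_rpow_of_nonneg (norm_nonneg _) hsr0]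
    refine ⟨fun x => ‖h x‖ ^ s.toReal, 1, hh.norm.rpow_const (fun _ => Or.inr hsr0),
      fun x => by positivity, zero_le_one, ?_, ?_, ?_⟩
    · simp only [e0]
      exact lintegral_rpow_enorm_lt_top_of_eLpNorm_lt_top hs0 hst hfin
    · simp only [e0]
      rw [eLpNorm_eq_lintegral_rpow_enorm_toReal hs0 hst]
      simp [ENNReal.toReal_inv]
    · intro x v a b hab
      have := interval_holder (g := fun t => ‖h (x + t • v)‖) (hh.comp (hline x v)).norm
        (fun t => norm_nonneg _) hsr hab
      simpa [ENNReal.toReal_inv] using this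

/-- Passage from bounds on bounded intervals to a bound on the whole line. -/
lemma lintegral_line_le {g : ℝ → ℝ} (hg : Continuous g) (hg0 : ∀ t, 0 ≤ g t) {K : ℝ}
    (h : ∀ M, 0 < M → ∫ t in (-M)..M, g t ≤ K) :
    ∫⁻ t, ENNReal.ofReal (g t) ≤ ENNReal.ofReal K := by
  have hc : AECover (volume : Measure ℝ) Filter.atTop fun M : ℝ => Set.Ioc (-M) M :=
    aecover_Ioc Filter.tendsto_neg_atTop_atBot Filter.tendsto_id
  refine le_of_tendsto (hc.lintegral_tendsto_of_countably_generated
    hg.measurable.ennreal_ofReal.aemeasurable) ?_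
  filter_upwards [Filter.eventually_gt_atTop 0] with M hM
  rw [← ofReal_integral_eq_lintegral_ofReal, ← intervalIntegral.integral_of_le (by linarith)]
  · exact ENNReal.ofReal_le_ofReal (h M hM)
  · exact (hg.integrableOn_Icc (a := -M) (b := M)).mono_set Set.Ioc_subset_Icc_self
  · exact Filter.Eventually.of_forall hg0

lemma intervalIntegral_le_toReal_lintegral {g : ℝ → ℝ} (hg : Continuous g) (hg0 : ∀ t, 0 ≤ g t)
    (hfin : ∫⁻ t, ENNReal.ofReal (g t) < ⊤) {a b : ℝ} (hab : a ≤ b) :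
    ∫ t in a..b, g t ≤ (∫⁻ t, ENNReal.ofReal (g t)).toReal := by
  rw [intervalIntegral.integral_of_le hab, integral_eq_lintegral_of_nonneg_ae
    (Filter.Eventually.of_forall hg0) hg.aestronglyMeasurable]
  exact ENNReal.toReal_mono hfin.ne (setLIntegral_le_lintegral _ _)

/-- Integrating a product of powers of slice integrals: Hölder's inequality on the complement. -/
lemma lintegral_slices_le {n : ℕ} {v : EuclideanSpace ℝ (Fin n)} (hv : v ≠ 0)
    {g ξ η : EuclideanSpace ℝ (Fin n) → ℝ} (hg : Continuous g) (hξ : Continuous ξ)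
    (hη : Continuous η) (hXfin : ∫⁻ x, ENNReal.ofReal (ξ x) < ⊤)
    (hYfin : ∫⁻ x, ENNReal.ofReal (η x) < ⊤) {K : ℝ≥0∞} {a b : ℝ} (ha : 0 ≤ a) (hb : 0 ≤ b)
    (hab : a + b = 1)
    (h : ∀ x, ∫⁻ t : ℝ, ENNReal.ofReal (ξ (x + t • v)) < ⊤ →
      ∫⁻ t : ℝ, ENNReal.ofReal (η (x + t • v)) < ⊤ →
      ∫⁻ t : ℝ, ENNReal.ofReal (g (x + t • v)) ≤
        K * ((∫⁻ t : ℝ, ENNReal.ofReal (ξ (x + t • v))) ^ a *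
          (∫⁻ t : ℝ, ENNReal.ofReal (η (x + t • v))) ^ b)) :
    ∫⁻ x, ENNReal.ofReal (g x) ≤
      K * ((∫⁻ x, ENNReal.ofReal (ξ x)) ^ a * (∫⁻ x, ENNReal.ofReal (η x)) ^ b) := by
  obtain ⟨W, c, hc, hc0, hW⟩ := exists_slicing hv
  have hmeas : ∀ G : EuclideanSpace ℝ (Fin n) → ℝ, Continuous G →
      Measurable fun w : W => ∫⁻ t : ℝ, ENNReal.ofReal (G (w + t • v)) := by
    intro G hG
    have h1 : Continuous fun z : W × ℝ => G (z.1 + z.2 • v) := by fun_prop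
    exact h1.measurable.ennreal_ofReal.lintegral_prod_right'
  rw [hW _ hξ.measurable.ennreal_ofReal] at hXfin ⊢
  rw [hW _ hη.measurable.ennreal_ofReal] at hYfin ⊢
  rw [hW _ hg.measurable.ennreal_ofReal]
  have hX' := ENNReal.lt_top_of_mul_ne_top_right hXfin.ne hc0
  have hY' := ENNReal.lt_top_of_mul_ne_top_right hYfin.ne hc0
  have hstep : ∫⁻ w : W, ∫⁻ t : ℝ, ENNReal.ofReal (g (w + t • v)) ∂volume ∂Measure.addHaar ≤
      ∫⁻ w : W, K * ((∫⁻ t : ℝ, ENNReal.ofReal (ξ (w + t • v))) ^ a *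
          (∫⁻ t : ℝ, ENNReal.ofReal (η (w + t • v))) ^ b) ∂Measure.addHaar := by
    refine lintegral_mono_ae ?_
    filter_upwards [ae_lt_top (hmeas ξ hξ) hX'.ne, ae_lt_top (hmeas η hη) hY'.ne] with w h1 h2
    exact h w h1 h2
  have hH := ENNReal.lintegral_mul_norm_pow_le (μ := (Measure.addHaar : Measure W))
    (hmeas ξ hξ).aemeasurable (hmeas η hη).aemeasurable ha hb hab
  have hm : Measurable fun w : W => (∫⁻ t : ℝ, ENNReal.ofReal (ξ (w + t • v))) ^ a *
      (∫⁻ t : ℝ, ENNReal.ofReal (η (w + t • v))) ^ b :=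
    ((hmeas ξ hξ).pow_const a).mul ((hmeas η hη).pow_const b)
  rw [lintegral_const_mul _ hm] at hstep
  have hcc : c = c ^ a * c ^ b := by
    rw [← ENNReal.rpow_add _ _ hc0 hc, hab, ENNReal.rpow_one]
  rw [ENNReal.mul_rpow_of_nonneg _ _ ha, ENNReal.mul_rpow_of_nonneg _ _ hb]
  calc _ ≤ c * (K * _) := mul_le_mul_right (hstep.trans (mul_le_mul_right hH _)) _
    _ = _ := by
      nth_rewrite 1 [hcc]
      ring

/-! ### The endpoint for directional derivatives -/

/-- The endpoint for the derivative in a single direction, when `p < ∞`. -/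
lemma directional_endpoint_finite {n : ℕ} (j k : ℕ) (hj : 1 ≤ j) (hjk : j < k)
    {v : EuclideanSpace ℝ (Fin n)} (hv : v ≠ 0) {p q r : ℝ≥0∞} (hp : 1 ≤ p) (hpt : p ≠ ⊤)
    (hq : 1 ≤ q) (hr : 1 ≤ r)
    (hbal : p⁻¹.toReal = (j / k : ℝ) * r⁻¹.toReal + (1 - j / k) * q⁻¹.toReal) :
    ∃ C : ℝ, 0 < C ∧ ∀ u : EuclideanSpace ℝ (Fin n) → ℝ, ContDiff ℝ (⊤ : ℕ∞) u →
      eLpNorm (iteratedFDeriv ℝ k u) r volume < ⊤ → eLpNorm u q volume < ⊤ →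
      eLpNorm (fun x => iteratedFDeriv ℝ j u x (fun _ => v)) p volume ≤
        ENNReal.ofReal C * (eLpNorm (iteratedFDeriv ℝ k u) r volume) ^ (j / k : ℝ) *
          (eLpNorm u q volume) ^ (1 - j / k : ℝ) := by
  have hk0 : (0 : ℝ) < k := by exact_mod_cast (by omega : 0 < k)
  have hp0 : p ≠ 0 := (zero_lt_one.trans_le hp).ne'
  set P := p.toReal with hP
  have hP1 : 1 ≤ P := by simpa using ENNReal.toReal_mono hpt hp
  have hP0 : 0 < P := by linarith
  set θ : ℝ := j / k with hθdef
  have hθ0 : 0 ≤ θ := by positivity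
  have hθ1 : 0 ≤ 1 - θ := by
    have : θ ≤ 1 := (div_le_one hk0).2 (by exact_mod_cast hjk.le)
    linarith
  set ρ := r⁻¹.toReal
  set σ := q⁻¹.toReal
  have hρ0 : 0 ≤ ρ := ENNReal.toReal_nonneg
  have hσ0 : 0 ≤ σ := ENNReal.toReal_nonneg
  have hbal' : 1 / P = θ * ρ + (1 - θ) * σ := by
    rw [← hbal, ENNReal.toReal_inv, one_div]
  obtain ⟨D, hD, hline⟩ := line_inequality j k hj hjk hρ0 hσ0
    (by rw [hθdef]; field_simp : θ * k = j) hP0 hbal'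
  have hvn : 0 < ‖v‖ := norm_pos_iff.2 hv
  refine ⟨(D * (‖v‖ ^ k) ^ (θ * P)) ^ P⁻¹, by positivity, ?_⟩
  intro u hu hfk hf0
  have hck : Continuous (iteratedFDeriv ℝ k u) :=
    hu.continuous_iteratedFDeriv (by exact_mod_cast le_top)
  have hcj : Continuous fun x => iteratedFDeriv ℝ j u x (fun _ => v) :=
    ((ContinuousMultilinearMap.apply ℝ (fun _ : Fin j => EuclideanSpace ℝ (Fin n)) ℝ
      (fun _ => v)).continuous).comp (hu.continuous_iteratedFDeriv (by exact_mod_cast le_top))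
  obtain ⟨ξ, A, hξ, hξ0, hA, hXfin, hXn, hξl⟩ := exists_line_control hck hr hfk
  obtain ⟨η, B, hη, hη0, hB, hYfin, hYn, hηl⟩ := exists_line_control hu.continuous hq hf0
  have hl : ∀ x : EuclideanSpace ℝ (Fin n), Continuous fun t : ℝ => x + t • v := by
    intro x; fun_prop
  set a := θ * ρ * P
  set b := (1 - θ) * σ * P
  have ha : 0 ≤ a := by positivity
  have hb : 0 ≤ b := by positivity
  have hab : a + b = 1 := by
    have : P * (1 / P) = 1 := by field_simp
    rw [hbal'] at this
    simp only [a, b]; linarith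
  have hmain := lintegral_slices_le hv (g := fun x => |iteratedFDeriv ℝ j u x (fun _ => v)| ^ P)
    (hcj.abs.rpow_const (fun _ => Or.inr hP0.le)) hξ hη hXfin hYfin
    (K := ENNReal.ofReal (D * (‖v‖ ^ k * A) ^ (θ * P) * B ^ ((1 - θ) * P))) ha hb hab (by
    intro x hx hy
    have hfl : ContDiff ℝ (⊤ : ℕ∞) fun t : ℝ => u (x + t • v) := by fun_prop
    rw [← ENNReal.ofReal_toReal hx.ne, ← ENNReal.ofReal_toReal hy.ne,
      ENNReal.ofReal_rpow_of_nonneg ENNReal.toReal_nonneg ha,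
      ENNReal.ofReal_rpow_of_nonneg ENNReal.toReal_nonneg hb,
      ← ENNReal.ofReal_mul (by positivity), ← ENNReal.ofReal_mul (by positivity)]
    refine lintegral_line_le ((hcj.comp (hl x)).abs.rpow_const (fun _ => Or.inr hP0.le))
      (fun t => by positivity) (fun M hM => ?_)
    have := hline (fun t : ℝ => u (x + t • v)) hfl (fun t => ξ (x + t • v))
      (fun t => η (x + t • v)) (hξ.comp (hl x)) (hη.comp (hl x)) (fun t => hξ0 _) (fun t => hη0 _)
      (‖v‖ ^ k * A) B (by positivity) hB ?_ ?_ _ _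
      (fun a b hab => intervalIntegral_le_toReal_lintegral (hξ.comp (hl x)) (fun t => hξ0 _) hx hab)
      (fun a b hab => intervalIntegral_le_toReal_lintegral (hη.comp (hl x)) (fun t => hη0 _) hy hab)
      M hM
    · simpa only [iteratedDeriv_line hu, Function.comp_def] using this
    · intro a b hab
      have h1 := mul_le_mul_of_nonneg_left (hξl x v a b hab) (by positivity : 0 ≤ ‖v‖ ^ k)
      have h2 : ∫ t in a..b, |iteratedDeriv k (fun t : ℝ => u (x + t • v)) t| ≤
          ∫ t in a..b, ‖v‖ ^ k * ‖iteratedFDeriv ℝ k u (x + t • v)‖ := by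
        simp only [iteratedDeriv_line hu]
        refine intervalIntegral.integral_mono_on hab.le ?_ ?_ (fun t _ => ?_)
        · have : Continuous fun t : ℝ => iteratedFDeriv ℝ k u (x + t • v) (fun _ => v) :=
            ((ContinuousMultilinearMap.apply ℝ (fun _ : Fin k => EuclideanSpace ℝ (Fin n)) ℝ
              (fun _ => v)).continuous).comp (hck.comp (hl x))
          exact this.abs.intervalIntegrable _ _
        · exact ((hck.comp (hl x)).norm.const_mul _).intervalIntegrable _ _
        · have := (iteratedFDeriv ℝ k u (x + t • v)).le_opNorm (fun _ => v)
          rw [Real.norm_eq_abs] at this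
          simpa [mul_comm] using this
      rw [intervalIntegral.integral_const_mul] at h2
      linarith
    · exact hηl x v)
  rw [eLpNorm_eq_lintegral_rpow_enorm_toReal hp0 hpt, ← hP, hXn, hYn]
  have e0 : ∀ x, ENNReal.ofReal (|iteratedFDeriv ℝ j u x (fun _ => v)| ^ P) =
      ‖iteratedFDeriv ℝ j u x (fun _ => v)‖ₑ ^ P := by
    intro x
    rw [← ofReal_norm, ENNReal.ofReal_rpow_of_nonneg (norm_nonneg _) hP0.le, Real.norm_eq_abs]
  simp only [e0] at hmain
  refine (ENNReal.rpow_le_rpow hmain (by positivity : 0 ≤ 1 / P)).trans (le_of_eq ?_)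
  have e1 : ENNReal.ofReal (D * (‖v‖ ^ k * A) ^ (θ * P) * B ^ ((1 - θ) * P)) =
      ENNReal.ofReal (D * (‖v‖ ^ k) ^ (θ * P)) * ENNReal.ofReal A ^ (θ * P) *
        ENNReal.ofReal B ^ ((1 - θ) * P) := by
    rw [ENNReal.ofReal_rpow_of_nonneg hA (by positivity),
      ENNReal.ofReal_rpow_of_nonneg hB (by positivity), ← ENNReal.ofReal_mul (by positivity),
      ← ENNReal.ofReal_mul (by positivity), Real.mul_rpow (by positivity) hA]
    congr 1; ring
  rw [e1, one_div, ← ENNReal.ofReal_rpow_of_nonneg (by positivity : 0 ≤ D * (‖v‖ ^ k) ^ (θ * P))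
    (by positivity : 0 ≤ P⁻¹)]
  have hPi : 0 ≤ P⁻¹ := by positivity
  rw [ENNReal.mul_rpow_of_nonneg _ _ hPi, ENNReal.mul_rpow_of_nonneg _ _ hPi,
    ENNReal.mul_rpow_of_nonneg _ _ hPi, ENNReal.mul_rpow_of_nonneg _ _ hPi,
    ENNReal.mul_rpow_of_nonneg _ _ hθ0, ENNReal.mul_rpow_of_nonneg _ _ hθ1]
  simp only [← ENNReal.rpow_mul]
  have x1 : θ * P * P⁻¹ = θ := by field_simp
  have x2 : (1 - θ) * P * P⁻¹ = 1 - θ := by field_simp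
  have x3 : a * P⁻¹ = ρ * θ := by simp only [a]; field_simp
  have x4 : b * P⁻¹ = σ * (1 - θ) := by simp only [b]; field_simp
  rw [x1, x2, x3, x4]
  ring

/-- The Landau–Kolmogorov inequality: the one-dimensional endpoint for the three exponents equal to
`∞`. -/
lemma line_inequality_sup (j k : ℕ) (hjk : j < k) : ∃ C : ℝ, 0 < C ∧
    ∀ f : ℝ → ℝ, ContDiff ℝ (⊤ : ℕ∞) f → ∀ A B : ℝ, 0 ≤ A → 0 ≤ B →
      (∀ t, |iteratedDeriv k f t| ≤ A) → (∀ t, |f t| ≤ B) →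
      |iteratedDeriv j f 0| ≤ C * A ^ (j / k : ℝ) * B ^ (1 - j / k : ℝ) := by
  obtain ⟨C, hC, hloc⟩ := abs_iteratedDeriv_le_local (k - j - 1) j
  have hkd : j + 1 + (k - j - 1) = k := by omega
  rw [hkd] at hloc
  have hk0 : (0 : ℝ) < k := by exact_mod_cast (by omega : 0 < k)
  have hθ1 : (j / k : ℝ) ≤ 1 := (div_le_one hk0).2 (by exact_mod_cast hjk.le)
  have hpos : ∀ f : ℝ → ℝ, ContDiff ℝ (⊤ : ℕ∞) f → ∀ A B : ℝ, 0 < A → 0 < B →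
      (∀ t, |iteratedDeriv k f t| ≤ A) → (∀ t, |f t| ≤ B) →
      |iteratedDeriv j f 0| ≤ 2 * C * A ^ (j / k : ℝ) * B ^ (1 - j / k : ℝ) := by
    intro f hf A B hA hB hfk hf0
    -- the length at which the two terms of the local estimate are equal
    set L := (B / A) ^ (1 / k : ℝ) with hL
    have hL0 : 0 < L := by positivity
    have hLk : L ^ k = B / A := by
      rw [hL, one_div, Real.rpow_inv_natCast_pow (by positivity) (by omega)]
    have hLj : L ^ j = (B / A) ^ (j / k : ℝ) := by
      rw [hL, ← Real.rpow_natCast, ← Real.rpow_mul (by positivity)]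
      congr 1; ring
    have h := hloc f hf 0 L hL0 0 ⟨le_rfl, hL0.le⟩
    have i1 : ∫ t in (0 : ℝ)..L, |iteratedDeriv k f t| ≤ ∫ t in (0 : ℝ)..L, A :=
      intervalIntegral.integral_mono_on hL0.le
        ((hf.continuous_iteratedDeriv k (by exact_mod_cast le_top)).abs.intervalIntegrable _ _)
        (by simp) (fun t _ => hfk t)
    have i2 : ∫ t in (0 : ℝ)..L, |f t| ≤ ∫ t in (0 : ℝ)..L, B :=
      intervalIntegral.integral_mono_on hL0.le
        (hf.continuous.abs.intervalIntegrable _ _) (by simp) (fun t _ => hf0 t)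
    simp only [intervalIntegral.integral_const, smul_eq_mul, sub_zero] at i1 i2 h
    have h2 : |iteratedDeriv j f 0| * L ^ (j + 1) ≤ C * (2 * (L * B)) := by
      refine h.trans (mul_le_mul_of_nonneg_left ?_ hC.le)
      have : L ^ k * (∫ t in (0 : ℝ)..L, |iteratedDeriv k f t|) ≤ L ^ k * (L * A) := by gcongr
      rw [hLk] at this ⊢
      have e : B / A * (L * A) = L * B := by field_simp
      linarith
    have h3 : |iteratedDeriv j f 0| * L ^ j ≤ 2 * C * B := by
      rw [pow_succ] at h2
      have : |iteratedDeriv j f 0| * L ^ j * L ≤ 2 * C * B * L := by linarith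
      exact le_of_mul_le_mul_right this hL0
    rw [hLj, Real.div_rpow hB.le hA.le] at h3
    have hAθ : 0 < A ^ (j / k : ℝ) := by positivity
    have hBθ : 0 < B ^ (j / k : ℝ) := by positivity
    rw [Real.rpow_sub hB, Real.rpow_one]
    have h4 : |iteratedDeriv j f 0| * B ^ (j / k : ℝ) ≤ 2 * C * B * A ^ (j / k : ℝ) := by
      rw [← mul_div_assoc, div_le_iff₀ hAθ] at h3
      exact h3
    rw [← mul_div_assoc, le_div_iff₀ hBθ]
    linarith
  -- the case where `A` or `B` vanishes follows by letting `ε` tend to zero in `A + ε`, `B + ε`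
  refine ⟨2 * C, by positivity, fun f hf A B hA hB hfk hf0 => ?_⟩
  have hcont : ContinuousAt (fun ε : ℝ => 2 * C * (A + ε) ^ (j / k : ℝ) * (B + ε) ^ (1 - j / k : ℝ)) 0 := by
    refine ContinuousAt.mul (ContinuousAt.mul continuousAt_const ?_) ?_
    · exact ContinuousAt.rpow_const (by fun_prop) (Or.inr (by positivity))
    · exact ContinuousAt.rpow_const (by fun_prop) (Or.inr (by linarith))
  have ht := hcont.tendsto.mono_left (nhdsWithin_le_nhds (s := Set.Ioi (0 : ℝ)))
  simp only [add_zero] at ht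
  refine ge_of_tendsto ht ?_
  filter_upwards [self_mem_nhdsWithin] with ε hε
  have hε : 0 < ε := hε
  exact hpos f hf (A + ε) (B + ε) (by linarith) (by linarith) (fun t => (hfk t).trans (by linarith))
    (fun t => (hf0 t).trans (by linarith))

lemma exponent_eq_top {r : ℝ≥0∞} (hr : 1 ≤ r) (h : r⁻¹.toReal = 0) : r = ⊤ := by
  rcases (ENNReal.toReal_eq_zero_iff _).1 h with h | h
  · simpa using h
  · simp at h; simp [h] at hr

/-- The endpoint for the derivative in a single direction. If `p = ∞`, the balance of the exponents
forces `q = r = ∞`. -/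
lemma directional_endpoint {n : ℕ} (j k : ℕ) (hj : 1 ≤ j) (hjk : j < k)
    (v : EuclideanSpace ℝ (Fin n)) {p q r : ℝ≥0∞} (hp : 1 ≤ p)
    (hq : 1 ≤ q) (hr : 1 ≤ r)
    (hbal : p⁻¹.toReal = (j / k : ℝ) * r⁻¹.toReal + (1 - j / k) * q⁻¹.toReal) :
    ∃ C : ℝ, 0 < C ∧ ∀ u : EuclideanSpace ℝ (Fin n) → ℝ, ContDiff ℝ (⊤ : ℕ∞) u →
      eLpNorm (iteratedFDeriv ℝ k u) r volume < ⊤ → eLpNorm u q volume < ⊤ →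
      eLpNorm (fun x => iteratedFDeriv ℝ j u x (fun _ => v)) p volume ≤
        ENNReal.ofReal C * (eLpNorm (iteratedFDeriv ℝ k u) r volume) ^ (j / k : ℝ) *
          (eLpNorm u q volume) ^ (1 - j / k : ℝ) := by
  have hk0 : (0 : ℝ) < k := by exact_mod_cast (by omega : 0 < k)
  have hj0 : (0 : ℝ) < j := by exact_mod_cast hj
  have hθ0 : (0 : ℝ) < j / k := by positivity
  have hθ1 : (0 : ℝ) < 1 - j / k := by
    rw [sub_pos, div_lt_one hk0]; exact_mod_cast hjk
  rcases eq_or_ne v 0 with rfl | hv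
  · refine ⟨1, one_pos, fun u _ _ _ => ?_⟩
    have : (fun x => iteratedFDeriv ℝ j u x (fun _ => 0)) = fun _ => 0 := by
      funext x
      exact (iteratedFDeriv ℝ j u x).map_coord_zero ⟨0, hj⟩ rfl
    rw [this, eLpNorm_zero']
    exact zero_le
  rcases ne_or_eq p ⊤ with hpt | rfl
  · exact directional_endpoint_finite j k hj hjk hv hp hpt hq hr hbal
  have hρ0 : 0 ≤ r⁻¹.toReal := ENNReal.toReal_nonneg
  have hσ0 : 0 ≤ q⁻¹.toReal := ENNReal.toReal_nonneg
  simp only [ENNReal.inv_top, ENNReal.toReal_zero] at hbal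
  have hr' : r = ⊤ := exponent_eq_top hr (by
    by_contra h
    have := mul_pos hθ0 (lt_of_le_of_ne hρ0 (Ne.symm h))
    have := mul_nonneg hθ1.le hσ0
    linarith)
  have hq' : q = ⊤ := exponent_eq_top hq (by
    by_contra h
    have := mul_pos hθ1 (lt_of_le_of_ne hσ0 (Ne.symm h))
    have := mul_nonneg hθ0.le hρ0
    linarith)
  subst hr' hq'
  obtain ⟨C, hC, hmain⟩ := line_inequality_sup j k hjk
  have hvn : 0 < ‖v‖ := norm_pos_iff.2 hv
  refine ⟨C * (‖v‖ ^ k) ^ (j / k : ℝ), by positivity, fun u hu hfk hf0 => ?_⟩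
  set A := eLpNorm (iteratedFDeriv ℝ k u) ⊤ volume
  set B := eLpNorm u ⊤ volume
  have hck : Continuous (iteratedFDeriv ℝ k u) :=
    hu.continuous_iteratedFDeriv (by exact_mod_cast le_top)
  rw [eLpNorm_exponent_top]
  refine eLpNormEssSup_le_of_ae_enorm_bound (Filter.Eventually.of_forall fun x => ?_)
  have hfl : ContDiff ℝ (⊤ : ℕ∞) fun t : ℝ => u (x + t • v) := by fun_prop
  have h := hmain _ hfl (‖v‖ ^ k * A.toReal) B.toReal (by positivity) (by positivity)
    (fun t => by
      rw [iteratedDeriv_line hu]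
      have h1 := (iteratedFDeriv ℝ k u (x + t • v)).le_opNorm (fun _ => v)
      have h2 := ENNReal.toReal_mono hfk.ne (enorm_le_eLpNorm_top (μ := volume) hck (x + t • v))
      rw [toReal_enorm] at h2
      rw [Real.norm_eq_abs] at h1
      simp only [Finset.prod_const, Finset.card_univ, Fintype.card_fin] at h1
      calc _ ≤ _ := h1
        _ ≤ A.toReal * ‖v‖ ^ k := by gcongr
        _ = _ := by ring)
    (fun t => by
      have h2 := ENNReal.toReal_mono hf0.ne (enorm_le_eLpNorm_top (μ := volume) hu.continuous (x + t • v))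
      rwa [toReal_enorm, Real.norm_eq_abs] at h2)
  rw [iteratedDeriv_line hu, zero_smul, add_zero] at h
  rw [← ENNReal.ofReal_toReal hfk.ne, ← ENNReal.ofReal_toReal hf0.ne,
    ENNReal.ofReal_rpow_of_nonneg ENNReal.toReal_nonneg hθ0.le,
    ENNReal.ofReal_rpow_of_nonneg ENNReal.toReal_nonneg hθ1.le,
    ← ENNReal.ofReal_mul (by positivity), ← ENNReal.ofReal_mul (by positivity),
    ← ofReal_norm, Real.norm_eq_abs]
  refine ENNReal.ofReal_le_ofReal (h.trans (le_of_eq ?_))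
  rw [Real.mul_rpow (by positivity) (by positivity)]
  ring

/-! ### Symmetry of iterated derivatives and polarization -/

lemma natCast_le_smooth (j : ℕ) : (j : WithTop ℕ∞) ≤ ((⊤ : ℕ∞) : WithTop ℕ∞) := by
  exact_mod_cast le_top

section Polarization

variable {E : Type*} [NormedAddCommGroup E] [NormedSpace ℝ E]

lemma hasFDerivAt_iteratedFDeriv_apply {u : E → ℝ} (hu : ContDiff ℝ (⊤ : ℕ∞) u) (j : ℕ)
    (m : Fin j → E) (x : E) :
    HasFDerivAt (fun y => iteratedFDeriv ℝ j u y m)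
      ((ContinuousMultilinearMap.apply ℝ (fun _ : Fin j => E) ℝ m).comp
        (fderiv ℝ (iteratedFDeriv ℝ j u) x)) x :=
  ((ContinuousMultilinearMap.apply ℝ (fun _ : Fin j => E) ℝ m).hasFDerivAt).comp x
    ((hu.differentiable_iteratedFDeriv (by exact_mod_cast ENat.natCast_lt_top j)) x).hasFDerivAt

lemma iteratedFDeriv_succ_apply_eq_fderiv {u : E → ℝ} (hu : ContDiff ℝ (⊤ : ℕ∞) u) (j : ℕ)
    (m : Fin (j + 1) → E) (x : E) :
    iteratedFDeriv ℝ (j + 1) u x m =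
      fderiv ℝ (fun y => iteratedFDeriv ℝ j u y (Fin.tail m)) x (m 0) := by
  rw [iteratedFDeriv_succ_apply_left, (hasFDerivAt_iteratedFDeriv_apply hu j _ x).fderiv]
  rfl

lemma contDiff_iteratedFDeriv_apply {u : E → ℝ} (hu : ContDiff ℝ (⊤ : ℕ∞) u) (j : ℕ)
    (m : Fin j → E) : ContDiff ℝ (⊤ : ℕ∞) fun y => iteratedFDeriv ℝ j u y m :=
  (ContinuousMultilinearMap.apply ℝ (fun _ : Fin j => E) ℝ m).contDiff.comp
    (hu.iteratedFDeriv_right (by exact_mod_cast le_top))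

/-- Symmetry of the iterated derivative under adjacent transpositions, by induction from the
symmetry of the second derivative. -/
lemma iteratedFDeriv_swap {u : E → ℝ} (hu : ContDiff ℝ (⊤ : ℕ∞) u) (j : ℕ) :
    ∀ (i : Fin j) (m : Fin (j + 1) → E) (x : E),
      iteratedFDeriv ℝ (j + 1) u x (m ∘ Equiv.swap i.castSucc i.succ) =
        iteratedFDeriv ℝ (j + 1) u x m := by
  induction j with
  | zero => intro i; exact i.elim0
  | succ j ih =>
    intro i m x
    rcases Fin.eq_zero_or_eq_succ i with rfl | ⟨i, rfl⟩
    · have key : ∀ m : Fin (j + 2) → E, iteratedFDeriv ℝ (j + 1 + 1) u x m =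
          fderiv ℝ (fderiv ℝ (fun y => iteratedFDeriv ℝ j u y (Fin.tail (Fin.tail m)))) x (m 0)
            (m 1) := by
        intro m
        rw [iteratedFDeriv_succ_apply_eq_fderiv hu]
        have : (fun y => iteratedFDeriv ℝ (j + 1) u y (Fin.tail m)) = fun y =>
            fderiv ℝ (fun z => iteratedFDeriv ℝ j u z (Fin.tail (Fin.tail m))) y (m 1) := by
          funext y
          exact iteratedFDeriv_succ_apply_eq_fderiv hu j (Fin.tail m) y
        rw [this]
        have hd : DifferentiableAt ℝ
            (fderiv ℝ (fun z => iteratedFDeriv ℝ j u z (Fin.tail (Fin.tail m)))) x :=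
          (((contDiff_iteratedFDeriv_apply hu j _).fderiv_right (m := 1)
            (by simpa [one_add_one_eq_two] using natCast_le_smooth 2)).differentiable (by norm_num)) x
        have := (hd.hasFDerivAt.clm_apply (hasFDerivAt_const (m 1) x)).fderiv
        rw [this]
        simp
      rw [key, key]
      have e1 : (m ∘ Equiv.swap (Fin.castSucc 0) (Fin.succ 0)) 0 = m 1 := by
        simp
      have e2 : (m ∘ Equiv.swap (Fin.castSucc 0) (Fin.succ 0)) 1 = m 0 := by
        simp
      have e3 : Fin.tail (Fin.tail (m ∘ Equiv.swap (Fin.castSucc 0) (Fin.succ 0))) =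
          Fin.tail (Fin.tail m) := by
        funext l
        simp only [Fin.tail, Function.comp]
        rw [Equiv.swap_apply_of_ne_of_ne]
        · simp [Fin.ext_iff]
        · simp [Fin.ext_iff]
      rw [e1, e2, e3]
      exact ((contDiff_iteratedFDeriv_apply hu j _).contDiffAt.isSymmSndFDerivAt
        (by simpa using natCast_le_smooth 2)) _ _
    · rw [iteratedFDeriv_succ_apply_eq_fderiv hu, iteratedFDeriv_succ_apply_eq_fderiv hu]
      have e0 : (m ∘ Equiv.swap (Fin.castSucc i.succ) (Fin.succ i.succ)) 0 = m 0 := by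
        simp only [Function.comp]
        rw [Equiv.swap_apply_of_ne_of_ne]
        · simp [Fin.ext_iff]
        · simp [Fin.ext_iff]
      have e1 : Fin.tail (m ∘ Equiv.swap (Fin.castSucc i.succ) (Fin.succ i.succ)) =
          Fin.tail m ∘ Equiv.swap i.castSucc i.succ := by
        funext l
        simp only [Fin.tail, Function.comp]
        congr 1
        rw [← Fin.succ_castSucc]
        exact ((Fin.succ_injective _).swap_apply _ _ _)
      rw [e0, e1]
      congr 2
      funext y
      exact ih i (Fin.tail m) y

/-- Iterated derivatives of smooth real functions are symmetric. -/
lemma iteratedFDeriv_comp_perm_of_smooth {u : E → ℝ} (hu : ContDiff ℝ (⊤ : ℕ∞) u) (j : ℕ)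
    (σ : Equiv.Perm (Fin j)) (m : Fin j → E) (x : E) :
    iteratedFDeriv ℝ j u x (m ∘ σ) = iteratedFDeriv ℝ j u x m := by
  cases j with
  | zero => congr 1; funext i; exact i.elim0
  | succ j =>
    have hσ : σ ∈ Submonoid.closure (Set.range fun i : Fin j ↦ Equiv.swap i.castSucc i.succ) := by
      rw [Equiv.Perm.mclosure_swap_castSucc_succ]; trivial
    induction hσ using Submonoid.closure_induction generalizing m with
    | mem s hs => obtain ⟨i, rfl⟩ := hs; exact iteratedFDeriv_swap hu j i m x
    | one => simp
    | mul a b _ _ ha hb =>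
      rw [Equiv.Perm.coe_mul, ← Function.comp_assoc, hb, ha]

/-- The submodule of symmetric continuous `j`-linear real forms on `E`. -/
def symmetricForms (E : Type*) [NormedAddCommGroup E] [NormedSpace ℝ E] (j : ℕ) :
    Submodule ℝ (E [×j]→L[ℝ] ℝ) where
  carrier := {f | ∀ (σ : Equiv.Perm (Fin j)) (m : Fin j → E), f (m ∘ σ) = f m}
  add_mem' := by
    intro f g hf hg σ m
    simp [hf σ m, hg σ m]
  zero_mem' := by intro σ m; simp
  smul_mem' := by
    intro c f hf σ m
    simp [hf σ m]

/-- Polarization: a symmetric form vanishing on the diagonal vanishes, since its polarized values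
are derivatives of its restriction to the diagonal. -/
lemma symmetricForms_eq_zero {j : ℕ} {f : E [×j]→L[ℝ] ℝ} (hf : f ∈ symmetricForms E j)
    (h : ∀ v, f (fun _ => v) = 0) : f = 0 := by
  ext m
  have h1 := f.iteratedFDeriv_comp_diagonal 0 m
  have h2 : (fun x => f (fun _ => x)) = fun _ => 0 := funext h
  rw [h2] at h1
  have h3 : ∀ σ : Equiv.Perm (Fin j), f (fun i => m (σ i)) = f m := fun σ => hf σ m
  simp only [h3, Finset.sum_const, nsmul_eq_mul] at h1
  have h4 : iteratedFDeriv ℝ j (fun _ : E => (0 : ℝ)) 0 = 0 := by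
    simp
  rw [h4] at h1
  have h5 : ((Finset.univ : Finset (Equiv.Perm (Fin j))).card : ℝ) ≠ 0 := by
    exact_mod_cast Finset.card_ne_zero.2 ⟨1, Finset.mem_univ _⟩
  simpa [h5] using h1.symm

/-- In finite dimension, finitely many diagonal values control the norm of a symmetric form. -/
lemma exists_finset_norm_le [FiniteDimensional ℝ E] (j : ℕ) :
    ∃ (V : Finset E) (C : ℝ), 0 < C ∧ ∀ f ∈ symmetricForms E j,
      ‖f‖ ≤ C * ∑ v ∈ V, |f (fun _ => v)| := by
  have : FiniteDimensional ℝ (E [×j]→L[ℝ] ℝ) :=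
    Module.Finite.of_injective (ContinuousMultilinearMap.toMultilinearMapLinear (R' := ℝ) (A := ℝ)
      (M₁ := fun _ : Fin j => E) (M₂ := ℝ)) ContinuousMultilinearMap.toMultilinearMap_injective
  let ev : E → symmetricForms E j →ₗ[ℝ] ℝ := fun v =>
    (ContinuousMultilinearMap.apply ℝ (fun _ : Fin j => E) ℝ (fun _ => v)).toLinearMap.comp
      (symmetricForms E j).subtype
  -- in a Noetherian module, finitely many kernels have the same intersection as all of them
  obtain ⟨V, hV⟩ := Finset.exists_inf_le (fun v => LinearMap.ker (ev v))
  let T : symmetricForms E j →ₗ[ℝ] (V → ℝ) := LinearMap.pi fun v => ev v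
  have hT : LinearMap.ker T = ⊥ := by
    rw [LinearMap.ker_eq_bot']
    intro f hf
    apply Subtype.ext
    refine symmetricForms_eq_zero f.2 (fun v => ?_)
    have : f ∈ V.inf fun v => LinearMap.ker (ev v) := by
      rw [Submodule.mem_finsetInf]
      intro w hw
      exact congrFun hf ⟨w, hw⟩
    exact hV v this
  obtain ⟨K, hK, hanti⟩ := LinearMap.exists_antilipschitzWith (𝕜 := ℝ) (E := symmetricForms E j) (F := V → ℝ) T hT
  refine ⟨V, K, by exact_mod_cast hK, fun f hf => ?_⟩
  have h := hanti.le_mul_dist ⟨f, hf⟩ 0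
  rw [map_zero, dist_zero_right] at h
  have h' : dist f 0 ≤ K * ‖T ⟨f, hf⟩‖ := h
  rw [dist_zero_right] at h'
  refine h'.trans (mul_le_mul_of_nonneg_left ?_ K.2)
  refine (pi_norm_le_iff_of_nonneg (Finset.sum_nonneg fun _ _ => abs_nonneg _)).2 fun v => ?_
  exact Finset.single_le_sum (f := fun v => |f (fun _ => v)|) (fun _ _ => abs_nonneg _) v.2

end Polarization

/-! ### The endpoint and exponents indexed by their reciprocals -/

/-- The endpoint `θ = j / k` of the interpolation scale. -/
theorem endpoint_inequality {n : ℕ} (j k : ℕ) (hj : 1 ≤ j) (hjk : j < k)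
    {p q r : ℝ≥0∞} (hp : 1 ≤ p) (hq : 1 ≤ q) (hr : 1 ≤ r)
    (hbal : p⁻¹.toReal = (j / k : ℝ) * r⁻¹.toReal + (1 - j / k) * q⁻¹.toReal) :
    ∃ C : ℝ, 0 < C ∧ ∀ u : EuclideanSpace ℝ (Fin n) → ℝ, ContDiff ℝ (⊤ : ℕ∞) u →
      eLpNorm (iteratedFDeriv ℝ k u) r volume < ⊤ → eLpNorm u q volume < ⊤ →
      eLpNorm (iteratedFDeriv ℝ j u) p volume ≤
        ENNReal.ofReal C * (eLpNorm (iteratedFDeriv ℝ k u) r volume) ^ (j / k : ℝ) *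
          (eLpNorm u q volume) ^ (1 - j / k : ℝ) := by
  obtain ⟨V, C₀, hC₀, hV⟩ := exists_finset_norm_le (E := EuclideanSpace ℝ (Fin n)) j
  choose C hC hmain using fun v : EuclideanSpace ℝ (Fin n) =>
    directional_endpoint j k hj hjk v hp hq hr hbal
  have hs : 0 ≤ ∑ v ∈ V, C v := Finset.sum_nonneg fun v _ => (hC v).le
  refine ⟨C₀ * (1 + ∑ v ∈ V, C v), by positivity, fun u hu hfk hf0 => ?_⟩
  have hcv : ∀ v, Continuous fun x => iteratedFDeriv ℝ j u x (fun _ => v) := fun v =>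
    (contDiff_iteratedFDeriv_apply hu j _).continuous
  have h1 : eLpNorm (iteratedFDeriv ℝ j u) p volume ≤ ENNReal.ofReal C₀ *
      eLpNorm (∑ v ∈ V, fun x => |iteratedFDeriv ℝ j u x (fun _ => v)|) p volume := by
    refine eLpNorm_le_mul_eLpNorm_of_ae_le_mul (Filter.Eventually.of_forall fun x => ?_) p
    have h := hV (iteratedFDeriv ℝ j u x)
      (fun σ m => iteratedFDeriv_comp_perm_of_smooth hu j σ m x)
    simp only [Finset.sum_apply]
    rwa [Real.norm_of_nonneg (Finset.sum_nonneg fun _ _ => abs_nonneg _)]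
  have h2 := eLpNorm_sum_le (s := V) (f := fun v x => |iteratedFDeriv ℝ j u x (fun _ => v)|)
    (μ := volume) (fun v _ => (hcv v).abs.aestronglyMeasurable) hp
  set X := (eLpNorm (iteratedFDeriv ℝ k u) r volume) ^ (j / k : ℝ) *
          (eLpNorm u q volume) ^ (1 - j / k : ℝ) with hX
  have h3 : ∑ v ∈ V, eLpNorm (fun x => |iteratedFDeriv ℝ j u x (fun _ => v)|) p volume ≤
      ENNReal.ofReal (∑ v ∈ V, C v) * X := by
    rw [ENNReal.ofReal_sum_of_nonneg fun v _ => (hC v).le, Finset.sum_mul]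
    refine Finset.sum_le_sum fun v _ => ?_
    have := hmain v u hu hfk hf0
    rw [mul_assoc] at this
    refine le_trans (le_of_eq ?_) this
    exact eLpNorm_norm (fun x => iteratedFDeriv ℝ j u x (fun _ => v))
  rw [mul_assoc, ← hX, ENNReal.ofReal_mul hC₀.le, mul_assoc]
  refine h1.trans (mul_le_mul_right (h2.trans (h3.trans (mul_le_mul_left ?_ _))) _)
  exact ENNReal.ofReal_le_ofReal (by linarith)

/-- The Lebesgue exponent whose reciprocal is the given number; every `t ≤ 0` is sent to `⊤`. Indexing
by reciprocals makes the exponent `∞` the ordinary value `t = 0`. -/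
noncomputable def expo (t : ℝ) : ℝ≥0∞ := (ENNReal.ofReal t)⁻¹

lemma expo_inv_toReal {t : ℝ} (ht : 0 ≤ t) : (expo t)⁻¹.toReal = t := by
  rw [expo, inv_inv, ENNReal.toReal_ofReal ht]

lemma one_le_expo {t : ℝ} (ht : t ≤ 1) : 1 ≤ expo t := by
  rw [expo, ENNReal.one_le_inv]
  exact ENNReal.ofReal_le_one.2 ht

lemma expo_ne_top {t : ℝ} (ht : 0 < t) : expo t ≠ ⊤ := by
  rw [expo, Ne, ENNReal.inv_eq_top, ENNReal.ofReal_eq_zero]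
  linarith

lemma expo_toReal {t : ℝ} (ht : 0 ≤ t) : (expo t).toReal = t⁻¹ := by
  rw [expo, ENNReal.toReal_inv, ENNReal.toReal_ofReal ht]

lemma eq_expo {p : ℝ≥0∞} (hp : 1 ≤ p) : p = expo p⁻¹.toReal := by
  rw [expo, ENNReal.ofReal_toReal, inv_inv]
  simpa using (zero_lt_one.trans_le hp).ne'

lemma inv_toReal_le_one {p : ℝ≥0∞} (hp : 1 ≤ p) : p⁻¹.toReal ≤ 1 := by
  have : p⁻¹ ≤ 1 := ENNReal.inv_le_one.2 hp
  simpa using ENNReal.toReal_mono (by simp) this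

/-! ### Sobolev embedding -/

lemma expo_eq_coe {t : ℝ} (ht : 0 < t) : expo t = ((t⁻¹).toNNReal : NNReal) := by
  rw [expo, ← ENNReal.ofReal_inv_of_pos ht, ENNReal.ofReal]

/-- Sobolev's inequality for compactly supported functions, in terms of reciprocal exponents. -/
lemma sobolev_compact {n : ℕ} (hn : 1 ≤ n) (F : Type*) [NormedAddCommGroup F] [NormedSpace ℝ F]
    [FiniteDimensional ℝ F] {σ : ℝ} (hσ : 1 / (n : ℝ) < σ) (hσ1 : σ ≤ 1) :
    ∃ C : NNReal, ∀ g : EuclideanSpace ℝ (Fin n) → F, ContDiff ℝ 1 g → HasCompactSupport g →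
      eLpNorm g (expo (σ - 1 / n)) volume ≤ C * eLpNorm (fderiv ℝ g) (expo σ) volume := by
  have hn0 : (0 : ℝ) < n := by exact_mod_cast hn
  have hσ0 : 0 < σ := lt_trans (by positivity) hσ
  have hσ' : 0 < σ - 1 / n := by linarith
  refine ⟨SNormLESNormFDerivOfEqConst F (volume : Measure (EuclideanSpace ℝ (Fin n)))
    (σ⁻¹).toNNReal, fun g hg hgc => ?_⟩
  rw [expo_eq_coe hσ', expo_eq_coe hσ0]
  refine eLpNorm_le_eLpNorm_fderiv_of_eq volume hg hgc ?_ ?_ ?_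
  · rw [← NNReal.coe_le_coe, NNReal.coe_one, Real.coe_toNNReal _ (by positivity)]
    exact (one_le_inv₀ hσ0).2 hσ1
  · simpa using (by omega : 0 < n)
  · rw [Real.coe_toNNReal _ (by positivity), NNReal.coe_inv, Real.coe_toNNReal _ (by positivity)]
    simp

/-- Sobolev's inequality for functions which, with their gradient, lie in `L^s`. -/
lemma sobolev_of_finite {n : ℕ} (hn : 1 ≤ n) (F : Type*) [NormedAddCommGroup F] [NormedSpace ℝ F]
    [FiniteDimensional ℝ F] {σ : ℝ} (hσ : 1 / (n : ℝ) < σ) (hσ1 : σ ≤ 1) :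
    ∃ C : NNReal, ∀ g : EuclideanSpace ℝ (Fin n) → F, ContDiff ℝ 1 g →
      eLpNorm g (expo σ) volume < ⊤ →
      eLpNorm g (expo (σ - 1 / n)) volume ≤ C * eLpNorm (fderiv ℝ g) (expo σ) volume := by
  obtain ⟨C, hC⟩ := sobolev_compact hn F hσ hσ1
  refine ⟨C, fun g hg hgs => ?_⟩
  -- cutoffs at scale `m + 1`, whose gradients are of size `O(1 / (m + 1))`
  let χ : ContDiffBump (0 : EuclideanSpace ℝ (Fin n)) := ⟨1, 2, one_pos, one_lt_two⟩
  have hχd : ContDiff ℝ 1 χ := χ.contDiff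
  obtain ⟨K, hK⟩ := (hχd.continuous_fderiv (by norm_num)).bounded_above_of_compact_support
    (χ.hasCompactSupport.fderiv (𝕜 := ℝ))
  have hK0 : 0 ≤ K := (norm_nonneg _).trans (hK 0)
  let c : ℕ → ℝ := fun m => 1 / ((m : ℝ) + 1)
  have hc0 : ∀ m, 0 < c m := fun m => by positivity
  have hclim : Filter.Tendsto c Filter.atTop (nhds 0) := tendsto_one_div_add_atTop_nhds_zero_nat
  let G : ℕ → EuclideanSpace ℝ (Fin n) → F := fun m x => χ (c m • x) • g x
  have hχm : ∀ m, ContDiff ℝ 1 fun x : EuclideanSpace ℝ (Fin n) => χ (c m • x) := fun m =>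
    hχd.comp (contDiff_const_smul _)
  have hG : ∀ m, ContDiff ℝ 1 (G m) := fun m => (hχm m).smul hg
  have hGc : ∀ m, HasCompactSupport (G m) := fun m =>
    (χ.hasCompactSupport.comp_smul (hc0 m).ne').smul_right
  have hder : ∀ m x, ‖fderiv ℝ (G m) x‖ ≤ ‖fderiv ℝ g x‖ + c m * K * ‖g x‖ := by
    intro m x
    have h1 : HasFDerivAt (fun x => c m • x) (c m • ContinuousLinearMap.id ℝ _) x :=
      (hasFDerivAt_id x).const_smul (c m)
    have h2 := ((hχd.differentiable (by norm_num)) (c m • x)).hasFDerivAt.comp x h1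
    have h3 := h2.smul ((hg.differentiable (by norm_num)) x).hasFDerivAt
    have h4 : fderiv ℝ (G m) x = _ := h3.fderiv
    rw [h4]
    refine (norm_add_le _ _).trans (add_le_add ?_ ?_)
    · rw [norm_smul]
      refine mul_le_of_le_one_left (norm_nonneg _) ?_
      rw [Function.comp_apply, Real.norm_of_nonneg χ.nonneg]
      exact χ.le_one
    · refine (ContinuousLinearMap.norm_smulRight_apply _ _).trans_le ?_
      refine mul_le_mul_of_nonneg_right ?_ (norm_nonneg _)
      rw [ContinuousLinearMap.comp_smul, ContinuousLinearMap.comp_id, norm_smul,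
        Real.norm_of_nonneg (hc0 m).le]
      exact mul_le_mul_of_nonneg_left (hK _) (hc0 m).le
  have h1s : 1 ≤ expo σ := one_le_expo hσ1
  have hbd : ∀ m, eLpNorm (G m) (expo (σ - 1 / n)) volume ≤
      C * (eLpNorm (fderiv ℝ g) (expo σ) volume +
        ENNReal.ofReal (c m * K) * eLpNorm g (expo σ) volume) := by
    intro m
    refine (hC (G m) (hG m) (hGc m)).trans (mul_le_mul_right ?_ _)
    have e1 : eLpNorm (fderiv ℝ (G m)) (expo σ) volume ≤
        eLpNorm ((fun x => ‖fderiv ℝ g x‖) + fun x => c m * K * ‖g x‖) (expo σ) volume := by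
      refine eLpNorm_mono fun x => ?_
      refine (hder m x).trans (le_abs_self _)
    refine e1.trans ((eLpNorm_add_le ?_ ?_ h1s).trans ?_)
    · exact (hg.continuous_fderiv (by norm_num)).norm.aestronglyMeasurable
    · exact (hg.continuous.norm.const_mul _).aestronglyMeasurable
    · refine add_le_add (eLpNorm_norm _).le ?_
      refine eLpNorm_le_mul_eLpNorm_of_ae_le_mul (Filter.Eventually.of_forall fun x => ?_) _
      rw [Real.norm_of_nonneg (mul_nonneg (mul_nonneg (hc0 m).le hK0) (norm_nonneg _))]
  have hfat := Lp.eLpNorm_lim_le_liminf_eLpNorm (p := expo (σ - 1 / n)) (μ := volume)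
    (fun m => (hG m).continuous.aestronglyMeasurable) g (Filter.Eventually.of_forall fun x => by
      have : Filter.Tendsto (fun m => c m • x) Filter.atTop (nhds 0) := by
        simpa using hclim.smul_const x
      have h2 : ∀ᶠ y in nhds (0 : EuclideanSpace ℝ (Fin n)), χ y = 1 := χ.eventuallyEq_one
      refine tendsto_const_nhds.congr' ?_
      filter_upwards [this.eventually h2] with m hm
      simp [G, hm])
  refine hfat.trans ?_
  have hlim : Filter.Tendsto (fun m => (C : ℝ≥0∞) * (eLpNorm (fderiv ℝ g) (expo σ) volume +
        ENNReal.ofReal (c m * K) * eLpNorm g (expo σ) volume)) Filter.atTop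
      (nhds (C * (eLpNorm (fderiv ℝ g) (expo σ) volume + 0 * eLpNorm g (expo σ) volume))) := by
    refine ENNReal.Tendsto.const_mul ?_ (Or.inr ENNReal.coe_ne_top)
    refine tendsto_const_nhds.add (ENNReal.Tendsto.mul_const ?_ (Or.inr hgs.ne))
    have := ENNReal.tendsto_ofReal (hclim.mul_const K)
    simpa using this
  have hl := Filter.liminf_le_liminf (f := Filter.atTop) (Filter.Eventually.of_forall hbd)
  rw [hlim.liminf_eq] at hl
  simpa using hl

/-- The increment of `g` along a segment, bounded by the integral of its gradient. -/
lemma norm_sub_translate_le {n : ℕ} {F : Type*} [NormedAddCommGroup F] [NormedSpace ℝ F]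
    [FiniteDimensional ℝ F] {g : EuclideanSpace ℝ (Fin n) → F} (hg : ContDiff ℝ 1 g)
    (x y : EuclideanSpace ℝ (Fin n)) :
    ‖g x - g (x + y)‖ ≤ ‖y‖ * ∫ t in (0 : ℝ)..1, ‖fderiv ℝ g (x + t • y)‖ := by
  have : CompleteSpace F := FiniteDimensional.complete ℝ F
  have hl : Continuous fun t : ℝ => x + t • y := by fun_prop
  have hc : Continuous fun t : ℝ => fderiv ℝ g (x + t • y) :=
    (hg.continuous_fderiv (by norm_num)).comp hl
  have hcy : Continuous fun t : ℝ => fderiv ℝ g (x + t • y) y := hc.clm_apply continuous_const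
  have hd : ∀ t : ℝ, HasDerivAt (fun t : ℝ => g (x + t • y)) (fderiv ℝ g (x + t • y) y) t := by
    intro t
    have h2 : HasDerivAt (fun t : ℝ => x + t • y) y t := by
      simpa using ((hasDerivAt_id t).smul_const y).const_add x
    exact (((hg.differentiable (by norm_num)) _).hasFDerivAt).comp_hasDerivAt t h2
  have h := intervalIntegral.integral_eq_sub_of_hasDerivAt (a := (0 : ℝ)) (b := 1)
    (fun t _ => hd t) (hcy.intervalIntegrable _ _)
  simp only [one_smul, zero_smul, add_zero] at h
  rw [norm_sub_rev, ← h]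
  refine (intervalIntegral.norm_integral_le_integral_norm zero_le_one).trans ?_
  rw [← intervalIntegral.integral_const_mul]
  refine intervalIntegral.integral_mono_on zero_le_one (hcy.norm.intervalIntegrable _ _)
    ((hc.norm.const_mul _).intervalIntegrable _ _) fun t _ => ?_
  rw [mul_comm]
  exact ContinuousLinearMap.le_opNorm _ _

/-- Differences of translates lie in `L^s` whenever the gradient does, regardless of the size of
`g`. -/
lemma eLpNorm_sub_translate_lt_top {n : ℕ} {F : Type*} [NormedAddCommGroup F] [NormedSpace ℝ F]
    [FiniteDimensional ℝ F] {g : EuclideanSpace ℝ (Fin n) → F} (hg : ContDiff ℝ 1 g) {σ : ℝ}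
    (hσ0 : 0 < σ) (hσ1 : σ ≤ 1) (hfin : eLpNorm (fderiv ℝ g) (expo σ) volume < ⊤)
    (y : EuclideanSpace ℝ (Fin n)) :
    eLpNorm (fun x => g x - g (x + y)) (expo σ) volume < ⊤ := by
  have hS1 : 1 ≤ σ⁻¹ := (one_le_inv₀ hσ0).2 hσ1
  have hS0 : 0 < σ⁻¹ := by positivity
  have he0 : expo σ ≠ 0 := (zero_lt_one.trans_le (one_le_expo hσ1)).ne'
  have het := expo_ne_top hσ0
  have heR := expo_toReal hσ0.le
  have hcd := hg.continuous_fderiv (by norm_num)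
  have hD := lintegral_rpow_enorm_lt_top_of_eLpNorm_lt_top he0 het hfin
  rw [eLpNorm_lt_top_iff_lintegral_rpow_enorm_lt_top he0 het, heR]
  rw [heR] at hD
  have hpt : ∀ x, ‖g x - g (x + y)‖ₑ ^ σ⁻¹ ≤
      ENNReal.ofReal (‖y‖ ^ σ⁻¹) * ∫⁻ t in Set.Ioc (0 : ℝ) 1, ‖fderiv ℝ g (x + t • y)‖ₑ ^ σ⁻¹ := by
    intro x
    have hc : Continuous fun t : ℝ => ‖fderiv ℝ g (x + t • y)‖ :=
      (hcd.comp (by fun_prop : Continuous fun t : ℝ => x + t • y)).norm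
    have hcs : Continuous fun t : ℝ => ‖fderiv ℝ g (x + t • y)‖ ^ σ⁻¹ :=
      hc.rpow_const (fun t => Or.inr hS0.le)
    have h1 := interval_holder hc (fun t => norm_nonneg _) hS1 one_pos
    rw [sub_zero, Real.one_rpow, one_mul, inv_inv] at h1
    have h2 := (norm_sub_translate_le hg x y).trans (mul_le_mul_of_nonneg_left h1 (norm_nonneg y))
    have hI : 0 ≤ ∫ t in (0 : ℝ)..1, ‖fderiv ℝ g (x + t • y)‖ ^ σ⁻¹ :=
      intervalIntegral.integral_nonneg zero_le_one fun t _ => by positivity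
    have h3 := Real.rpow_le_rpow (norm_nonneg _) h2 hS0.le
    rw [Real.mul_rpow (norm_nonneg _) (by positivity), Real.rpow_rpow_inv hI hσ0.ne'] at h3
    have e : ∫⁻ t in Set.Ioc (0 : ℝ) 1, ‖fderiv ℝ g (x + t • y)‖ₑ ^ σ⁻¹ =
        ENNReal.ofReal (∫ t in (0 : ℝ)..1, ‖fderiv ℝ g (x + t • y)‖ ^ σ⁻¹) := by
      rw [intervalIntegral.integral_of_le zero_le_one, ofReal_integral_eq_lintegral_ofReal]
      · refine lintegral_congr fun t => ?_
        rw [← ofReal_norm, ENNReal.ofReal_rpow_of_nonneg (norm_nonneg _) hS0.le]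
      · exact (hcs.integrableOn_Icc (a := 0) (b := 1)).mono_set Set.Ioc_subset_Icc_self
      · exact Filter.Eventually.of_forall fun t => by positivity
    rw [e, ← ENNReal.ofReal_mul (by positivity), ← ofReal_norm,
      ENNReal.ofReal_rpow_of_nonneg (norm_nonneg _) hS0.le]
    exact ENNReal.ofReal_le_ofReal h3
  refine (lintegral_mono hpt).trans_lt ?_
  rw [lintegral_const_mul' _ _ ENNReal.ofReal_ne_top]
  refine ENNReal.mul_lt_top ENNReal.ofReal_lt_top ?_
  rw [lintegral_lintegral_swap]
  · have : ∀ t : ℝ, ∫⁻ x, ‖fderiv ℝ g (x + t • y)‖ₑ ^ σ⁻¹ = ∫⁻ x, ‖fderiv ℝ g x‖ₑ ^ σ⁻¹ := fun t =>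
      lintegral_add_right_eq_self (fun x => ‖fderiv ℝ g x‖ₑ ^ σ⁻¹) (t • y)
    simp only [this]
    simpa using hD
  · have : Continuous fun z : EuclideanSpace ℝ (Fin n) × ℝ => fderiv ℝ g (z.1 + z.2 • y) :=
      hcd.comp (by fun_prop)
    exact (this.enorm.measurable.pow_const _).aemeasurable

/-- The mass of a finite measure outside large balls is small. -/
lemma exists_translate_small {n : ℕ} (hn : 1 ≤ n) (ν : Measure (EuclideanSpace ℝ (Fin n)))
    [IsFiniteMeasure ν] (R : ℝ) {ε : ℝ≥0∞} (hε : 0 < ε) :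
    ∃ y : EuclideanSpace ℝ (Fin n), ν (Metric.ball y R) < ε := by
  have h1 : Filter.Tendsto (fun m : ℕ => ν (Metric.closedBall 0 (m : ℝ))ᶜ) Filter.atTop (nhds 0) := by
    have h := tendsto_measure_iInter_atTop (μ := ν)
      (s := fun m : ℕ => (Metric.closedBall (0 : EuclideanSpace ℝ (Fin n)) (m : ℝ))ᶜ)
      (fun m => Metric.isClosed_closedBall.measurableSet.compl.nullMeasurableSet)
      (fun a b hab => Set.compl_subset_compl.2 (Metric.closedBall_subset_closedBall
        (by exact_mod_cast hab)))
      ⟨0, measure_ne_top _ _⟩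
    have h2 : ⋂ m : ℕ, (Metric.closedBall (0 : EuclideanSpace ℝ (Fin n)) (m : ℝ))ᶜ = ∅ := by
      rw [← Set.compl_iUnion, Metric.iUnion_closedBall_nat, Set.compl_univ]
    rwa [h2, measure_empty] at h
  obtain ⟨m, hm⟩ := (h1.eventually (gt_mem_nhds hε)).exists
  have : Nontrivial (EuclideanSpace ℝ (Fin n)) := by
    have : Nonempty (Fin n) := ⟨⟨0, hn⟩⟩
    infer_instance
  obtain ⟨y, hy⟩ := NormedSpace.exists_lt_norm ℝ (EuclideanSpace ℝ (Fin n)) (R + m)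
  refine ⟨y, (measure_mono fun x hx => ?_).trans_lt hm⟩
  rw [Set.mem_compl_iff, Metric.mem_closedBall, dist_zero_right, not_le]
  rw [Metric.mem_ball, dist_eq_norm] at hx
  have := norm_sub_norm_le y x
  rw [norm_sub_rev] at hx
  linarith

/-- A continuous function in some `L^t`, `t < ∞`, has translates tending to `0` almost everywhere. -/
lemma exists_translates_tendsto_zero {n : ℕ} (hn : 1 ≤ n) {F : Type*} [NormedAddCommGroup F]
    {g : EuclideanSpace ℝ (Fin n) → F} (hg : Continuous g) {τ : ℝ} (hτ : 0 < τ) (hτ1 : τ ≤ 1)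
    (hfin : eLpNorm g (expo τ) volume < ⊤) :
    ∃ y : ℕ → EuclideanSpace ℝ (Fin n),
      ∀ᵐ x, Filter.Tendsto (fun i => g (x + y i)) Filter.atTop (nhds 0) := by
  have he0 : expo τ ≠ 0 := (zero_lt_one.trans_le (one_le_expo hτ1)).ne'
  have hD := lintegral_rpow_enorm_lt_top_of_eLpNorm_lt_top he0 (expo_ne_top hτ) hfin
  rw [expo_toReal hτ.le] at hD
  have hm : Measurable fun x => ‖g x‖ₑ ^ τ⁻¹ := hg.enorm.measurable.pow_const _
  have : IsFiniteMeasure (volume.withDensity fun x => ‖g x‖ₑ ^ τ⁻¹) :=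
    isFiniteMeasure_withDensity hD.ne
  -- the `L^t` mass of `g (· + y i)` on the ball of radius `i` is at most `2⁻¹ ^ i`, hence summable
  choose y hy using fun i : ℕ => exists_translate_small hn
    (volume.withDensity fun x => ‖g x‖ₑ ^ τ⁻¹) (i : ℝ) (ε := 2⁻¹ ^ i)
    (ENNReal.pow_pos (by simp) i)
  refine ⟨y, ?_⟩
  have hterm : ∀ i : ℕ, ∫⁻ x, (Metric.ball 0 (i : ℝ)).indicator (fun x => ‖g (x + y i)‖ₑ ^ τ⁻¹) x
      ≤ 2⁻¹ ^ i := by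
    intro i
    refine le_trans (le_of_eq ?_) (hy i).le
    rw [withDensity_apply _ Metric.isOpen_ball.measurableSet,
      ← lintegral_indicator Metric.isOpen_ball.measurableSet,
      ← lintegral_add_right_eq_self ((Metric.ball (y i) (i : ℝ)).indicator fun x => ‖g x‖ₑ ^ τ⁻¹) (y i)]
    refine lintegral_congr fun x => ?_
    simp only [Set.indicator, Metric.mem_ball, dist_eq_norm, sub_zero, add_sub_cancel_right]
  have hmi : ∀ i : ℕ, Measurable
      ((Metric.ball 0 (i : ℝ)).indicator (fun x => ‖g (x + y i)‖ₑ ^ τ⁻¹)) := fun i =>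
    (hm.comp (measurable_add_const (y i))).indicator Metric.isOpen_ball.measurableSet
  have hsum : ∫⁻ x, ∑' i : ℕ, (Metric.ball 0 (i : ℝ)).indicator (fun x => ‖g (x + y i)‖ₑ ^ τ⁻¹) x
      ≠ ⊤ := by
    rw [lintegral_tsum fun i => (hmi i).aemeasurable]
    refine ((ENNReal.tsum_le_tsum hterm).trans_lt ?_).ne
    rw [ENNReal.tsum_geometric]
    simp
  filter_upwards [ae_lt_top (Measurable.tsum hmi) hsum] with x hx
  have h0 := ENNReal.tendsto_atTop_zero_of_tsum_ne_top hx.ne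
  obtain ⟨N, hN⟩ := exists_nat_gt ‖x‖
  have h1 : Filter.Tendsto (fun i => ‖g (x + y i)‖ₑ ^ τ⁻¹) Filter.atTop (nhds 0) := by
    refine h0.congr' ?_
    filter_upwards [Filter.eventually_ge_atTop N] with i hi
    rw [Set.indicator_of_mem]
    rw [mem_ball_zero_iff]
    exact hN.trans_le (by exact_mod_cast hi)
  have h2 := h1.ennrpow_const τ
  simp only [ENNReal.rpow_inv_rpow hτ.ne', ENNReal.zero_rpow_of_pos hτ] at h2
  exact tendsto_zero_iff_enorm_tendsto_zero.2 h2

/-- Sobolev's inequality for functions which decay at infinity in the weak sense of lying in some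
`L^t` with `t < ∞`. Applied to the differences `g - g (· + y i)`, which lie in `L^s` whenever the
gradient does, the estimate passes to the limit along translates tending to zero. -/
lemma sobolev_of_decay {n : ℕ} (hn : 1 ≤ n) (F : Type*) [NormedAddCommGroup F] [NormedSpace ℝ F]
    [FiniteDimensional ℝ F] {σ : ℝ} (hσ : 1 / (n : ℝ) < σ) (hσ1 : σ ≤ 1) :
    ∃ C : NNReal, ∀ g : EuclideanSpace ℝ (Fin n) → F, ContDiff ℝ 1 g →
      eLpNorm (fderiv ℝ g) (expo σ) volume < ⊤ →
      ∀ τ : ℝ, 0 < τ → τ ≤ 1 → eLpNorm g (expo τ) volume < ⊤ →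
      eLpNorm g (expo (σ - 1 / n)) volume ≤ C * eLpNorm (fderiv ℝ g) (expo σ) volume := by
  obtain ⟨C, hC⟩ := sobolev_of_finite hn F hσ hσ1
  have hσ0 : 0 < σ := lt_trans (by positivity) hσ
  refine ⟨C * 2, fun g hg hfin τ hτ hτ1 hgt => ?_⟩
  obtain ⟨y, hy⟩ := exists_translates_tendsto_zero hn hg.continuous hτ hτ1 hgt
  have hgy : ∀ i, ContDiff ℝ 1 fun x => g (x + y i) := fun i => hg.comp (by fun_prop)
  have hw : ∀ i, ContDiff ℝ 1 fun x => g x - g (x + y i) := fun i => hg.sub (hgy i)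
  have hfy : ∀ i, eLpNorm (fun x => fderiv ℝ g (x + y i)) (expo σ) volume =
      eLpNorm (fderiv ℝ g) (expo σ) volume := fun i =>
    eLpNorm_comp_measurePreserving (hg.continuous_fderiv (by norm_num)).aestronglyMeasurable
      (measurePreserving_add_right volume (y i))
  have hbd : ∀ i, eLpNorm (fun x => g x - g (x + y i)) (expo (σ - 1 / n)) volume ≤
      C * (2 * eLpNorm (fderiv ℝ g) (expo σ) volume) := by
    intro i
    refine (hC _ (hw i) (eLpNorm_sub_translate_lt_top hg hσ0 hσ1 hfin (y i))).trans
      (mul_le_mul_right ?_ _)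
    have e : fderiv ℝ (fun x => g x - g (x + y i)) =
        fderiv ℝ g - fun x => fderiv ℝ g (x + y i) := by
      funext x
      have h1 : DifferentiableAt ℝ g x := (hg.differentiable (by norm_num)) x
      have h2 : DifferentiableAt ℝ (fun x => g (x + y i)) x :=
        ((hgy i).differentiable (by norm_num)) x
      rw [fderiv_fun_sub h1 h2, fderiv_comp_add_right]
      rfl
    rw [e, two_mul]
    refine (eLpNorm_sub_le ?_ ?_ (one_le_expo hσ1)).trans (by rw [hfy i])
    · exact (hg.continuous_fderiv (by norm_num)).aestronglyMeasurable
    · exact ((hg.continuous_fderiv (by norm_num)).comp (by fun_prop)).aestronglyMeasurable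
  have hfat := Lp.eLpNorm_lim_le_liminf_eLpNorm (p := expo (σ - 1 / n)) (μ := volume)
    (fun i => (hw i).continuous.aestronglyMeasurable) g (by
      filter_upwards [hy] with x hx
      simpa using (tendsto_const_nhds (x := g x)).sub hx)
  refine hfat.trans ?_
  have hl := Filter.liminf_le_liminf (f := Filter.atTop) (Filter.Eventually.of_forall hbd)
  rw [Filter.liminf_const] at hl
  refine hl.trans_eq ?_
  push_cast
  ring

lemma finiteDimensional_forms (n m : ℕ) :
    FiniteDimensional ℝ (ContinuousMultilinearMap ℝ (fun _ : Fin m => EuclideanSpace ℝ (Fin n)) ℝ) :=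
  Module.Finite.of_injective (ContinuousMultilinearMap.toMultilinearMapLinear (R' := ℝ) (A := ℝ)
    (M₁ := fun _ : Fin m => EuclideanSpace ℝ (Fin n)) (M₂ := ℝ))
    ContinuousMultilinearMap.toMultilinearMap_injective

/-- The endpoint inequality gives finiteness of every intermediate derivative. -/
lemma intermediate_lt_top {n : ℕ} {m k : ℕ} (hm : 1 ≤ m) (hmk : m < k) {q r : ℝ≥0∞}
    (hq : 1 ≤ q) (hr : 1 ≤ r) {u : EuclideanSpace ℝ (Fin n) → ℝ} (hu : ContDiff ℝ (⊤ : ℕ∞) u)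
    (h1 : eLpNorm (iteratedFDeriv ℝ k u) r volume < ⊤) (h2 : eLpNorm u q volume < ⊤) :
    (m / k : ℝ) * r⁻¹.toReal + (1 - m / k) * q⁻¹.toReal ≤ 1 ∧
    eLpNorm (iteratedFDeriv ℝ m u)
      (expo ((m / k : ℝ) * r⁻¹.toReal + (1 - m / k) * q⁻¹.toReal)) volume < ⊤ := by
  have hk0 : (0 : ℝ) < k := by exact_mod_cast (by omega : 0 < k)
  have ha1 : (m / k : ℝ) ≤ 1 := (div_le_one hk0).2 (by exact_mod_cast hmk.le)
  have ha0 : (0 : ℝ) ≤ m / k := by positivity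
  have hτ1 : (m / k : ℝ) * r⁻¹.toReal + (1 - m / k) * q⁻¹.toReal ≤ 1 := by
    nlinarith [inv_toReal_le_one hr, inv_toReal_le_one hq, ENNReal.toReal_nonneg (a := r⁻¹),
      ENNReal.toReal_nonneg (a := q⁻¹)]
  have hτ0 : 0 ≤ (m / k : ℝ) * r⁻¹.toReal + (1 - m / k) * q⁻¹.toReal :=
    add_nonneg (mul_nonneg ha0 ENNReal.toReal_nonneg)
      (mul_nonneg (by linarith) ENNReal.toReal_nonneg)
  obtain ⟨C, -, hC⟩ := endpoint_inequality (n := n) m k hm hmk (one_le_expo hτ1) hq hr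
    (expo_inv_toReal hτ0)
  refine ⟨hτ1, (hC u hu h1 h2).trans_lt ?_⟩
  exact ENNReal.mul_lt_top (ENNReal.mul_lt_top ENNReal.ofReal_lt_top
    (ENNReal.rpow_lt_top_of_nonneg ha0 h1.ne)) (ENNReal.rpow_lt_top_of_nonneg (by linarith) h2.ne)

lemma eLpNorm_fderiv_iteratedFDeriv {n : ℕ} (u : EuclideanSpace ℝ (Fin n) → ℝ) (m : ℕ)
    (p : ℝ≥0∞) : eLpNorm (fderiv ℝ (iteratedFDeriv ℝ m u)) p volume =
      eLpNorm (iteratedFDeriv ℝ (m + 1) u) p volume := by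
  have h (x) := norm_fderiv_iteratedFDeriv (𝕜 := ℝ) (f := u) (n := m) (x := x)
  rw [← eLpNorm_norm (fderiv ℝ (iteratedFDeriv ℝ m u)),
    ← eLpNorm_norm (iteratedFDeriv ℝ (m + 1) u)]
  simp only [h]

/-- Iterated Sobolev embedding: `1 / r - d / n` is the reciprocal of the `d`-th conjugate of `r`. -/
lemma sobolev_iterated {n : ℕ} (hn : 1 ≤ n) (k : ℕ) {q r : ℝ≥0∞} (hq : 1 ≤ q) (hr : 1 ≤ r)
    (d : ℕ) : ∀ m : ℕ, 1 ≤ m → m + d = k → (d : ℝ) / n < r⁻¹.toReal →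
    ∃ C : NNReal, ∀ u : EuclideanSpace ℝ (Fin n) → ℝ, ContDiff ℝ (⊤ : ℕ∞) u →
      eLpNorm (iteratedFDeriv ℝ k u) r volume < ⊤ → eLpNorm u q volume < ⊤ →
      eLpNorm (iteratedFDeriv ℝ m u) (expo (r⁻¹.toReal - d / n)) volume ≤
        C * eLpNorm (iteratedFDeriv ℝ k u) r volume := by
  have hn0 : (0 : ℝ) < n := by exact_mod_cast hn
  induction d with
  | zero =>
    rintro m hm rfl -
    refine ⟨1, fun u hu _ _ => ?_⟩
    simp only [Nat.cast_zero, zero_div, sub_zero, ← eq_expo hr, ENNReal.coe_one, one_mul]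
    exact le_rfl
  | succ d ih =>
    intro m hm hmk hd
    have hd' : (d : ℝ) / n + 1 / n < r⁻¹.toReal := by
      rw [← add_div]; exact_mod_cast hd
    have h1n : 0 < 1 / (n : ℝ) := by positivity
    obtain ⟨C₁, hC₁⟩ := ih (m + 1) (by omega) (by omega) (by linarith)
    have := finiteDimensional_forms n m
    have hdn : 0 ≤ (d : ℝ) / n := by positivity
    obtain ⟨C₂, hC₂⟩ := sobolev_of_decay hn
      (ContinuousMultilinearMap ℝ (fun _ : Fin m => EuclideanSpace ℝ (Fin n)) ℝ)
      (σ := r⁻¹.toReal - d / n) (by linarith) (by linarith [inv_toReal_le_one hr])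
    refine ⟨C₂ * C₁, fun u hu h1 h2 => ?_⟩
    have hfd : eLpNorm (fderiv ℝ (iteratedFDeriv ℝ m u)) (expo (r⁻¹.toReal - d / n)) volume =
        eLpNorm (iteratedFDeriv ℝ (m + 1) u) (expo (r⁻¹.toReal - d / n)) volume :=
      eLpNorm_fderiv_iteratedFDeriv u m _
    have hsm : ContDiff ℝ 1 (iteratedFDeriv ℝ m u) :=
      hu.iteratedFDeriv_right (m := 1) (by exact_mod_cast le_top)
    obtain ⟨hτ1, hτ⟩ := intermediate_lt_top hm (by omega : m < k) hq hr hu h1 h2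
    have hk0 : (0 : ℝ) < k := by exact_mod_cast (by omega : 0 < k)
    have hm0 : (0 : ℝ) < m := by exact_mod_cast hm
    have hmk1 : (m / k : ℝ) ≤ 1 := (div_le_one hk0).2 (by exact_mod_cast (by omega : m ≤ k))
    have hb := hC₁ u hu h1 h2
    have hs := hC₂ (iteratedFDeriv ℝ m u) hsm
      (by rw [hfd]; exact hb.trans_lt (ENNReal.mul_lt_top ENNReal.coe_lt_top h1)) _
      (add_pos_of_pos_of_nonneg (mul_pos (by positivity) (by linarith))
        (mul_nonneg (by linarith) ENNReal.toReal_nonneg)) hτ1 hτ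
    rw [hfd] at hs
    have e : r⁻¹.toReal - ((d + 1 : ℕ) : ℝ) / n = r⁻¹.toReal - d / n - 1 / n := by
      push_cast; ring
    rw [e, ENNReal.coe_mul, mul_assoc]
    exact hs.trans (mul_le_mul_right hb _)

/-! ### Morrey's estimate and supremum bounds -/

/-- Scaling of the Lebesgue norm under `z ↦ x + s z`; the formula includes `τ = 0`, that is,
exponent `∞`. -/
lemma eLpNorm_comp_dilation {n : ℕ} {G : Type*} [NormedAddCommGroup G]
    {h : EuclideanSpace ℝ (Fin n) → G} (hh : Continuous h) (x : EuclideanSpace ℝ (Fin n))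
    {s : ℝ} (hs : 0 < s) {τ : ℝ} (hτ : 0 ≤ τ) :
    eLpNorm (fun z => h (x + s • z)) (expo τ) volume =
      ENNReal.ofReal (s ^ (-(n * τ))) * eLpNorm h (expo τ) volume := by
  have h1 : Continuous fun w => h (x + w) := hh.comp (by fun_prop)
  have h2 : eLpNorm (fun w => h (x + w)) (expo τ) volume = eLpNorm h (expo τ) volume :=
    eLpNorm_comp_measurePreserving hh.aestronglyMeasurable (measurePreserving_add_left volume x)
  have h3 := eLpNorm_map_measure (p := expo τ) (μ := volume) (f := fun z => s • z)
    (g := fun w => h (x + w)) h1.aestronglyMeasurable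
    (measurable_const_smul s).aemeasurable
  rw [Measure.map_addHaar_smul volume hs.ne', finrank_euclideanSpace_fin,
    eLpNorm_smul_measure_of_ne_zero (by
      rw [abs_of_pos (by positivity)]
      exact (ENNReal.ofReal_pos.2 (by positivity)).ne'), h2] at h3
  refine h3.symm.trans ?_
  rw [one_div, expo_inv_toReal hτ, smul_eq_mul, abs_of_pos (by positivity),
    ENNReal.ofReal_rpow_of_pos (by positivity), ← Real.rpow_natCast, ← Real.rpow_neg hs.le,
    ← Real.rpow_mul hs.le, neg_mul]

lemma lintegral_ball_dilation_le {n : ℕ} {G : Type*} [NormedAddCommGroup G]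
    {h : EuclideanSpace ℝ (Fin n) → G} (hh : Continuous h) (x : EuclideanSpace ℝ (Fin n))
    {s : ℝ} (hs : 0 < s) {τ : ℝ} (hτ : 0 ≤ τ) (hτ1 : τ ≤ 1) :
    ∫⁻ z in Metric.ball 0 1, ‖h (x + s • z)‖ₑ ≤
      ENNReal.ofReal (s ^ (-(n * τ))) * eLpNorm h (expo τ) volume *
        volume (Metric.ball (0 : EuclideanSpace ℝ (Fin n)) 1) ^ (1 - τ) := by
  have hc : Continuous fun z => h (x + s • z) := hh.comp (by fun_prop)
  have h1 := eLpNorm_le_eLpNorm_mul_rpow_measure_univ (one_le_expo hτ1)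
    (hc.aestronglyMeasurable (μ := volume.restrict (Metric.ball 0 1)))
  rw [eLpNorm_one_eq_lintegral_enorm, Measure.restrict_apply_univ, expo_toReal hτ, one_div,
    one_div, inv_inv, ENNReal.toReal_one, inv_one] at h1
  refine h1.trans (mul_le_mul_left ?_ _)
  rw [← eLpNorm_comp_dilation hh x hs hτ]
  exact eLpNorm_restrict_le _ _ _ _

/-- Morrey-type estimate: a value of `g` is bounded by its mean over the ball of radius `L` around
the point and the mean oscillation, which the gradient controls because `n σ < 1`. -/
lemma morrey {n : ℕ} (F : Type*) [NormedAddCommGroup F] [NormedSpace ℝ F]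
    [FiniteDimensional ℝ F] {σ τ : ℝ} (hσ : 0 ≤ σ) (hσ1 : σ ≤ 1) (hnσ : n * σ < 1) (hτ : 0 ≤ τ)
    (hτ1 : τ ≤ 1) :
    ∃ C : NNReal, ∀ g : EuclideanSpace ℝ (Fin n) → F, ContDiff ℝ 1 g →
      ∀ (x : EuclideanSpace ℝ (Fin n)) (L : ℝ), 0 < L →
      ‖g x‖ₑ ≤ C * (ENNReal.ofReal (L ^ (-(n * τ))) * eLpNorm g (expo τ) volume +
        ENNReal.ofReal (L ^ (1 - n * σ)) * eLpNorm (fderiv ℝ g) (expo σ) volume) := by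
  set V := volume (Metric.ball (0 : EuclideanSpace ℝ (Fin n)) 1) with hV
  have hV0 : V ≠ 0 := (Metric.measure_ball_pos volume 0 one_pos).ne'
  have hVt : V ≠ ⊤ := measure_ball_lt_top.ne
  set K := ∫⁻ t in Set.Ioc (0 : ℝ) 1, ENNReal.ofReal (t ^ (-(n * σ))) with hK
  have hKt : K ≠ ⊤ := by
    have h1 := (intervalIntegral.intervalIntegrable_rpow' (a := 0) (b := 1)
      (r := -(n * σ)) (by linarith)).1
    have h2 := h1.2
    refine ((lintegral_mono fun t => ?_).trans_lt h2).ne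
    exact Real.ofReal_le_enorm _
  have hCt : V⁻¹ * (V ^ (1 - τ) + V ^ (1 - σ) * K) ≠ ⊤ := by
    refine ENNReal.mul_ne_top (ENNReal.inv_ne_top.2 hV0) (ENNReal.add_ne_top.2 ⟨?_, ?_⟩)
    · exact ENNReal.rpow_ne_top_of_nonneg (by linarith) hVt
    · exact ENNReal.mul_ne_top (ENNReal.rpow_ne_top_of_nonneg (by linarith) hVt) hKt
  refine ⟨(V⁻¹ * (V ^ (1 - τ) + V ^ (1 - σ) * K)).toNNReal, fun g hg x L hL => ?_⟩
  rw [ENNReal.coe_toNNReal hCt]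
  have hcd := hg.continuous_fderiv (by norm_num)
  have hpt : ∀ z ∈ Metric.ball (0 : EuclideanSpace ℝ (Fin n)) 1, ‖g x‖ₑ ≤ ‖g (x + L • z)‖ₑ +
      ENNReal.ofReal L * ∫⁻ t in Set.Ioc (0 : ℝ) 1, ‖fderiv ℝ g (x + (t * L) • z)‖ₑ := by
    intro z hz
    rw [mem_ball_zero_iff] at hz
    have hc : Continuous fun t : ℝ => ‖fderiv ℝ g (x + t • L • z)‖ :=
      (hcd.comp (by fun_prop : Continuous fun t : ℝ => x + t • L • z)).norm
    have hI : 0 ≤ ∫ t in (0 : ℝ)..1, ‖fderiv ℝ g (x + t • L • z)‖ :=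
      intervalIntegral.integral_nonneg zero_le_one fun t _ => norm_nonneg _
    have h1 := norm_sub_translate_le hg x (L • z)
    have h2 : ‖L • z‖ ≤ L := by
      rw [norm_smul, Real.norm_of_nonneg hL.le]
      exact mul_le_of_le_one_right hL.le hz.le
    have h3 : ‖g x‖ ≤ ‖g (x + L • z)‖ + L * ∫ t in (0 : ℝ)..1, ‖fderiv ℝ g (x + t • L • z)‖ := by
      have := norm_sub_norm_le (g x) (g (x + L • z))
      have := mul_le_mul_of_nonneg_right h2 hI
      linarith
    have e : ∫⁻ t in Set.Ioc (0 : ℝ) 1, ‖fderiv ℝ g (x + (t * L) • z)‖ₑ =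
        ENNReal.ofReal (∫ t in (0 : ℝ)..1, ‖fderiv ℝ g (x + t • L • z)‖) := by
      rw [intervalIntegral.integral_of_le zero_le_one, ofReal_integral_eq_lintegral_ofReal]
      · refine lintegral_congr fun t => ?_
        rw [← ofReal_norm, mul_smul]
      · exact (hc.integrableOn_Icc (a := 0) (b := 1)).mono_set Set.Ioc_subset_Icc_self
      · exact Filter.Eventually.of_forall fun t => norm_nonneg _
    rw [e, ← ENNReal.ofReal_mul hL.le, ← ofReal_norm, ← ofReal_norm,
      ← ENNReal.ofReal_add (norm_nonneg _) (by positivity)]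
    exact ENNReal.ofReal_le_ofReal h3
  have hmain : V * ‖g x‖ₑ ≤ ENNReal.ofReal (L ^ (-(n * τ))) * eLpNorm g (expo τ) volume *
      V ^ (1 - τ) + ENNReal.ofReal L * (ENNReal.ofReal (L ^ (-(n * σ))) *
        eLpNorm (fderiv ℝ g) (expo σ) volume * V ^ (1 - σ) * K) := by
    have h1 : V * ‖g x‖ₑ = ∫⁻ _ in Metric.ball (0 : EuclideanSpace ℝ (Fin n)) 1, ‖g x‖ₑ := by
      rw [setLIntegral_const, mul_comm]
    rw [h1]
    refine (setLIntegral_mono' Metric.isOpen_ball.measurableSet hpt).trans ?_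
    have hcg : Continuous fun z => g (x + L • z) := hg.continuous.comp (by fun_prop)
    rw [lintegral_add_left hcg.enorm.measurable, lintegral_const_mul' _ _ ENNReal.ofReal_ne_top]
    refine add_le_add (lintegral_ball_dilation_le hg.continuous x hL hτ hτ1)
      (mul_le_mul_right ?_ _)
    rw [lintegral_lintegral_swap]
    · have hb : ∀ t ∈ Set.Ioc (0 : ℝ) 1,
          ∫⁻ z in Metric.ball (0 : EuclideanSpace ℝ (Fin n)) 1, ‖fderiv ℝ g (x + (t * L) • z)‖ₑ ≤
          (ENNReal.ofReal (L ^ (-(n * σ))) * eLpNorm (fderiv ℝ g) (expo σ) volume * V ^ (1 - σ)) *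
            ENNReal.ofReal (t ^ (-(n * σ))) := by
        intro t ht
        refine (lintegral_ball_dilation_le hcd x (mul_pos ht.1 hL) hσ hσ1).trans_eq ?_
        rw [Real.mul_rpow ht.1.le hL.le, ENNReal.ofReal_mul (Real.rpow_nonneg ht.1.le _)]
        ring
      refine (setLIntegral_mono' measurableSet_Ioc hb).trans_eq ?_
      rw [lintegral_const_mul _ (by fun_prop)]
    · have : Continuous fun z : EuclideanSpace ℝ (Fin n) × ℝ =>
          fderiv ℝ g (x + (z.2 * L) • z.1) := hcd.comp (by fun_prop)
      exact this.enorm.measurable.aemeasurable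
  have hL1 : ENNReal.ofReal L * ENNReal.ofReal (L ^ (-(n * σ))) =
      ENNReal.ofReal (L ^ (1 - n * σ)) := by
    rw [← ENNReal.ofReal_mul hL.le, sub_eq_add_neg, Real.rpow_add hL, Real.rpow_one]
  calc ‖g x‖ₑ = V⁻¹ * (V * ‖g x‖ₑ) := by
        rw [← mul_assoc, ENNReal.inv_mul_cancel hV0 hVt, one_mul]
    _ ≤ V⁻¹ * (V ^ (1 - τ) * (ENNReal.ofReal (L ^ (-(n * τ))) * eLpNorm g (expo τ) volume) +
          V ^ (1 - σ) * K * (ENNReal.ofReal (L ^ (1 - n * σ)) *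
            eLpNorm (fderiv ℝ g) (expo σ) volume)) := by
        refine mul_le_mul_right (hmain.trans_eq ?_) _
        rw [← hL1]
        ring
    _ ≤ _ := by
        rw [mul_assoc V⁻¹ (V ^ (1 - τ) + V ^ (1 - σ) * K)]
        refine mul_le_mul_right ?_ V⁻¹
        rw [mul_add]
        gcongr
        · exact le_self_add
        · exact le_add_self

/-- Two positive finite quantities determine a length scale `L`, through which their geometric
means become powers of `L`. -/
lemma exists_length_scale {A B : ℝ≥0∞} (hA0 : A ≠ 0) (hA : A ≠ ⊤) (hB0 : B ≠ 0) (hB : B ≠ ⊤)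
    {D : ℝ} (hD : 0 < D) :
    ∃ a L : ℝ, 0 < a ∧ 0 < L ∧
      ∀ θ : ℝ, A ^ θ * B ^ (1 - θ) = ENNReal.ofReal (a * L ^ (D * (1 - θ))) := by
  have ha : 0 < A.toReal := ENNReal.toReal_pos hA0 hA
  have hb : 0 < B.toReal := ENNReal.toReal_pos hB0 hB
  refine ⟨A.toReal, (B.toReal / A.toReal) ^ D⁻¹, ha, by positivity, fun θ => ?_⟩
  have hba : 0 < B.toReal / A.toReal := by positivity
  rw [← Real.rpow_mul hba.le, ← mul_assoc, inv_mul_cancel₀ hD.ne', one_mul]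
  nth_rewrite 1 [← ENNReal.ofReal_toReal hA, ← ENNReal.ofReal_toReal hB]
  rw [ENNReal.ofReal_rpow_of_pos ha, ENNReal.ofReal_rpow_of_pos hb,
    ← ENNReal.ofReal_mul (by positivity)]
  congr 1
  rw [Real.div_rpow hb.le ha.le, Real.rpow_sub ha, Real.rpow_one]
  have := (Real.rpow_pos_of_pos ha θ).ne'
  field_simp

/-- If either norm on the right-hand side vanishes, so does every derivative of intermediate order.
-/
lemma iteratedFDeriv_eq_zero_of_endpoint {n : ℕ} {m k : ℕ} (hm : 1 ≤ m) (hmk : m < k)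
    {q r : ℝ≥0∞} (hq : 1 ≤ q) (hr : 1 ≤ r) {u : EuclideanSpace ℝ (Fin n) → ℝ}
    (hu : ContDiff ℝ (⊤ : ℕ∞) u)
    (h1 : eLpNorm (iteratedFDeriv ℝ k u) r volume < ⊤) (h2 : eLpNorm u q volume < ⊤)
    (h0 : eLpNorm (iteratedFDeriv ℝ k u) r volume = 0 ∨ eLpNorm u q volume = 0) :
    iteratedFDeriv ℝ m u = 0 := by
  have hk0 : (0 : ℝ) < k := by exact_mod_cast (by omega : 0 < k)
  have hm0 : (0 : ℝ) < m := by exact_mod_cast hm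
  have ha1 : (m / k : ℝ) < 1 := (div_lt_one hk0).2 (by exact_mod_cast hmk)
  have ha0 : (0 : ℝ) < m / k := by positivity
  obtain ⟨hτ1, -⟩ := intermediate_lt_top hm hmk hq hr hu h1 h2
  have hτ0 : 0 ≤ (m / k : ℝ) * r⁻¹.toReal + (1 - m / k) * q⁻¹.toReal :=
    add_nonneg (mul_nonneg ha0.le ENNReal.toReal_nonneg)
      (mul_nonneg (by linarith) ENNReal.toReal_nonneg)
  obtain ⟨C, -, hC⟩ := endpoint_inequality (n := n) m k hm hmk (one_le_expo hτ1) hq hr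
    (expo_inv_toReal hτ0)
  have h := hC u hu h1 h2
  have hz : ENNReal.ofReal C * (eLpNorm (iteratedFDeriv ℝ k u) r volume) ^ (m / k : ℝ) *
      (eLpNorm u q volume) ^ (1 - m / k : ℝ) = 0 := by
    rcases h0 with h0 | h0
    · rw [h0, ENNReal.zero_rpow_of_pos ha0, mul_zero, zero_mul]
    · rw [h0, ENNReal.zero_rpow_of_pos (by linarith), mul_zero]
  rw [hz, nonpos_iff_eq_zero] at h
  have hcont := hu.continuous_iteratedFDeriv (m := m) (by exact_mod_cast le_top)
  rw [eLpNorm_eq_zero_iff hcont.aestronglyMeasurable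
    (zero_lt_one.trans_le (one_le_expo hτ1)).ne'] at h
  exact (hcont.ae_eq_iff_eq volume continuous_zero).1 h

/-- An `L^(1/σ)` bound on the derivative of order `m + 1`, with `n σ < 1`, yields a supremum bound
on the derivative of order `m`; both are homogeneous in the length scale. -/
lemma sup_bound_step {n : ℕ} {m k : ℕ} (hm : 1 ≤ m) (hmk : m < k)
    {q r : ℝ≥0∞} (hq : 1 ≤ q) (hr : 1 ≤ r) {D : ℝ} (hD : 0 < D)
    (hDe : D = k - n * r⁻¹.toReal + n * q⁻¹.toReal) {σ η : ℝ} (hσ : 0 ≤ σ) (hσ1 : σ ≤ 1)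
    (hnσ : n * σ < 1) (hη : D * (1 - η) + (1 - n * σ) = k - n * r⁻¹.toReal - m)
    (H : ∃ C : NNReal, ∀ u : EuclideanSpace ℝ (Fin n) → ℝ, ContDiff ℝ (⊤ : ℕ∞) u →
      eLpNorm (iteratedFDeriv ℝ k u) r volume < ⊤ → eLpNorm u q volume < ⊤ →
      eLpNorm (iteratedFDeriv ℝ (m + 1) u) (expo σ) volume ≤
        C * ((eLpNorm (iteratedFDeriv ℝ k u) r volume) ^ η * (eLpNorm u q volume) ^ (1 - η))) :
    ∃ C : NNReal, ∀ u : EuclideanSpace ℝ (Fin n) → ℝ, ContDiff ℝ (⊤ : ℕ∞) u →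
      eLpNorm (iteratedFDeriv ℝ k u) r volume < ⊤ → eLpNorm u q volume < ⊤ →
      eLpNorm (iteratedFDeriv ℝ m u) (expo 0) volume ≤
        C * ((eLpNorm (iteratedFDeriv ℝ k u) r volume) ^ ((m + n * q⁻¹.toReal) / D) *
          (eLpNorm u q volume) ^ (1 - (m + n * q⁻¹.toReal) / D)) := by
  obtain ⟨C₁, hC₁⟩ := H
  have hk0 : (0 : ℝ) < k := by exact_mod_cast (by omega : 0 < k)
  have ha1 : (m / k : ℝ) ≤ 1 := (div_le_one hk0).2 (by exact_mod_cast hmk.le)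
  have ha0 : (0 : ℝ) ≤ m / k := by positivity
  set τ : ℝ := (m / k : ℝ) * r⁻¹.toReal + (1 - m / k) * q⁻¹.toReal with hτ
  have hτ1 : τ ≤ 1 := by
    nlinarith [inv_toReal_le_one hr, inv_toReal_le_one hq, ENNReal.toReal_nonneg (a := r⁻¹),
      ENNReal.toReal_nonneg (a := q⁻¹)]
  have hτ0 : 0 ≤ τ := add_nonneg (mul_nonneg ha0 ENNReal.toReal_nonneg)
      (mul_nonneg (by linarith) ENNReal.toReal_nonneg)
  obtain ⟨C₀, hC₀0, hC₀⟩ := endpoint_inequality (n := n) m k hm hmk (one_le_expo hτ1) hq hr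
    (expo_inv_toReal hτ0)
  have := finiteDimensional_forms n m
  obtain ⟨C₂, hC₂⟩ := morrey (n := n)
    (ContinuousMultilinearMap ℝ (fun _ : Fin m => EuclideanSpace ℝ (Fin n)) ℝ) hσ hσ1 hnσ hτ0 hτ1
  refine ⟨C₂ * (C₀.toNNReal + C₁), fun u hu h1 h2 => ?_⟩
  by_cases h0 : eLpNorm (iteratedFDeriv ℝ k u) r volume = 0 ∨ eLpNorm u q volume = 0
  · rw [iteratedFDeriv_eq_zero_of_endpoint hm hmk hq hr hu h1 h2 h0, eLpNorm_zero]
    exact zero_le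
  push Not at h0
  obtain ⟨a, L, ha, hL, hscale⟩ := exists_length_scale h0.1 h1.ne h0.2 h2.ne hD
  have hsm : ContDiff ℝ 1 (iteratedFDeriv ℝ m u) :=
    hu.iteratedFDeriv_right (m := 1) (by exact_mod_cast le_top)
  have e0 : expo 0 = ⊤ := by simp [expo]
  rw [e0, eLpNorm_exponent_top]
  refine eLpNormEssSup_le_of_ae_enorm_bound (Filter.Eventually.of_forall fun x => ?_)
  refine (hC₂ _ hsm x L hL).trans ?_
  rw [eLpNorm_fderiv_iteratedFDeriv]
  have hb0 := hC₀ u hu h1 h2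
  have hb1 := hC₁ u hu h1 h2
  rw [mul_assoc, hscale] at hb0
  rw [hscale] at hb1
  have eθ : D * (1 - (m + n * q⁻¹.toReal) / D) = k - n * r⁻¹.toReal - m := by
    rw [mul_sub, mul_div_cancel₀ _ hD.ne', hDe]; ring
  rw [hscale, eθ]
  push_cast
  rw [mul_assoc, add_mul]
  refine mul_le_mul_right (add_le_add ?_ ?_) _
  · refine (mul_le_mul_right hb0 _).trans_eq ?_
    rw [mul_left_comm, ← ENNReal.ofReal_mul (by positivity), mul_left_comm, ← Real.rpow_add hL]
    have : -(n * τ) + D * (1 - m / k) = k - n * r⁻¹.toReal - m := by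
      rw [hτ, hDe]; field_simp; ring
    rw [this, ENNReal.ofReal]
  · refine (mul_le_mul_right hb1 _).trans_eq ?_
    rw [mul_left_comm, ← ENNReal.ofReal_mul (by positivity), mul_left_comm, ← Real.rpow_add hL,
      add_comm, hη]

/-- Supremum bound for the derivative of order `j` when `n / r < k - j`. Since `n / r` is not an
integer unless it vanishes, iterated Sobolev embedding brings some derivative into `L^s` with
`s > n`; the step above then descends to order `j`. -/
lemma sup_bound {n : ℕ} (hn : 1 ≤ n) {j k : ℕ} (hj : 1 ≤ j)
    {q r : ℝ≥0∞} (hq : 1 ≤ q) (hr : 1 ≤ r) (hlt : n * r⁻¹.toReal < k - j)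
    (hcrit : ∀ i : ℕ, 1 ≤ i → i ≤ k - j → (n : ℝ) * r⁻¹.toReal ≠ (i : ℝ)) {D : ℝ}
    (hDe : D = k - n * r⁻¹.toReal + n * q⁻¹.toReal) :
    ∃ C : NNReal, ∀ u : EuclideanSpace ℝ (Fin n) → ℝ, ContDiff ℝ (⊤ : ℕ∞) u →
      eLpNorm (iteratedFDeriv ℝ k u) r volume < ⊤ → eLpNorm u q volume < ⊤ →
      eLpNorm (iteratedFDeriv ℝ j u) (expo 0) volume ≤
        C * ((eLpNorm (iteratedFDeriv ℝ k u) r volume) ^ ((j + n * q⁻¹.toReal) / D) *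
          (eLpNorm u q volume) ^ (1 - (j + n * q⁻¹.toReal) / D)) := by
  have hn0 : (0 : ℝ) < n := by exact_mod_cast hn
  have hρ0 : 0 ≤ r⁻¹.toReal := ENNReal.toReal_nonneg
  have hs0 : 0 ≤ q⁻¹.toReal := ENNReal.toReal_nonneg
  have hD : 0 < D := by
    have : (0 : ℝ) ≤ j := by positivity
    have := mul_nonneg hn0.le hs0
    rw [hDe]; linarith
  obtain ⟨d, hd⟩ : ∃ d, d = ⌊(n : ℝ) * r⁻¹.toReal⌋₊ := ⟨_, rfl⟩
  have hd1 : (d : ℝ) ≤ n * r⁻¹.toReal := hd ▸ Nat.floor_le (by positivity)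
  have hd2 : n * r⁻¹.toReal < d + 1 := hd ▸ Nat.lt_floor_add_one _
  have hdk : d + j < k := by
    have : (d : ℝ) + j < k := by linarith
    exact_mod_cast this
  have hstart : ∃ C : NNReal, ∀ u : EuclideanSpace ℝ (Fin n) → ℝ, ContDiff ℝ (⊤ : ℕ∞) u →
      eLpNorm (iteratedFDeriv ℝ k u) r volume < ⊤ → eLpNorm u q volume < ⊤ →
      eLpNorm (iteratedFDeriv ℝ (k - d) u) (expo (r⁻¹.toReal - d / n)) volume ≤
        C * eLpNorm (iteratedFDeriv ℝ k u) r volume := by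
    rcases Nat.eq_zero_or_pos d with h | h
    · subst h
      refine ⟨1, fun u _ _ _ => ?_⟩
      simp only [Nat.cast_zero, zero_div, sub_zero, ← eq_expo hr, ENNReal.coe_one, one_mul]
      exact le_rfl
    · refine sobolev_iterated hn k hq hr d (k - d) (by omega) (by omega) ?_
      have := lt_of_le_of_ne hd1 (hcrit d h (by omega)).symm
      rw [div_lt_iff₀ hn0]; linarith
  have hnσ : (n : ℝ) * (r⁻¹.toReal - d / n) = n * r⁻¹.toReal - d := by
    rw [mul_sub, mul_div_cancel₀ _ hn0.ne']
  -- descending induction on the order `m`: `i` steps remain above order `k - d - 1`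
  have key : ∀ i : ℕ, ∀ m : ℕ, 1 ≤ m → m + i + 1 + d = k →
      ∃ C : NNReal, ∀ u : EuclideanSpace ℝ (Fin n) → ℝ, ContDiff ℝ (⊤ : ℕ∞) u →
      eLpNorm (iteratedFDeriv ℝ k u) r volume < ⊤ → eLpNorm u q volume < ⊤ →
      eLpNorm (iteratedFDeriv ℝ m u) (expo 0) volume ≤
        C * ((eLpNorm (iteratedFDeriv ℝ k u) r volume) ^ ((m + n * q⁻¹.toReal) / D) *
          (eLpNorm u q volume) ^ (1 - (m + n * q⁻¹.toReal) / D)) := by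
    intro i
    induction i with
    | zero =>
      intro m hm hmk
      have e : k - d = m + 1 := by omega
      have ek : (k : ℝ) = m + 1 + d := by exact_mod_cast (by omega : k = m + 1 + d)
      have hdn : 0 ≤ (d : ℝ) / n := by positivity
      refine sup_bound_step hm (by omega) hq hr hD hDe (σ := r⁻¹.toReal - d / n) (η := 1) ?_ ?_ ?_
        ?_ ?_
      · rw [sub_nonneg, div_le_iff₀ hn0]; linarith
      · linarith [inv_toReal_le_one hr]
      · rw [hnσ]; linarith
      · rw [hnσ, ek]; ring
      · obtain ⟨C, hC⟩ := hstart
        refine ⟨C, fun u hu h1 h2 => ?_⟩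
        rw [ENNReal.rpow_one, sub_self, ENNReal.rpow_zero, mul_one, ← e]
        exact hC u hu h1 h2
    | succ i ih =>
      intro m hm hmk
      refine sup_bound_step hm (by omega) hq hr hD hDe (σ := 0)
        (η := (((m + 1 : ℕ) : ℝ) + n * q⁻¹.toReal) / D) le_rfl zero_le_one (by simp) ?_ ?_
      · rw [mul_sub, mul_div_cancel₀ _ hD.ne', hDe]; push_cast; ring
      · exact ih (m + 1) (by omega) (by omega)
  exact key (k - d - 1 - j) j hj (by omega)

/-! ### Interpolation between two exponents -/

lemma expo_mul_ofReal {c t : ℝ} (hc : 0 < c) : expo (c * t) * ENNReal.ofReal c = expo t := by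
  have h0 : ENNReal.ofReal c ≠ 0 := (ENNReal.ofReal_pos.2 hc).ne'
  rw [expo, expo, ENNReal.ofReal_mul hc.le,
    ENNReal.mul_inv (Or.inl h0) (Or.inl ENNReal.ofReal_ne_top), mul_right_comm,
    ENNReal.inv_mul_cancel h0 ENNReal.ofReal_ne_top, one_mul]

/-- Log-convexity of the Lebesgue norms in the reciprocal exponent. -/
lemma eLpNorm_interpolate {α G : Type*} [MeasurableSpace α] {μ : Measure α}
    [NormedAddCommGroup G] {f : α → G} (hf : AEStronglyMeasurable f μ) {l τ₀ τ₁ : ℝ}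
    (hl0 : 0 ≤ l) (hl1 : l ≤ 1) (h0 : 0 ≤ τ₀) (h1 : 0 ≤ τ₁) :
    eLpNorm f (expo ((1 - l) * τ₀ + l * τ₁)) μ ≤
      eLpNorm f (expo τ₀) μ ^ (1 - l) * eLpNorm f (expo τ₁) μ ^ l := by
  rcases hl0.eq_or_lt with rfl | hl0
  · simp
  rcases hl1.eq_or_lt with rfl | hl1
  · simp
  have hl1' : 0 < 1 - l := by linarith
  have hT : (expo ((1 - l) * τ₀)).HolderTriple (expo (l * τ₁)) (expo ((1 - l) * τ₀ + l * τ₁)) := by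
    constructor
    rw [expo, expo, expo, inv_inv, inv_inv, inv_inv, ENNReal.ofReal_add (by positivity)
      (by positivity)]
  have hm : ∀ c : ℝ, AEStronglyMeasurable (fun x => ‖f x‖ ^ c) μ := fun c =>
    (hf.norm.aemeasurable.pow_const c).aestronglyMeasurable
  have h := eLpNorm_smul_le_mul_eLpNorm (μ := μ) (hm l) (hm (1 - l)) (hpqr := hT)
  rw [eLpNorm_norm_rpow f hl1', eLpNorm_norm_rpow f hl0, expo_mul_ofReal hl1',
    expo_mul_ofReal hl0] at h
  refine le_trans (le_of_eq ?_) h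
  rw [← eLpNorm_norm f]
  congr 1
  funext x
  rw [Pi.smul_apply', smul_eq_mul]
  rcases (norm_nonneg (f x)).eq_or_lt with hx | hx
  · rw [← hx, Real.zero_rpow hl0.ne', mul_zero]
  · rw [← Real.rpow_add hx, sub_add_cancel, Real.rpow_one]

lemma geometric_mean_combine (A B : ℝ≥0∞) {l θ₀ θ₁ θ : ℝ} (hl0 : 0 ≤ l) (hl1 : l ≤ 1)
    (h00 : 0 ≤ θ₀) (h01 : θ₀ ≤ 1) (h10 : 0 ≤ θ₁) (h11 : θ₁ ≤ 1)
    (hθ : θ = (1 - l) * θ₀ + l * θ₁) :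
    (A ^ θ₀ * B ^ (1 - θ₀)) ^ (1 - l) * (A ^ θ₁ * B ^ (1 - θ₁)) ^ l = A ^ θ * B ^ (1 - θ) := by
  have hl : 0 ≤ 1 - l := by linarith
  have h0 : 0 ≤ 1 - θ₀ := by linarith
  have h1 : 0 ≤ 1 - θ₁ := by linarith
  have e : 1 - θ = (1 - θ₀) * (1 - l) + (1 - θ₁) * l := by rw [hθ]; ring
  have e' : θ = θ₀ * (1 - l) + θ₁ * l := by rw [hθ]; ring
  rw [e, e', ENNReal.mul_rpow_of_nonneg _ _ hl, ENNReal.mul_rpow_of_nonneg _ _ hl0,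
    ENNReal.rpow_add_of_nonneg _ _ (mul_nonneg h00 hl) (mul_nonneg h10 hl0),
    ENNReal.rpow_add_of_nonneg _ _ (mul_nonneg h0 hl) (mul_nonneg h1 hl0)]
  simp only [ENNReal.rpow_mul]
  ring

/-- Two estimates of multiplicative form on the line `1 / p = α + β θ` give the estimate at every
point between them. -/
lemma interpolate_estimates {n j k : ℕ} {q r : ℝ≥0∞} {α β θ₀ θ₁ θ : ℝ}
    (h00 : 0 ≤ θ₀) (h11 : θ₁ ≤ 1) (hθ : θ ∈ Set.Icc θ₀ θ₁)
    (hτ₀ : 0 ≤ α + β * θ₀) (hτ₁ : 0 ≤ α + β * θ₁)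
    (H₀ : ∃ C : NNReal, ∀ u : EuclideanSpace ℝ (Fin n) → ℝ, ContDiff ℝ (⊤ : ℕ∞) u →
      eLpNorm (iteratedFDeriv ℝ k u) r volume < ⊤ → eLpNorm u q volume < ⊤ →
      eLpNorm (iteratedFDeriv ℝ j u) (expo (α + β * θ₀)) volume ≤
        C * ((eLpNorm (iteratedFDeriv ℝ k u) r volume) ^ θ₀ * (eLpNorm u q volume) ^ (1 - θ₀)))
    (H₁ : ∃ C : NNReal, ∀ u : EuclideanSpace ℝ (Fin n) → ℝ, ContDiff ℝ (⊤ : ℕ∞) u →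
      eLpNorm (iteratedFDeriv ℝ k u) r volume < ⊤ → eLpNorm u q volume < ⊤ →
      eLpNorm (iteratedFDeriv ℝ j u) (expo (α + β * θ₁)) volume ≤
        C * ((eLpNorm (iteratedFDeriv ℝ k u) r volume) ^ θ₁ * (eLpNorm u q volume) ^ (1 - θ₁))) :
    ∃ C : ℝ, 0 < C ∧ ∀ u : EuclideanSpace ℝ (Fin n) → ℝ, ContDiff ℝ (⊤ : ℕ∞) u →
      eLpNorm (iteratedFDeriv ℝ k u) r volume < ⊤ → eLpNorm u q volume < ⊤ →
      eLpNorm (iteratedFDeriv ℝ j u) (expo (α + β * θ)) volume ≤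
        ENNReal.ofReal C * (eLpNorm (iteratedFDeriv ℝ k u) r volume) ^ θ *
          (eLpNorm u q volume) ^ (1 - θ) := by
  obtain ⟨C₀, hC₀⟩ := H₀
  obtain ⟨C₁, hC₁⟩ := H₁
  obtain ⟨l, hl0, hl1, hl⟩ : ∃ l : ℝ, 0 ≤ l ∧ l ≤ 1 ∧ θ = (1 - l) * θ₀ + l * θ₁ := by
    have h : θ ∈ segment ℝ θ₀ θ₁ := by rwa [segment_eq_Icc (hθ.1.trans hθ.2)]
    obtain ⟨a, b, ha, hb, hab, h⟩ := h
    refine ⟨b, hb, by linarith, ?_⟩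
    rw [← h, smul_eq_mul, smul_eq_mul, ← hab, add_sub_cancel_right]
  have h01 : θ₀ ≤ θ₁ := hθ.1.trans hθ.2
  have hl' : 0 ≤ 1 - l := by linarith
  -- adding `1` keeps the constant positive
  refine ⟨((C₀ ^ (1 - l) * C₁ ^ l + 1 : NNReal) : ℝ), by positivity, fun u hu h1 h2 => ?_⟩
  have hcont := hu.continuous_iteratedFDeriv (m := j) (by exact_mod_cast le_top)
  have h := eLpNorm_interpolate (hcont.aestronglyMeasurable (μ := volume)) hl0 hl1 hτ₀ hτ₁
  have e : (1 - l) * (α + β * θ₀) + l * (α + β * θ₁) = α + β * θ := by rw [hl]; ring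
  rw [e] at h
  refine h.trans ((mul_le_mul' (ENNReal.rpow_le_rpow (hC₀ u hu h1 h2) hl')
    (ENNReal.rpow_le_rpow (hC₁ u hu h1 h2) hl0)).trans ?_)
  rw [ENNReal.mul_rpow_of_nonneg _ _ hl', ENNReal.mul_rpow_of_nonneg _ _ hl0, mul_mul_mul_comm,
    geometric_mean_combine _ _ hl0 hl1 h00 (h01.trans h11) (h00.trans h01) h11 hl,
    ENNReal.ofReal_coe_nnreal, mul_assoc (((C₀ ^ (1 - l) * C₁ ^ l + 1 : NNReal)) : ℝ≥0∞)]
  refine mul_le_mul' ?_ le_rfl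
  rw [← ENNReal.coe_rpow_of_nonneg _ hl', ← ENNReal.coe_rpow_of_nonneg _ hl0, ← ENNReal.coe_mul]
  exact ENNReal.coe_le_coe.2 le_self_add

/-- The corrected Gagliardo–Nirenberg interpolation inequality, Lebesgue-exponent
case: if `1/p = j/n + θ(1/r - k/n) + (1-θ)/q`, `θ ∈ [j/k, 1]`, and `n/r` avoids
the critical values `1, …, k-j`, then
`‖∇ʲu‖_p ≤ C ‖∇ᵏu‖_r^θ ‖u‖_q^{1-θ}` for every smooth `u` with finite
right-hand side. -/
theorem gagliardo_nirenberg_lebesgue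
    (n : ℕ) (hn : 1 ≤ n) (j k : ℕ) (hj : 1 ≤ j) (hjk : j < k)
    (θ : ℝ) (hθ : θ ∈ Set.Icc ((j : ℝ) / k) 1)
    (p q r : ℝ≥0∞) (hp1 : 1 < p) (hq : 1 ≤ q) (hr : 1 ≤ r)
    (hbal : p⁻¹.toReal =
      (j : ℝ) / n + θ * (r⁻¹.toReal - (k : ℝ) / n) + (1 - θ) * q⁻¹.toReal)
    (hcrit : ∀ i : ℕ, 1 ≤ i → i ≤ k - j → (n : ℝ) * r⁻¹.toReal ≠ (i : ℝ)) :
    ∃ C : ℝ, 0 < C ∧ ∀ u : EuclideanSpace ℝ (Fin n) → ℝ, ContDiff ℝ (⊤ : ℕ∞) u →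
      eLpNorm (iteratedFDeriv ℝ k u) r volume < ⊤ →
      eLpNorm u q volume < ⊤ →
      eLpNorm (iteratedFDeriv ℝ j u) p volume ≤
        ENNReal.ofReal C * (eLpNorm (iteratedFDeriv ℝ k u) r volume) ^ θ *
          (eLpNorm u q volume) ^ (1 - θ) := by
  have hn0 : (0 : ℝ) < n := by exact_mod_cast hn
  have hk0 : (0 : ℝ) < k := by exact_mod_cast (by omega : 0 < k)
  have hj0 : (0 : ℝ) < j := by exact_mod_cast hj
  have hjk1 : (j / k : ℝ) ≤ 1 := (div_le_one hk0).2 (by exact_mod_cast hjk.le)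
  have hjk0 : (0 : ℝ) ≤ j / k := by positivity
  have hρ0 : 0 ≤ r⁻¹.toReal := ENNReal.toReal_nonneg
  have hs0 : 0 ≤ q⁻¹.toReal := ENNReal.toReal_nonneg
  obtain ⟨α, hα⟩ : ∃ α, α = (j : ℝ) / n + q⁻¹.toReal := ⟨_, rfl⟩
  obtain ⟨β, hβ⟩ : ∃ β, β = r⁻¹.toReal - (k : ℝ) / n - q⁻¹.toReal := ⟨_, rfl⟩
  have hpθ : p⁻¹.toReal = α + β * θ := by rw [hbal, hα, hβ]; ring
  have hp0 : 0 ≤ α + β * θ := hpθ ▸ ENNReal.toReal_nonneg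
  rw [eq_expo hp1.le, hpθ]
  have e0 : α + β * (j / k : ℝ) = (j / k : ℝ) * r⁻¹.toReal + (1 - j / k) * q⁻¹.toReal := by
    rw [hα, hβ]; field_simp; ring
  have hτ₀ : 0 ≤ α + β * (j / k : ℝ) := e0 ▸ add_nonneg (mul_nonneg hjk0 hρ0)
    (mul_nonneg (by linarith) hs0)
  have hτ₀1 : α + β * (j / k : ℝ) ≤ 1 := by
    rw [e0]
    nlinarith [inv_toReal_le_one hr, inv_toReal_le_one hq]
  have H₀ : ∃ C : NNReal, ∀ u : EuclideanSpace ℝ (Fin n) → ℝ, ContDiff ℝ (⊤ : ℕ∞) u →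
      eLpNorm (iteratedFDeriv ℝ k u) r volume < ⊤ → eLpNorm u q volume < ⊤ →
      eLpNorm (iteratedFDeriv ℝ j u) (expo (α + β * (j / k : ℝ))) volume ≤
        C * ((eLpNorm (iteratedFDeriv ℝ k u) r volume) ^ (j / k : ℝ) *
          (eLpNorm u q volume) ^ (1 - j / k : ℝ)) := by
    obtain ⟨C, -, hC⟩ := endpoint_inequality (n := n) j k hj hjk (one_le_expo hτ₀1) hq hr
      ((expo_inv_toReal hτ₀).trans e0)
    refine ⟨C.toNNReal, fun u hu h1 h2 => (hC u hu h1 h2).trans_eq ?_⟩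
    rw [mul_assoc, ENNReal.ofReal]
  have ekj : ((k - j : ℕ) : ℝ) = k - j := Nat.cast_sub hjk.le
  rcases lt_or_gt_of_ne (hcrit (k - j) (by omega) le_rfl) with hlt | hgt
  · -- second point: the value of `θ` at which `1 / p = 0`
    rw [ekj] at hlt
    obtain ⟨D, hDe⟩ : ∃ D, D = k - n * r⁻¹.toReal + n * q⁻¹.toReal := ⟨_, rfl⟩
    have hns := mul_nonneg hn0.le hs0
    have hD : 0 < D := by rw [hDe]; linarith
    have eβ : β * n = -D := by rw [hβ, hDe]; field_simp; ring
    have eα : α * n = j + n * q⁻¹.toReal := by rw [hα]; field_simp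
    have e1 : α + β * ((j + n * q⁻¹.toReal) / D) = 0 := by
      have : (α + β * ((j + n * q⁻¹.toReal) / D)) * n = 0 := by
        rw [add_mul, mul_right_comm, eβ, eα]; field_simp; ring
      exact (mul_eq_zero.1 this).resolve_right hn0.ne'
    refine interpolate_estimates hjk0 (θ₁ := (j + n * q⁻¹.toReal) / D) ?_ ⟨hθ.1, ?_⟩ hτ₀ e1.ge H₀ ?_
    · rw [div_le_one hD, hDe]; linarith
    · -- `1 / p ≥ 0` forces `θ` below the value at which the line reaches `1 / p = 0`
      rw [le_div_iff₀ hD]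
      nlinarith [mul_nonneg hp0 hn0.le]
    · rw [e1]
      exact sup_bound hn hj hq hr hlt hcrit hDe
  · -- second point: `θ = 1`, the iterated Sobolev embedding
    rw [ekj] at hgt
    have e1 : α + β * 1 = r⁻¹.toReal - ((k - j : ℕ) : ℝ) / n := by
      rw [hα, hβ, ekj]; ring
    have hd : ((k - j : ℕ) : ℝ) / n < r⁻¹.toReal := by
      rw [div_lt_iff₀ hn0, ekj]; linarith
    refine interpolate_estimates hjk0 le_rfl hθ hτ₀ (by rw [e1]; linarith) H₀ ?_
    obtain ⟨C, hC⟩ := sobolev_iterated hn k hq hr (k - j) j hj (by omega) hd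
    refine ⟨C, fun u hu h1 h2 => ?_⟩
    rw [e1, ENNReal.rpow_one, sub_self, ENNReal.rpow_zero, mul_one]
    exact hC u hu h1 h2
end

section
/- Let n ≥ 1, let j, k ∈ ℕ with 1 ≤ j < k, let θ ∈ [j/k, 1], q ∈ [1,∞], r ∈ [1,∞], and let β ∈ (0,1) satisfy −β/n = j/n + θ(1/r − k/n) + (1−θ)/q. Assume moreover that n/r ∉ {1, 2, ..., k−j}. Then there exists a constant C > 0, independent of u, such that for every smooth function u : ℝ^n → ℝ for which the right-hand side is finite, [∇^j u]_β ≤ C · ‖∇^k u‖_{L^r(ℝ^n)}^θ · ‖u‖_{L^q(ℝ^n)}^{1−θ}, where [∇^j u]_β := sup_{x ≠ y} |∇^j u(x) − ∇^j u(y)|/|x − y|^β is the β-Hölder seminorm of the j-th total derivative of u and ‖∇^k u‖_{L^r} is the L^r norm of x ↦ |∇^k u(x)|. -/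
open MeasureTheory ENNReal

/-!
The proof is a smoothing argument at all scales `t > 0`, which treats every admissible `q`, `r`
and `θ` at once. Fix a bump function `φ` of integral one and a partial derivative `w` of `u` of
order `j`, and put `G(t, x) = ∫ w(x + t y) φ(y) dy`, so that `G(0, x) = w(x)`. With `k = j + m + 1`,
let `R(t, x) = ∑_{l ≤ m} (-t)^l / l! ∂_t^l G(t, x)` be the Taylor polynomial of `G(·, x)` based at
`t` and evaluated at `0`. Then `R(0, x) = w(x)`, and the derivative telescopes
(`hasDerivAt_taylor`):

  `∂_t R(t, x) = (-t)^m / m! ∂_t^(m+1) G(t, x)`,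

where `∂_t^(m+1) G` is an average at scale `t` of derivatives of `u` of order exactly `k`.

Such an average is bounded by `t^(-n/r) ‖∇ᵏu‖_r` by Hölder's inequality (`kernel_bound`), and by
`t^(-k-n/q) ‖u‖_q` after integrating by parts `k` times (`avg_iteratedFDeriv`). The geometric mean
of the two bounds with weights `θ`, `1 - θ` is, by the balance condition,
`t^(β-1-m) ‖∇ᵏu‖_r^θ ‖u‖_q^(1-θ)` (`tuple_bound`, `avgV_bound`). Hence `|∂_t R| ≲ N t^(β-1)` with
`N = ‖∇ᵏu‖_r^θ ‖u‖_q^(1-θ)`, and the increment of `∂_t R` between two points at distance `h ≤ t`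
gains the factor `h / t`. Since `j ≥ 1`, integration by parts also shows `R(t, x) → 0` as `t → ∞`.
Therefore `w(x) - w(x')` is the integral over all scales of the increment of `-∂_t R`, and splitting
it at `t = h = |x - x'|` gives `≲ N (∫_0^h t^(β-1) dt + h ∫_h^∞ t^(β-2) dt) ≲ N h^β`
(`abs_zero_le`).
-/

/-! ### Averages against rescaled kernels -/

/-- Euclidean space of dimension `n`. -/
abbrev Eu (n : ℕ) := EuclideanSpace ℝ (Fin n)

/-- The average of `f` at scale `t` around `x` against the kernel `ψ`. -/
noncomputable def avg {n : ℕ} (ψ f : Eu n → ℝ) (t : ℝ) (x : Eu n) : ℝ :=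
  ∫ y, f (x + t • y) * ψ y

lemma eLpNorm_comp_affine {n : ℕ} (f : Eu n → ℝ) (hf : Continuous f) (p : ℝ≥0∞)
    (t : ℝ) (ht : 0 < t) (x : Eu n) :
    eLpNorm (fun y => f (x + t • y)) p volume =
      ENNReal.ofReal (t ^ (-((n : ℝ) * p⁻¹.toReal))) * eLpNorm f p volume := by
  have hm : Measure.map (fun y : Eu n => x + t • y) volume
      = ENNReal.ofReal |(t ^ n)⁻¹| • volume := by
    have h1 : (fun y : Eu n => x + t • y) = (fun z => x + z) ∘ (fun y => t • y) := rfl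
    rw [h1, ← Measure.map_map (measurable_const_add x) (measurable_const_smul t),
      Measure.map_addHaar_smul _ ht.ne', Measure.map_smul, map_add_left_eq_self]
    simp
  have hc : Continuous (fun y : Eu n => x + t • y) := by fun_prop
  have := eLpNorm_map_measure (p := p) (μ := (volume : Measure (Eu n)))
    (f := fun y : Eu n => x + t • y) (g := f) hf.aestronglyMeasurable hc.aemeasurable
  change eLpNorm (f ∘ fun y => x + t • y) p volume = _
  rw [← this, hm, eLpNorm_smul_measure_of_ne_zero (by simp [ht.ne']), smul_eq_mul]
  congr 1
  rw [ENNReal.ofReal_rpow_of_nonneg (abs_nonneg _) ENNReal.toReal_nonneg, abs_of_pos (by positivity),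
    ← Real.rpow_natCast, ← Real.rpow_neg ht.le, ← Real.rpow_mul ht.le, one_div, neg_mul]

/-- An average of an `L^p` function against a kernel bounded by `c` and supported in a fixed ball,
by Hölder's inequality and the scaling of the `L^p` norm. The constant does not depend on the
kernel. -/
lemma lintegral_kernel_bound {n : ℕ} (p : ℝ≥0∞) (hp : 1 ≤ p) (ρ : ℝ) :
    ∃ C : ℝ, 0 ≤ C ∧ ∀ f : Eu n → ℝ, Continuous f → eLpNorm f p volume < ⊤ →
      ∀ (κ : Eu n → ℝ) (c : ℝ), 0 ≤ c → (∀ y, |κ y| ≤ c) →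
      (∀ y, y ∉ Metric.closedBall (0 : Eu n) ρ → κ y = 0) →
      ∀ t : ℝ, 0 < t → ∀ x : Eu n,
      |avg κ f t x| ≤ C * c * t ^ (-((n : ℝ) * p⁻¹.toReal)) * (eLpNorm f p volume).toReal := by
  set V : ℝ≥0∞ := volume (Metric.closedBall (0 : Eu n) ρ) ^ (1 / (1 : ℝ≥0∞).toReal - 1 / p.toReal)
    with hV
  have hVfin : V ≠ ⊤ := by
    refine ENNReal.rpow_ne_top_of_nonneg ?_ measure_closedBall_lt_top.ne
    rcases eq_or_ne p ⊤ with rfl | h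
    · simp
    · have : 1 ≤ p.toReal := by simpa using ENNReal.toReal_mono h hp
      have := inv_le_one_of_one_le₀ this
      simpa using this
  refine ⟨V.toReal, ENNReal.toReal_nonneg, fun f hf hfp κ c hc hκ hκ0 t ht x => ?_⟩
  have hcont : Continuous (fun y : Eu n => f (x + t • y)) := by fun_prop
  have key : ‖avg κ f t x‖ₑ ≤ ENNReal.ofReal c * (ENNReal.ofReal (t ^ (-((n : ℝ) * p⁻¹.toReal)))
      * eLpNorm f p volume * V) := by
    calc ‖avg κ f t x‖ₑ ≤ ∫⁻ y, ‖f (x + t • y) * κ y‖ₑ := enorm_integral_le_lintegral_enorm _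
      _ ≤ ∫⁻ y, (Metric.closedBall (0 : Eu n) ρ).indicator
            (fun y => ENNReal.ofReal c * ‖f (x + t • y)‖ₑ) y := by
          refine lintegral_mono fun y => ?_
          by_cases hy : y ∈ Metric.closedBall (0 : Eu n) ρ
          · rw [Set.indicator_of_mem hy, enorm_mul, mul_comm]
            gcongr
            rw [Real.enorm_eq_ofReal_abs]
            exact ENNReal.ofReal_le_ofReal (hκ y)
          · simp [hκ0 y hy]
      _ = ENNReal.ofReal c * ∫⁻ y in Metric.closedBall (0 : Eu n) ρ, ‖f (x + t • y)‖ₑ := by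
          rw [lintegral_indicator Metric.isClosed_closedBall.measurableSet,
            lintegral_const_mul' _ _ ENNReal.ofReal_ne_top]
      _ ≤ _ := by
          gcongr
          rw [← eLpNorm_one_eq_lintegral_enorm]
          refine (eLpNorm_le_eLpNorm_mul_rpow_measure_univ hp hcont.aestronglyMeasurable).trans ?_
          rw [Measure.restrict_apply_univ, ← hV, ← eLpNorm_comp_affine f hf p t ht x]
          gcongr
          exact Measure.restrict_le_self
  have h2 := ENNReal.toReal_mono (by finiteness) key
  rw [toReal_enorm] at h2
  simp only [ENNReal.toReal_mul, ENNReal.toReal_ofReal hc,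
    ENNReal.toReal_ofReal (Real.rpow_nonneg ht.le _)] at h2
  rw [← Real.norm_eq_abs]
  linarith

/-- A test kernel: smooth with compact support. -/
def IsTest {n : ℕ} (ψ : Eu n → ℝ) : Prop := ContDiff ℝ (⊤ : ℕ∞) ψ ∧ HasCompactSupport ψ

lemma IsTest.integrable {n : ℕ} {ψ : Eu n → ℝ} (h : IsTest ψ) {g : Eu n → ℝ} (hg : Continuous g) :
    Integrable (fun y => g y * ψ y) :=
  (hg.mul h.1.continuous).integrable_of_hasCompactSupport h.2.mul_left

/-- A translation of the centre is the same as a rescaled translation of the kernel. -/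
lemma avg_translate {n : ℕ} (ψ f : Eu n → ℝ) (t : ℝ) (ht : 0 < t) (x x' : Eu n) :
    avg ψ f t x' = avg (fun y => ψ (y + t⁻¹ • (x - x'))) f t x := by
  unfold avg
  rw [← integral_add_right_eq_self (fun y => f (x' + t • y) * ψ y) (t⁻¹ • (x - x'))]
  congr 1
  ext y
  congr 2
  rw [smul_add, smul_inv_smul₀ ht.ne']
  abel

/-- An `L^p` function averaged at scale `t` is `O(t ^ (-n/p))`, and its increments over a distance
`d ≤ t` gain a factor `d / t` because the translated kernels differ by `O(d / t)`. -/
lemma kernel_bound {n : ℕ} (p : ℝ≥0∞) (hp : 1 ≤ p) (ψ : Eu n → ℝ) (hψ : IsTest ψ) :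
    ∃ C : ℝ, 0 ≤ C ∧ ∀ f : Eu n → ℝ, Continuous f → eLpNorm f p volume < ⊤ →
      ∀ t : ℝ, 0 < t → ∀ x : Eu n,
      |avg ψ f t x| ≤ C * t ^ (-((n : ℝ) * p⁻¹.toReal)) * (eLpNorm f p volume).toReal ∧
      ∀ x' : Eu n, dist x x' ≤ t → |avg ψ f t x - avg ψ f t x'| ≤
        C * (dist x x' / t) * t ^ (-((n : ℝ) * p⁻¹.toReal)) * (eLpNorm f p volume).toReal := by
  obtain ⟨ρ, hρ⟩ := hψ.2.isCompact.isBounded.subset_closedBall (0 : Eu n)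
  have hout : ∀ y, y ∉ Metric.closedBall (0 : Eu n) ρ → ψ y = 0 := fun y hy =>
    image_eq_zero_of_notMem_tsupport fun h => hy (hρ h)
  obtain ⟨M, hM⟩ := hψ.1.continuous.bounded_above_of_compact_support hψ.2
  have hM0 : 0 ≤ M := (norm_nonneg _).trans (hM 0)
  obtain ⟨L, hL⟩ := ContDiff.lipschitzWith_of_hasCompactSupport hψ.2 hψ.1 (by simp)
  obtain ⟨C, hC, H⟩ := lintegral_kernel_bound (n := n) p hp (ρ + 1)
  refine ⟨C * (M + L), by positivity, fun f hf hfp t ht x => ⟨?_, fun x' hx' => ?_⟩⟩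
  · refine (H f hf hfp ψ M hM0 hM (fun y hy => hout y fun h => hy ?_) t ht x).trans ?_
    · exact Metric.closedBall_subset_closedBall (by linarith) h
    · gcongr
      simp
  · set a : Eu n := t⁻¹ • (x - x') with ha
    have hna : ‖a‖ = dist x x' / t := by
      rw [ha, norm_smul, dist_eq_norm, norm_inv, Real.norm_of_nonneg ht.le]; ring
    have hna1 : ‖a‖ ≤ 1 := by rw [hna]; exact (div_le_one ht).2 hx'
    have hc : Continuous (fun y : Eu n => f (x + t • y)) := by fun_prop
    have hta : IsTest (fun y => ψ (y + a)) :=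
      ⟨hψ.1.comp (contDiff_id.add contDiff_const),
        hψ.2.comp_homeomorph (Homeomorph.addRight a)⟩
    have e : avg ψ f t x - avg ψ f t x' = avg (fun y => ψ y - ψ (y + a)) f t x := by
      rw [avg_translate ψ f t ht x x']
      unfold avg
      rw [← integral_sub (hψ.integrable hc) (hta.integrable hc)]
      simp only [mul_sub]
    rw [e]
    refine (H f hf hfp _ (L * ‖a‖) (by positivity) (fun y => ?_) (fun y hy => ?_) t ht x).trans ?_
    · have := hL.dist_le_mul y (y + a)
      simpa [Real.dist_eq] using this
    · rw [Metric.mem_closedBall, dist_zero_right, not_le] at hy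
      rw [hout y (by rw [Metric.mem_closedBall, dist_zero_right, not_le]; linarith),
        hout (y + a) (by
          rw [Metric.mem_closedBall, dist_zero_right, not_le]
          have := norm_sub_le (y + a) a
          rw [add_sub_cancel_right] at this
          linarith), sub_zero]
    · rw [← hna, mul_assoc C (M + L)]
      gcongr
      linarith

/-! ### Integration by parts -/

lemma contDiff_iter {n : ℕ} {u : Eu n → ℝ} (hu : ContDiff ℝ (⊤ : ℕ∞) u) (p : ℕ) :
    ContDiff ℝ (⊤ : ℕ∞) (iteratedFDeriv ℝ p u) :=
  hu.iteratedFDeriv_right (by exact_mod_cast le_top)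

lemma contDiff_iter_apply {n : ℕ} {u : Eu n → ℝ} (hu : ContDiff ℝ (⊤ : ℕ∞) u) (p : ℕ)
    (v : Fin p → Eu n) : ContDiff ℝ (⊤ : ℕ∞) (fun x => iteratedFDeriv ℝ p u x v) :=
  (ContinuousMultilinearMap.apply ℝ (fun _ : Fin p => Eu n) ℝ v).contDiff.comp (contDiff_iter hu p)

/-- Integration by parts: a directional derivative of order `p` is moved onto the kernel, at the
cost of a factor `t ^ (-p)`. -/
lemma avg_iteratedFDeriv {n : ℕ} (p : ℕ) (v : Fin p → Eu n) (ψ : Eu n → ℝ) (hψ : IsTest ψ) :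
    ∃ ψ' : Eu n → ℝ, IsTest ψ' ∧ ∀ u : Eu n → ℝ, ContDiff ℝ (⊤ : ℕ∞) u → ∀ (t : ℝ) (x : Eu n),
      t ^ p * avg ψ (fun z => iteratedFDeriv ℝ p u z v) t x = avg ψ' u t x := by
  induction p generalizing ψ with
  | zero => exact ⟨ψ, hψ, fun u hu t x => by simp⟩
  | succ p ih =>
    have h1 : IsTest (fun y => -(fderiv ℝ ψ y (v 0))) := by
      refine ⟨?_, ?_⟩
      · exact ((hψ.1.fderiv_right (m := (⊤ : ℕ∞)) (by exact_mod_cast le_top)).clm_apply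
          contDiff_const).neg
      · refine (hψ.2.fderiv (𝕜 := ℝ)).comp_left (g := fun A : Eu n →L[ℝ] ℝ => -(A (v 0))) (by simp)
    obtain ⟨ψ', hψ', H⟩ := ih (Fin.tail v) _ h1
    refine ⟨ψ', hψ', fun u hu t x => ?_⟩
    rw [← H u hu t x, pow_succ, mul_assoc]
    congr 1
    set g : Eu n → ℝ := fun z => iteratedFDeriv ℝ p u z (Fin.tail v) with hg
    have hgc : ContDiff ℝ (⊤ : ℕ∞) g := contDiff_iter_apply hu p _
    have hgd : ∀ z, fderiv ℝ g z (v 0) = iteratedFDeriv ℝ (p + 1) u z v := by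
      intro z
      rw [iteratedFDeriv_succ_apply_left]
      have := (((contDiff_iter hu p).differentiable (by simp)) z).hasFDerivAt
      have h2 := ((ContinuousMultilinearMap.apply ℝ (fun _ : Fin p => Eu n) ℝ
        (Fin.tail v)).hasFDerivAt.comp z this)
      have h3 : HasFDerivAt g _ z := h2
      rw [h3.fderiv]
      rfl
    have hGc : ContDiff ℝ (⊤ : ℕ∞) (fun y : Eu n => g (x + t • y)) :=
      hgc.comp (by fun_prop)
    have hGd : ∀ y, fderiv ℝ (fun y : Eu n => g (x + t • y)) y (v 0)
        = t * iteratedFDeriv ℝ (p + 1) u (x + t • y) v := by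
      intro y
      rw [← hgd]
      have ha : HasFDerivAt (fun y : Eu n => x + t • y) (t • ContinuousLinearMap.id ℝ (Eu n)) y :=
        ((hasFDerivAt_id y).const_smul t).const_add x
      have h3 := HasFDerivAt.comp (g := g) y
        ((hgc.differentiable (by simp)) (x + t • y)).hasFDerivAt ha
      change HasFDerivAt (fun y : Eu n => g (x + t • y)) _ y at h3
      rw [h3.fderiv]
      simp
    have hc1 : Continuous (fun y : Eu n => fderiv ℝ (fun y : Eu n => g (x + t • y)) y (v 0)) :=
      (hGc.continuous_fderiv (by simp)).clm_apply continuous_const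
    have ibp := integral_mul_fderiv_eq_neg_fderiv_mul_of_integrable
      (μ := (volume : Measure (Eu n))) (f := fun y : Eu n => g (x + t • y)) (g := ψ) (v := v 0)
      (hψ.integrable hc1) (by simpa using (h1.integrable hGc.continuous).neg)
      (hψ.integrable hGc.continuous)
      (fun y _ => (hGc.differentiable (by simp)) y) (fun y _ => (hψ.1.differentiable (by simp)) y)
    unfold avg
    simp only [hGd, mul_neg, integral_neg, mul_assoc, integral_const_mul] at ibp ⊢
    linarith

/-! ### Interpolated bounds for averages of derivatives -/

lemma interp_bound (θ : ℝ) (hθ0 : 0 ≤ θ) (hθ1 : θ ≤ 1) (X C t a b A B : ℝ) (hX : 0 ≤ X)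
    (hC : 0 ≤ C) (ht : 0 < t) (hA : 0 ≤ A) (hB : 0 ≤ B)
    (h1 : X ≤ C * t ^ a * A) (h2 : X ≤ C * t ^ b * B) :
    X ≤ C * t ^ (θ * a + (1 - θ) * b) * (A ^ θ * B ^ (1 - θ)) := by
  have h0 : 0 ≤ 1 - θ := by linarith
  have split : ∀ Y : ℝ, 0 ≤ Y → Y = Y ^ θ * Y ^ (1 - θ) := fun Y hY => by
    rw [← Real.rpow_add_of_nonneg hY hθ0 h0]; simp
  have hta := Real.rpow_nonneg ht.le a
  have htb := Real.rpow_nonneg ht.le b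
  calc X = X ^ θ * X ^ (1 - θ) := split X hX
    _ ≤ (C * t ^ a * A) ^ θ * (C * t ^ b * B) ^ (1 - θ) := by gcongr
    _ = (C ^ θ * C ^ (1 - θ)) * (t ^ (θ * a) * t ^ ((1 - θ) * b)) * (A ^ θ * B ^ (1 - θ)) := by
        rw [Real.mul_rpow (by positivity) hA, Real.mul_rpow hC hta, Real.mul_rpow (by positivity) hB,
          Real.mul_rpow hC htb, ← Real.rpow_mul ht.le, ← Real.rpow_mul ht.le, mul_comm a, mul_comm b]
        ring
    _ = _ := by rw [← split C hC, ← Real.rpow_add ht]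

/-- The two estimates for an average of a derivative of order `k`, one from `∇ᵏu ∈ L^r` and the
other from `u ∈ L^q` after integrating by parts, combined by a geometric mean. -/
lemma tuple_bound {n : ℕ} (k : ℕ) (θ : ℝ) (hθ0 : 0 ≤ θ) (hθ1 : θ ≤ 1) (q r : ℝ≥0∞)
    (hq : 1 ≤ q) (hr : 1 ≤ r) (ψ : Eu n → ℝ) (hψ : IsTest ψ) (v : Fin k → Eu n)
    (hv : ∀ i, ‖v i‖ = 1) (e : ℝ)
    (he : θ * (-((n : ℝ) * r⁻¹.toReal)) + (1 - θ) * (-(k : ℝ) + -((n : ℝ) * q⁻¹.toReal)) = e) :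
    ∃ C : ℝ, 0 ≤ C ∧ ∀ u : Eu n → ℝ, ContDiff ℝ (⊤ : ℕ∞) u →
      eLpNorm (iteratedFDeriv ℝ k u) r volume < ⊤ → eLpNorm u q volume < ⊤ →
      ∀ t : ℝ, 0 < t → ∀ x : Eu n,
      |avg ψ (fun z => iteratedFDeriv ℝ k u z v) t x| ≤ C * t ^ e *
        ((eLpNorm (iteratedFDeriv ℝ k u) r volume).toReal ^ θ *
          (eLpNorm u q volume).toReal ^ (1 - θ)) ∧
      ∀ x' : Eu n, dist x x' ≤ t →
        |avg ψ (fun z => iteratedFDeriv ℝ k u z v) t x -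
          avg ψ (fun z => iteratedFDeriv ℝ k u z v) t x'| ≤ C * (dist x x' / t) * t ^ e *
        ((eLpNorm (iteratedFDeriv ℝ k u) r volume).toReal ^ θ *
          (eLpNorm u q volume).toReal ^ (1 - θ)) := by
  obtain ⟨ψ', hψ', hibp⟩ := avg_iteratedFDeriv k v ψ hψ
  obtain ⟨C1, hC1, H1⟩ := kernel_bound r hr ψ hψ
  obtain ⟨C2, hC2, H2⟩ := kernel_bound q hq ψ' hψ'
  refine ⟨C1 + C2, by positivity, fun u hu hA hB t ht x => ?_⟩
  set A := eLpNorm (iteratedFDeriv ℝ k u) r volume with hAdef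
  set B := eLpNorm u q volume with hBdef
  set g : Eu n → ℝ := fun z => iteratedFDeriv ℝ k u z v with hg
  have hgA : eLpNorm g r volume ≤ A := by
    refine eLpNorm_mono fun z => ?_
    simpa [hv] using (iteratedFDeriv ℝ k u z).le_opNorm v
  have hgA' : (eLpNorm g r volume).toReal ≤ A.toReal := ENNReal.toReal_mono hA.ne hgA
  have hgc : Continuous g := (contDiff_iter_apply hu k v).continuous
  obtain ⟨a1, a2⟩ := H1 g hgc (hgA.trans_lt hA) t ht x
  obtain ⟨b1, b2⟩ := H2 u hu.continuous hB t ht x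
  have hX : ∀ z, avg ψ g t z = t ^ (-(k : ℝ)) * avg ψ' u t z := fun z => by
    rw [← hibp u hu t z, Real.rpow_neg ht.le, Real.rpow_natCast, inv_mul_cancel_left₀ (by positivity)]
  have hk0 : 0 < t ^ (-(k : ℝ)) := Real.rpow_pos_of_pos ht _
  have hr0 : 0 < t ^ (-((n : ℝ) * r⁻¹.toReal)) := Real.rpow_pos_of_pos ht _
  have hq0 : 0 < t ^ (-((n : ℝ) * q⁻¹.toReal)) := Real.rpow_pos_of_pos ht _
  have hB0 : 0 ≤ B.toReal := ENNReal.toReal_nonneg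
  have hA0 : 0 ≤ A.toReal := ENNReal.toReal_nonneg
  rw [← he]
  refine ⟨?_, fun x' hx' => ?_⟩
  · refine interp_bound θ hθ0 hθ1 _ _ t _ _ _ _ (abs_nonneg _) (by positivity) ht hA0 hB0 ?_ ?_
    · refine a1.trans ?_
      gcongr
      linarith
    · rw [hX x, abs_mul, abs_of_pos hk0, Real.rpow_add ht]
      calc _ ≤ t ^ (-(k : ℝ)) * ((C1 + C2) * t ^ (-((n : ℝ) * q⁻¹.toReal)) * B.toReal) := by
            gcongr
            refine b1.trans ?_
            gcongr
            linarith
        _ = _ := by ring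
  · have hd : 0 ≤ dist x x' / t := by positivity
    refine interp_bound θ hθ0 hθ1 _ _ t _ _ _ _ (abs_nonneg _) (by positivity) ht hA0 hB0 ?_ ?_
    · refine (a2 x' hx').trans ?_
      gcongr
      linarith
    · rw [hX x, hX x', ← mul_sub, abs_mul, abs_of_pos hk0, Real.rpow_add ht]
      calc _ ≤ t ^ (-(k : ℝ)) *
              ((C1 + C2) * (dist x x' / t) * t ^ (-((n : ℝ) * q⁻¹.toReal)) * B.toReal) := by
            gcongr
            refine (b2 x' hx').trans ?_
            gcongr
            linarith
        _ = _ := by ring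

/-- The average at scale `t` around `x` of the derivative of order `p` of `u`, evaluated on a tuple
of vectors `V y` that may depend on the integration variable `y`. -/
noncomputable def avgV {n : ℕ} (φ : Eu n → ℝ) (p : ℕ) (V : Eu n → Fin p → Eu n) (u : Eu n → ℝ)
    (t : ℝ) (x : Eu n) : ℝ :=
  ∫ y, iteratedFDeriv ℝ p u (x + t • y) (V y) * φ y

/-- The `i`-th standard basis vector of Euclidean space. -/
noncomputable abbrev stdB (n : ℕ) (i : Fin n) : Eu n := EuclideanSpace.single i 1

lemma multilinear_expand {n p : ℕ} (M : ContinuousMultilinearMap ℝ (fun _ : Fin p => Eu n) ℝ)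
    (m : Fin p → Eu n) :
    M m = ∑ I : Fin p → Fin n, (∏ i, m i (I i)) * M (fun i => stdB n (I i)) := by
  have h : m = fun i => ∑ a, m i a • stdB n a := by
    funext i
    simpa using ((EuclideanSpace.basisFun (Fin n) ℝ).sum_repr (m i)).symm
  conv_lhs => rw [h, M.map_sum]
  refine Finset.sum_congr rfl fun I _ => ?_
  rw [M.map_smul_univ (fun i => m i (I i)) (fun i => stdB n (I i)), smul_eq_mul]

/-- Averages along a variable tuple are sums of averages of the partial derivatives against test
kernels that do not depend on `u`. -/
lemma avgV_expand {n : ℕ} (φ : Eu n → ℝ) (hφ : IsTest φ) (p : ℕ) (V : Eu n → Fin p → Eu n)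
    (hV : ∀ i, ContDiff ℝ (⊤ : ℕ∞) (fun y => V y i)) :
    ∃ ψ : (Fin p → Fin n) → Eu n → ℝ, (∀ I, IsTest (ψ I)) ∧
      ∀ u : Eu n → ℝ, ContDiff ℝ (⊤ : ℕ∞) u → ∀ t x, avgV φ p V u t x =
        ∑ I, avg (ψ I) (fun z => iteratedFDeriv ℝ p u z (fun i => stdB n (I i))) t x := by
  have hT : ∀ I : Fin p → Fin n, IsTest (fun y => (∏ i, V y i (I i)) * φ y) := fun I => by
    refine ⟨ContDiff.mul (contDiff_prod fun i _ => ?_) hφ.1, hφ.2.mul_left⟩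
    exact (EuclideanSpace.proj (𝕜 := ℝ) (I i)).contDiff.comp (hV i)
  refine ⟨fun I y => (∏ i, V y i (I i)) * φ y, hT, fun u hu t x => ?_⟩
  unfold avgV avg
  rw [← integral_finsetSum]
  · congr 1
    ext y
    rw [multilinear_expand, Finset.sum_mul]
    exact Finset.sum_congr rfl fun I _ => by ring
  · intro I _
    refine (hT I).integrable ?_
    exact (contDiff_iter_apply hu p _).continuous.comp (by fun_prop)

/-- The bound of an average of derivatives of order `p` in terms of `u ∈ L^q` alone. -/
lemma avgV_decay {n : ℕ} (φ : Eu n → ℝ) (hφ : IsTest φ) (p : ℕ) (V : Eu n → Fin p → Eu n)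
    (hV : ∀ i, ContDiff ℝ (⊤ : ℕ∞) (fun y => V y i)) (q : ℝ≥0∞) (hq : 1 ≤ q) :
    ∃ C : ℝ, 0 ≤ C ∧ ∀ u : Eu n → ℝ, ContDiff ℝ (⊤ : ℕ∞) u → eLpNorm u q volume < ⊤ →
      ∀ t : ℝ, 0 < t → ∀ x : Eu n, t ^ p * |avgV φ p V u t x| ≤
        C * t ^ (-((n : ℝ) * q⁻¹.toReal)) * (eLpNorm u q volume).toReal := by
  obtain ⟨ψ, hψ, H⟩ := avgV_expand φ hφ p V hV
  choose ψ' hψ' hibp using fun I => avg_iteratedFDeriv p (fun i => stdB n (I i)) (ψ I) (hψ I)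
  choose C hC HC using fun I => kernel_bound q hq (ψ' I) (hψ' I)
  refine ⟨∑ I, C I, Finset.sum_nonneg fun I _ => hC I, fun u hu hB t ht x => ?_⟩
  have habs : ∀ a : ℝ, t ^ p * |a| = |t ^ p * a| := fun a => by
    rw [abs_mul, abs_of_pos (pow_pos ht p)]
  rw [H u hu, habs, Finset.mul_sum,
    Finset.sum_mul, Finset.sum_mul]
  refine (Finset.abs_sum_le_sum_abs _ _).trans (Finset.sum_le_sum fun I _ => ?_)
  rw [hibp I u hu t x]
  exact (HC I u hu.continuous hB t ht x).1

/-- The interpolated bound for averages of derivatives of order `k` along a variable tuple, and its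
improvement for increments. -/
lemma avgV_bound {n : ℕ} (k : ℕ) (θ : ℝ) (hθ0 : 0 ≤ θ) (hθ1 : θ ≤ 1) (q r : ℝ≥0∞)
    (hq : 1 ≤ q) (hr : 1 ≤ r) (φ : Eu n → ℝ) (hφ : IsTest φ) (V : Eu n → Fin k → Eu n)
    (hV : ∀ i, ContDiff ℝ (⊤ : ℕ∞) (fun y => V y i)) (e : ℝ)
    (he : θ * (-((n : ℝ) * r⁻¹.toReal)) + (1 - θ) * (-(k : ℝ) + -((n : ℝ) * q⁻¹.toReal)) = e) :
    ∃ C : ℝ, 0 ≤ C ∧ ∀ u : Eu n → ℝ, ContDiff ℝ (⊤ : ℕ∞) u →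
      eLpNorm (iteratedFDeriv ℝ k u) r volume < ⊤ → eLpNorm u q volume < ⊤ →
      ∀ t : ℝ, 0 < t → ∀ x : Eu n,
      |avgV φ k V u t x| ≤ C * t ^ e *
        ((eLpNorm (iteratedFDeriv ℝ k u) r volume).toReal ^ θ *
          (eLpNorm u q volume).toReal ^ (1 - θ)) ∧
      ∀ x' : Eu n, dist x x' ≤ t →
        |avgV φ k V u t x - avgV φ k V u t x'| ≤ C * (dist x x' / t) * t ^ e *
        ((eLpNorm (iteratedFDeriv ℝ k u) r volume).toReal ^ θ *
          (eLpNorm u q volume).toReal ^ (1 - θ)) := by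
  obtain ⟨ψ, hψ, H⟩ := avgV_expand φ hφ k V hV
  choose C hC HC using fun I : Fin k → Fin n => tuple_bound k θ hθ0 hθ1 q r hq hr (ψ I) (hψ I)
    (fun i => stdB n (I i)) (by simp) e he
  refine ⟨∑ I, C I, Finset.sum_nonneg fun I _ => hC I, fun u hu hA hB t ht x => ⟨?_, fun x' hx' => ?_⟩⟩
  · rw [H u hu, Finset.sum_mul, Finset.sum_mul]
    exact (Finset.abs_sum_le_sum_abs _ _).trans
      (Finset.sum_le_sum fun I _ => (HC I u hu hA hB t ht x).1)
  · rw [H u hu, H u hu, ← Finset.sum_sub_distrib, Finset.sum_mul, Finset.sum_mul, Finset.sum_mul]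
    exact (Finset.abs_sum_le_sum_abs _ _).trans
      (Finset.sum_le_sum fun I _ => (HC I u hu hA hB t ht x).2 x' hx')

/-! ### The Taylor polynomial in the scale parameter -/

/-- The tuple `J` preceded by `l` copies of `y`. -/
def dirs {n j : ℕ} (J : Fin j → Eu n) (y : Eu n) : (l : ℕ) → Fin (j + l) → Eu n
  | 0 => J
  | l + 1 => Fin.cons (α := fun _ : Fin (j + l + 1) => Eu n) y (dirs J y l)

lemma contDiff_dirs {n j : ℕ} (J : Fin j → Eu n) (l : ℕ) (i : Fin (j + l)) :
    ContDiff ℝ (⊤ : ℕ∞) (fun y => dirs J y l i) := by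
  induction l with
  | zero => exact contDiff_const
  | succ l ih =>
    refine Fin.cases (motive := fun i : Fin (j + l + 1) =>
      ContDiff ℝ (⊤ : ℕ∞) (fun y => dirs J y (l + 1) i)) ?_ (fun i => ?_) i
    · exact contDiff_id
    · exact ih i

lemma hasDerivAt_line {n j : ℕ} (J : Fin j → Eu n) (l : ℕ) {u : Eu n → ℝ}
    (hu : ContDiff ℝ (⊤ : ℕ∞) u) (x y : Eu n) (t : ℝ) :
    HasDerivAt (fun t : ℝ => iteratedFDeriv ℝ (j + l) u (x + t • y) (dirs J y l))
      (iteratedFDeriv ℝ (j + (l + 1)) u (x + t • y) (dirs J y (l + 1))) t := by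
  have h1 : HasDerivAt (fun t : ℝ => x + t • y) y t := by
    simpa using ((hasDerivAt_id t).smul_const y).const_add x
  have h2 := (((contDiff_iter hu (j + l)).differentiable (by simp)) (x + t • y)).hasFDerivAt
  have h3 := h2.comp_hasDerivAt t h1
  have h4 := (ContinuousMultilinearMap.apply ℝ (fun _ : Fin (j + l) => Eu n) ℝ
    (dirs J y l)).hasFDerivAt.comp_hasDerivAt t h3
  refine HasDerivAt.congr_deriv h4 ?_
  exact (iteratedFDeriv_succ_apply_left (n := j + l) (dirs J y (l + 1))).symm

lemma continuous_line {n j : ℕ} (J : Fin j → Eu n) (l : ℕ) {u : Eu n → ℝ}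
    (hu : ContDiff ℝ (⊤ : ℕ∞) u) (x : Eu n) :
    Continuous (fun s : ℝ × Eu n =>
      iteratedFDeriv ℝ (j + l) u (x + s.1 • s.2) (dirs J s.2 l)) := by
  have h1 := (contDiff_iter hu (j + l)).continuous
  have h2 : Continuous (fun s : ℝ × Eu n => dirs J s.2 l) :=
    continuous_pi fun i => (contDiff_dirs J l i).continuous.comp continuous_snd
  exact (h1.comp (by fun_prop)).eval h2

lemma hasDerivAt_avgV {n j : ℕ} (φ : Eu n → ℝ) (hφ : IsTest φ) (J : Fin j → Eu n) (l : ℕ)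
    {u : Eu n → ℝ} (hu : ContDiff ℝ (⊤ : ℕ∞) u) (x : Eu n) (t : ℝ) :
    HasDerivAt (fun t => avgV φ (j + l) (fun y => dirs J y l) u t x)
      (avgV φ (j + (l + 1)) (fun y => dirs J y (l + 1)) u t x) t := by
  have hc := fun l (t : ℝ) => (continuous_line J l hu x).comp (Continuous.prodMk_right t)
  have hcont : Continuous (fun s : ℝ × Eu n =>
      iteratedFDeriv ℝ (j + (l + 1)) u (x + s.1 • s.2) (dirs J s.2 (l + 1)) * φ s.2) :=
    (continuous_line J (l + 1) hu x).mul (hφ.1.continuous.comp continuous_snd)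
  obtain ⟨M, hM⟩ := ((isCompact_Icc (a := t - 1) (b := t + 1)).prod
    hφ.2.isCompact).exists_bound_of_continuousOn hcont.continuousOn
  refine (hasDerivAt_integral_of_dominated_loc_of_deriv_le
    (F := fun t y => iteratedFDeriv ℝ (j + l) u (x + t • y) (dirs J y l) * φ y)
    (F' := fun t y => iteratedFDeriv ℝ (j + (l + 1)) u (x + t • y) (dirs J y (l + 1)) * φ y)
    (s := Set.Icc (t - 1) (t + 1)) (bound := (tsupport φ).indicator fun _ => M)
    (Icc_mem_nhds (by linarith) (by linarith)) (Filter.Eventually.of_forall fun s => ?_) ?_ ?_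
    (Filter.Eventually.of_forall fun y s hs => ?_) ?_
    (Filter.Eventually.of_forall fun y s _ => ?_)).2
  · exact (hφ.integrable (hc l s)).aestronglyMeasurable
  · exact hφ.integrable (hc l t)
  · exact (hφ.integrable (hc (l + 1) t)).aestronglyMeasurable
  · by_cases hy : y ∈ tsupport φ
    · rw [Set.indicator_of_mem hy]
      exact hM (s, y) ⟨hs, hy⟩
    · simp [image_eq_zero_of_notMem_tsupport hy, hy]
  · rw [integrable_indicator_iff (isClosed_tsupport φ).measurableSet]
    exact integrableOn_const hφ.2.isCompact.measure_lt_top.ne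
  · exact (hasDerivAt_line J l hu x y s).mul_const (φ y)

/-- The derivative of the Taylor polynomial at `0`, based at the point `t`, telescopes. -/
lemma hasDerivAt_taylor (G : ℕ → ℝ → ℝ) (hG : ∀ l t, HasDerivAt (G l) (G (l + 1) t) t) (m : ℕ)
    (t : ℝ) :
    HasDerivAt (fun t => ∑ l ∈ Finset.range (m + 1), (-t) ^ l / (l.factorial : ℝ) * G l t)
      ((-t) ^ m / (m.factorial : ℝ) * G (m + 1) t) t := by
  induction m with
  | zero => simpa using hG 0 t
  | succ m ih =>
    simp only [Finset.sum_range_succ _ (m + 1)]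
    have h1 : HasDerivAt (fun t : ℝ => (-t) ^ (m + 1) / ((m + 1).factorial : ℝ))
        (-((-t) ^ m / (m.factorial : ℝ))) t := by
      refine (((hasDerivAt_neg t).fun_pow (m + 1)).div_const ((m + 1).factorial : ℝ)).congr_deriv ?_
      rw [Nat.factorial_succ]
      push_cast
      field_simp
    refine (ih.fun_add (h1.fun_mul (hG (m + 1) t))).congr_deriv ?_
    ring

/-! ### Integration over the scales -/

lemma abs_sub_le_of_deriv_le (D D' P P' : ℝ → ℝ) (a b : ℝ) (hab : a ≤ b)
    (hD : ∀ t, HasDerivAt D (D' t) t) (hPc : ContinuousOn P (Set.Ici a))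
    (hP : ∀ t, a < t → HasDerivAt P (P' t) t) (h : ∀ t, a < t → |D' t| ≤ P' t) :
    |D b - D a| ≤ P b - P a := by
  have hDc : ContinuousOn D (Set.Ici a) := fun t _ => (hD t).continuousAt.continuousWithinAt
  have m1 : MonotoneOn (P - D) (Set.Ici a) := by
    refine monotoneOn_of_deriv_nonneg (convex_Ici a) (hPc.sub hDc) ?_ ?_
    · intro t ht
      rw [interior_Ici] at ht
      exact ((hP t ht).sub (hD t)).differentiableAt.differentiableWithinAt
    · intro t ht
      rw [interior_Ici] at ht
      rw [((hP t ht).sub (hD t)).deriv]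
      linarith [(abs_le.1 (h t ht)).2]
  have m2 : MonotoneOn (P + D) (Set.Ici a) := by
    refine monotoneOn_of_deriv_nonneg (convex_Ici a) (hPc.add hDc) ?_ ?_
    · intro t ht
      rw [interior_Ici] at ht
      exact ((hP t ht).add (hD t)).differentiableAt.differentiableWithinAt
    · intro t ht
      rw [interior_Ici] at ht
      rw [((hP t ht).add (hD t)).deriv]
      linarith [(abs_le.1 (h t ht)).1]
  have e1 := m1 Set.self_mem_Ici hab hab
  have e2 := m2 Set.self_mem_Ici hab hab
  simp only [Pi.sub_apply, Pi.add_apply] at e1 e2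
  rw [abs_le]
  constructor <;> linarith

/-- The splitting of the scales at `h`: the bound `t ^ (β - 1)` is integrated over `[0, h]` and the
improved bound `h t ^ (β - 2)` over `[h, ∞)`. -/
lemma abs_zero_le (β : ℝ) (hβ0 : 0 < β) (hβ1 : β < 1) (D D' : ℝ → ℝ)
    (hD : ∀ t, HasDerivAt D (D' t) t) (K h : ℝ) (hK : 0 ≤ K) (hh : 0 < h)
    (h1 : ∀ t, 0 < t → |D' t| ≤ K * t ^ (β - 1))
    (h2 : ∀ t, h ≤ t → |D' t| ≤ K * (h / t) * t ^ (β - 1))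
    (hlim : Filter.Tendsto D Filter.atTop (nhds 0)) :
    |D 0| ≤ K * (1 / β + 1 / (1 - β)) * h ^ β := by
  have hβ' : 0 < 1 - β := by linarith
  have s1 : |D h - D 0| ≤ K / β * h ^ β := by
    have := abs_sub_le_of_deriv_le D D' (fun t => K / β * t ^ β) (fun t => K * t ^ (β - 1)) 0 h hh.le hD
      ((continuous_const.mul (Real.continuous_rpow_const hβ0.le)).continuousOn)
      (fun t ht => by
        refine ((Real.hasDerivAt_rpow_const (p := β) (Or.inl ht.ne')).const_mul
          (K / β)).congr_deriv ?_
        field_simp) h1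
    simpa [Real.zero_rpow hβ0.ne'] using this
  have s2 : ∀ b, h ≤ b → |D b - D h| ≤ K / (1 - β) * h ^ β := by
    intro b hb
    have := abs_sub_le_of_deriv_le D D' (fun t => -(K * h / (1 - β)) * t ^ (β - 1))
      (fun t => K * (h / t) * t ^ (β - 1)) h b hb hD
      (fun t ht => ((Real.hasDerivAt_rpow_const (p := β - 1)
        (Or.inl (hh.trans_le ht).ne')).const_mul _).continuousAt.continuousWithinAt)
      (fun t ht => by
        have ht0 : 0 < t := hh.trans ht
        refine ((Real.hasDerivAt_rpow_const (p := β - 1) (Or.inl ht0.ne')).const_mul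
          (-(K * h / (1 - β)))).congr_deriv ?_
        rw [Real.rpow_sub_one ht0.ne' (β - 1)]
        field_simp
        ring) (fun t ht => h2 t ht.le)
    refine this.trans ?_
    have hb0 : 0 ≤ K * h / (1 - β) * b ^ (β - 1) := by
      have := Real.rpow_nonneg (hh.le.trans hb) (β - 1)
      positivity
    have : K * h / (1 - β) * h ^ (β - 1) = K / (1 - β) * h ^ β := by
      rw [Real.rpow_sub_one hh.ne']
      field_simp
    linarith
  have hl : Filter.Tendsto (fun b => K * (1 / β + 1 / (1 - β)) * h ^ β + |D b|) Filter.atTop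
      (nhds (K * (1 / β + 1 / (1 - β)) * h ^ β + |(0 : ℝ)|)) := hlim.abs.const_add _
  rw [abs_zero, add_zero] at hl
  refine ge_of_tendsto hl ?_
  filter_upwards [Filter.eventually_ge_atTop h] with b hb
  have e1 := s2 b hb
  have e2 : |D 0| ≤ |D h - D 0| + |D b - D h| + |D b| := by
    have a1 := abs_sub_abs_le_abs_sub (D 0) (D h)
    have a2 := abs_sub_abs_le_abs_sub (D h) (D b)
    rw [abs_sub_comm] at a1 a2
    linarith
  have e3 : K * (1 / β + 1 / (1 - β)) * h ^ β = K / β * h ^ β + K / (1 - β) * h ^ β := by ring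
  linarith

/-- The Hölder estimate for one fixed partial derivative of order `j`. -/
lemma holder_direction {n : ℕ} (j m : ℕ) (hj : 1 ≤ j) (θ : ℝ) (hθ0 : 0 ≤ θ) (hθ1 : θ ≤ 1)
    (q r : ℝ≥0∞) (hq : 1 ≤ q) (hr : 1 ≤ r) (β : ℝ) (hβ0 : 0 < β) (hβ1 : β < 1)
    (he : θ * (-((n : ℝ) * r⁻¹.toReal)) +
      (1 - θ) * (-((j + (m + 1) : ℕ) : ℝ) + -((n : ℝ) * q⁻¹.toReal)) = β - 1 - m)
    (J : Fin j → Eu n) :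
    ∃ C : ℝ, 0 ≤ C ∧ ∀ u : Eu n → ℝ, ContDiff ℝ (⊤ : ℕ∞) u →
      eLpNorm (iteratedFDeriv ℝ (j + (m + 1)) u) r volume < ⊤ → eLpNorm u q volume < ⊤ →
      ∀ x x' : Eu n, x ≠ x' →
        |iteratedFDeriv ℝ j u x J - iteratedFDeriv ℝ j u x' J| ≤ C * dist x x' ^ β *
        ((eLpNorm (iteratedFDeriv ℝ (j + (m + 1)) u) r volume).toReal ^ θ *
          (eLpNorm u q volume).toReal ^ (1 - θ)) := by
  let b : ContDiffBump (0 : Eu n) := ⟨1, 2, by norm_num, by norm_num⟩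
  set φ : Eu n → ℝ := b.normed volume with hφdef
  have hφ : IsTest φ := ⟨b.contDiff_normed, b.hasCompactSupport_normed⟩
  have hφ1 : ∫ y, φ y = 1 := b.integral_normed
  obtain ⟨C, hC, HC⟩ := avgV_bound (j + (m + 1)) θ hθ0 hθ1 q r hq hr φ hφ
    (fun y => dirs J y (m + 1)) (contDiff_dirs J (m + 1)) _ he
  choose Cd hCd HCd using fun l => avgV_decay φ hφ (j + l) (fun y => dirs J y l)
    (contDiff_dirs J l) q hq
  have hβ' : 0 < 1 - β := by linarith
  refine ⟨2 * C * (1 / β + 1 / (1 - β)), by positivity, fun u hu hA hB x x' hxx => ?_⟩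
  set N := (eLpNorm (iteratedFDeriv ℝ (j + (m + 1)) u) r volume).toReal ^ θ *
          (eLpNorm u q volume).toReal ^ (1 - θ) with hN
  have hN0 : 0 ≤ N := by positivity
  set G : Eu n → ℕ → ℝ → ℝ := fun z l t => avgV φ (j + l) (fun y => dirs J y l) u t z with hGdef
  have hG : ∀ z l t, HasDerivAt (G z l) (G z (l + 1) t) t := fun z l t =>
    hasDerivAt_avgV φ hφ J l hu z t
  set R : Eu n → ℝ → ℝ := fun z t =>
    ∑ l ∈ Finset.range (m + 1), (-t) ^ l / (l.factorial : ℝ) * G z l t with hRdef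
  have hR : ∀ z t, HasDerivAt (R z) ((-t) ^ m / (m.factorial : ℝ) * G z (m + 1) t) t := fun z t =>
    hasDerivAt_taylor (G z) (hG z) m t
  -- At scale `0` the Taylor polynomial reduces to the value of the derivative.
  have hR0 : ∀ z, R z 0 = iteratedFDeriv ℝ j u z J := by
    intro z
    simp only [hRdef, Finset.sum_range_succ', hGdef, avgV]
    simp [dirs, integral_const_mul, hφ1]
  -- Since `j ≥ 1`, each term decays at infinity like `t ^ (-j)` at least.
  have hRlim : ∀ z, Filter.Tendsto (R z) Filter.atTop (nhds 0) := by
    intro z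
    rw [← Finset.sum_const_zero (s := Finset.range (m + 1)) (ι := ℕ)]
    refine tendsto_finsetSum _ fun l _ => ?_
    have hlim : Filter.Tendsto (fun t : ℝ => Cd l * (eLpNorm u q volume).toReal * t⁻¹)
        Filter.atTop (nhds 0) := by
      simpa using tendsto_inv_atTop_zero.const_mul (Cd l * (eLpNorm u q volume).toReal)
    refine squeeze_zero_norm' ?_ hlim
    filter_upwards [Filter.eventually_ge_atTop (1 : ℝ)] with t ht
    have ht0 : 0 < t := by linarith
    have h1 := HCd l u hu hB t ht0 z
    have h2 : t ^ (-((n : ℝ) * q⁻¹.toReal)) ≤ 1 :=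
      Real.rpow_le_one_of_one_le_of_nonpos ht (by
        have : 0 ≤ (n : ℝ) * q⁻¹.toReal := by positivity
        linarith)
    have h3 : t ^ (j + l) * |G z l t| ≤ Cd l * (eLpNorm u q volume).toReal := by
      refine h1.trans ?_
      have := hCd l
      calc Cd l * t ^ (-((n : ℝ) * q⁻¹.toReal)) * (eLpNorm u q volume).toReal
          ≤ Cd l * 1 * (eLpNorm u q volume).toReal := by gcongr
        _ = _ := by ring
    have h4 : t * (t ^ l * |G z l t|) ≤ t ^ (j + l) * |G z l t| := by
      rw [← mul_assoc]
      gcongr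
      rw [← pow_succ']
      exact pow_le_pow_right₀ ht (by omega)
    rw [Real.norm_eq_abs, abs_mul, abs_div, abs_pow, abs_neg, abs_of_pos ht0, Nat.abs_cast,
      ← div_eq_mul_inv, le_div_iff₀ ht0]
    have hf : t ^ l / (l.factorial : ℝ) ≤ t ^ l :=
      div_le_self (by positivity) (by exact_mod_cast Nat.one_le_iff_ne_zero.2 l.factorial_ne_zero)
    calc t ^ l / (l.factorial : ℝ) * |G z l t| * t ≤ t ^ l * |G z l t| * t := by gcongr
      _ = t * (t ^ l * |G z l t|) := by ring
      _ ≤ _ := h4.trans h3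
  have hfac : ∀ t X Y : ℝ, 0 < t → 0 ≤ Y → |X| ≤ Y * t ^ (β - 1 - m) →
      |(-t) ^ m / (m.factorial : ℝ) * X| ≤ Y * t ^ (β - 1) := by
    intro t X Y ht hY hX
    have hf : t ^ m / (m.factorial : ℝ) ≤ t ^ m :=
      div_le_self (by positivity) (by exact_mod_cast Nat.one_le_iff_ne_zero.2 m.factorial_ne_zero)
    rw [abs_mul, abs_div, abs_pow, abs_neg, abs_of_pos ht, Nat.abs_cast]
    calc _ ≤ t ^ m * (Y * t ^ (β - 1 - m)) := by gcongr
      _ = Y * (t ^ (β - 1 - m) * t ^ m) := by ring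
      _ = _ := by rw [← Real.rpow_natCast, ← Real.rpow_add ht]; simp
  have hdist : 0 < dist x x' := dist_pos.2 hxx
  have key := abs_zero_le β hβ0 hβ1 (fun t => R x t - R x' t) _
    (fun t => (hR x t).sub (hR x' t)) (2 * C * N) (dist x x') (by positivity) hdist
    (fun t ht => by
      have e1 := hfac t _ (C * N) ht (by positivity) ((HC u hu hA hB t ht x).1.trans_eq (by ring))
      have e2 := hfac t _ (C * N) ht (by positivity) ((HC u hu hA hB t ht x').1.trans_eq (by ring))
      refine (abs_sub _ _).trans ?_
      linarith)
    (fun t ht => by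
      have ht0 : 0 < t := hdist.trans_le ht
      rw [← mul_sub]
      have hd : 0 ≤ dist x x' / t := by positivity
      have e1 := hfac t _ (C * N * (dist x x' / t)) ht0 (by positivity)
        (((HC u hu hA hB t ht0 x).2 x' ht).trans_eq (by ring))
      refine e1.trans ?_
      have : 0 ≤ C * N * (dist x x' / t) * t ^ (β - 1) := by positivity
      linarith)
    (by simpa using (hRlim x).sub (hRlim x'))
  rw [hR0, hR0] at key
  exact key.trans_eq (by ring)

/-! ### The interpolation inequality -/

/-- The corrected Gagliardo–Nirenberg interpolation inequality in the case of a
Hölder seminorm on the left (`p ∈ (-∞,-n)` in Nirenberg's convention, with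
`β = -n/p ∈ (0,1)`): if `-β/n = j/n + θ(1/r - k/n) + (1-θ)/q`, `θ ∈ [j/k, 1]`,
and `n/r` avoids the critical values `1, …, k-j`, then
`[∇ʲu]_β ≤ C ‖∇ᵏu‖_r^θ ‖u‖_q^{1-θ}` for every smooth `u` with finite right-hand
side. The seminorm inequality is stated pointwise over all pairs `x ≠ y`. -/
theorem gagliardo_nirenberg_holder_left
    (n : ℕ) (hn : 1 ≤ n) (j k : ℕ) (hj : 1 ≤ j) (hjk : j < k)
    (θ : ℝ) (hθ : θ ∈ Set.Icc ((j : ℝ) / k) 1)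
    (q r : ℝ≥0∞) (hq : 1 ≤ q) (hr : 1 ≤ r)
    (β : ℝ) (hβ : β ∈ Set.Ioo (0 : ℝ) 1)
    (hbal : -β / n =
      (j : ℝ) / n + θ * (r⁻¹.toReal - (k : ℝ) / n) + (1 - θ) * q⁻¹.toReal)
    (hcrit : ∀ i : ℕ, 1 ≤ i → i ≤ k - j → (n : ℝ) * r⁻¹.toReal ≠ (i : ℝ)) :
    ∃ C : ℝ, 0 < C ∧ ∀ u : EuclideanSpace ℝ (Fin n) → ℝ, ContDiff ℝ (⊤ : ℕ∞) u →
      eLpNorm (iteratedFDeriv ℝ k u) r volume < ⊤ →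
      eLpNorm u q volume < ⊤ →
      ∀ x y : EuclideanSpace ℝ (Fin n), x ≠ y →
        ENNReal.ofReal (‖iteratedFDeriv ℝ j u x - iteratedFDeriv ℝ j u y‖ /
            dist x y ^ β) ≤
          ENNReal.ofReal C * (eLpNorm (iteratedFDeriv ℝ k u) r volume) ^ θ *
            (eLpNorm u q volume) ^ (1 - θ) := by
  have hθ0 : 0 ≤ θ := le_trans (by positivity) hθ.1
  have hθ1 : 0 ≤ 1 - θ := by linarith [hθ.2]
  obtain ⟨m, rfl⟩ : ∃ m, k = j + (m + 1) := ⟨k - j - 1, by omega⟩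
  have hn0 : (n : ℝ) ≠ 0 := by exact_mod_cast (by omega : n ≠ 0)
  have he : θ * (-((n : ℝ) * r⁻¹.toReal)) +
      (1 - θ) * (-((j + (m + 1) : ℕ) : ℝ) + -((n : ℝ) * q⁻¹.toReal)) = β - 1 - m := by
    field_simp at hbal
    push_cast at hbal ⊢
    linarith
  choose C hC HC using fun I : Fin j → Fin n =>
    holder_direction j m hj θ hθ0 hθ.2 q r hq hr β hβ.1 hβ.2 he (fun i => stdB n (I i))
  have hS : 0 ≤ ∑ I, C I := Finset.sum_nonneg fun I _ => hC I
  refine ⟨∑ I, C I + 1, by linarith, fun u hu hA hB x y hxy => ?_⟩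
  have hd : 0 < dist x y ^ β := Real.rpow_pos_of_pos (dist_pos.2 hxy) _
  rw [← ENNReal.ofReal_toReal hA.ne, ← ENNReal.ofReal_toReal hB.ne,
    ENNReal.ofReal_rpow_of_nonneg ENNReal.toReal_nonneg hθ0,
    ENNReal.ofReal_rpow_of_nonneg ENNReal.toReal_nonneg hθ1,
    ← ENNReal.ofReal_mul (by linarith), ← ENNReal.ofReal_mul (by positivity)]
  refine ENNReal.ofReal_le_ofReal ?_
  set N := (eLpNorm (iteratedFDeriv ℝ (j + (m + 1)) u) r volume).toReal ^ θ *
    (eLpNorm u q volume).toReal ^ (1 - θ) with hN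
  have hN0 : 0 ≤ N := by positivity
  rw [div_le_iff₀ hd, mul_assoc (∑ I, C I + 1), ← hN]
  -- The norm of a multilinear map is at most the sum of its values on tuples of basis vectors.
  have h1 : ‖iteratedFDeriv ℝ j u x - iteratedFDeriv ℝ j u y‖ ≤
      ∑ I : Fin j → Fin n, |iteratedFDeriv ℝ j u x (fun i => stdB n (I i)) -
        iteratedFDeriv ℝ j u y (fun i => stdB n (I i))| := by
    refine ContinuousMultilinearMap.opNorm_le_bound (by positivity) fun v => ?_
    rw [multilinear_expand, Finset.sum_mul]
    refine (norm_sum_le _ _).trans (Finset.sum_le_sum fun I _ => ?_)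
    rw [norm_mul, mul_comm, _root_.sub_apply, Real.norm_eq_abs, norm_prod]
    gcongr with i
    exact PiLp.norm_apply_le (v i) (I i)
  calc _ ≤ ∑ I, C I * dist x y ^ β * N :=
        h1.trans (Finset.sum_le_sum fun I _ => HC I u hu hA hB x y hxy)
    _ = (∑ I, C I) * N * dist x y ^ β := by
        rw [Finset.sum_mul, Finset.sum_mul]
        exact Finset.sum_congr rfl fun I _ => by ring
    _ ≤ _ := by gcongr; linarith
end
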